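/- arXiv:1409.1644 — 2 statements merged into one kernel-verified Lean document; each statement's English description precedes it below -/
import Mathlib

section
/- Let H be a semisimple and cosemisimple Hopf algebra of dimension d over an algebraically closed field F (of arbitrary characteristic), and let D be a division algebra over F of degree m. If gcd(d!, m) = 1, then any action of H on D factors through an action of a cocommutative Hopf algebra; in particular, if the action is inner faithful, then H is cocommutative. -/
open TensorProduct

/-- An action of a (bi/Hopf) algebra `H` on an algebra `A`, where the comultiplication and
counit of `H` are supplied explicitly as `comul` and `counit`.  This says exactly that `A`
is an `H`-module algebra:  `h ⬝ (ab) = ∑ (h₁ ⬝ a)(h₂ ⬝ b)` and `h ⬝ 1 = ε(h) 1`. -/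
structure ModAlgAction (k : Type) [CommRing k] (H : Type) [Ring H] [Module k H]
    (comul : H →ₗ[k] H ⊗[k] H) (counit : H →ₗ[k] k)
    (A : Type) [Ring A] [Algebra k A] where
  /-- the action map -/
  act : H →ₗ[k] A →ₗ[k] A
  one_act : ∀ a : A, act 1 a = a
  mul_act : ∀ (g h : H) (a : A), act (g * h) a = act g (act h a)
  act_one : ∀ h : H, act h 1 = algebraMap k A (counit h)
  act_mul : ∀ (h : H) (a b : A), act h (a * b) =
    TensorProduct.lift (((LinearMap.mul k A).comp (act.flip a)).compl₂ (act.flip b)) (comul h)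

/-- An action of a Hopf algebra `H` on an algebra `A`, i.e. an `H`-module algebra
structure on `A`. -/
abbrev HopfAction (k : Type) [CommRing k] (H : Type) [Ring H] [Bialgebra k H]
    (A : Type) [Ring A] [Algebra k A] :=
  ModAlgAction k H (Coalgebra.comul (R := k)) (Coalgebra.counit (R := k)) A

/-- The `k`-subspace `I ⊗ H + H ⊗ I` of `H ⊗ H` determined by a subspace `I ⊆ H`. -/
noncomputable def tensorIdeal (k : Type) [CommRing k] (H : Type) [Ring H] [Module k H]
    (I : Submodule k H) : Submodule k (H ⊗[k] H) :=
  Submodule.span k {z : H ⊗[k] H |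
    (∃ a ∈ I, ∃ b : H, z = a ⊗ₜ[k] b) ∨ (∃ a : H, ∃ b ∈ I, z = a ⊗ₜ[k] b)}

/-- A (two-sided) Hopf ideal of `H`, with respect to explicitly supplied comultiplication,
counit and antipode. -/
def IsHopfIdealWith (k : Type) [CommRing k] (H : Type) [Ring H] [Module k H]
    (comul : H →ₗ[k] H ⊗[k] H) (counit : H →ₗ[k] k) (antipode : H →ₗ[k] H)
    (I : Submodule k H) : Prop :=
  (∀ x ∈ I, ∀ h : H, h * x ∈ I ∧ x * h ∈ I) ∧
  (∀ x ∈ I, comul x ∈ tensorIdeal k H I) ∧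
  (∀ x ∈ I, counit x = 0) ∧
  (∀ x ∈ I, antipode x ∈ I)

/-- A Hopf ideal of a Hopf algebra `H`. -/
abbrev IsHopfIdeal (k : Type) [CommRing k] (H : Type) [Ring H] [HopfAlgebra k H]
    (I : Submodule k H) : Prop :=
  IsHopfIdealWith k H (Coalgebra.comul (R := k)) (Coalgebra.counit (R := k))
    (HopfAlgebra.antipode (R := k)) I

/-- Inner faithfulness of an action map `act`: no nonzero Hopf ideal annihilates `A`. -/
def InnerFaithfulWith (k : Type) [CommRing k] (H : Type) [Ring H] [Module k H]
    (comul : H →ₗ[k] H ⊗[k] H) (counit : H →ₗ[k] k) (antipode : H →ₗ[k] H)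
    (A : Type) [Ring A] [Algebra k A] (act : H →ₗ[k] A →ₗ[k] A) : Prop :=
  ∀ I : Submodule k H, IsHopfIdealWith k H comul counit antipode I →
    (∀ x ∈ I, ∀ a : A, act x a = 0) → I = ⊥

/-- Inner faithfulness of a Hopf algebra action: no nonzero Hopf ideal of `H` acts by zero. -/
abbrev HopfAction.InnerFaithful {k : Type} [CommRing k] {H : Type} [Ring H] [HopfAlgebra k H]
    {A : Type} [Ring A] [Algebra k A] (ha : HopfAction k H A) : Prop :=
  InnerFaithfulWith k H (Coalgebra.comul (R := k)) (Coalgebra.counit (R := k))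
    (HopfAlgebra.antipode (R := k)) A ha.act

/-- The set of invariants of an action. -/
def ModAlgAction.invariants {k : Type} [CommRing k] {H : Type} [Ring H] [Module k H]
    {comul : H →ₗ[k] H ⊗[k] H} {counit : H →ₗ[k] k}
    {A : Type} [Ring A] [Algebra k A] (ha : ModAlgAction k H comul counit A) : Set A :=
  {a : A | ∀ h : H, ha.act h a = counit h • a}

/-- The kernel of an action, as a subspace of `H`. -/
noncomputable def ModAlgAction.actionKernel {k : Type} [CommRing k] {H : Type} [Ring H]
    [Module k H] {comul : H →ₗ[k] H ⊗[k] H} {counit : H →ₗ[k] k}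
    {A : Type} [Ring A] [Algebra k A] (ha : ModAlgAction k H comul counit A) :
    Submodule k H :=
  ⨅ a : A, LinearMap.ker (ha.act.flip a)

/-- `H` is cosemisimple (with explicitly supplied comultiplication):  there exists a
normalized two-sided integral `λ : H → k`, i.e. `λ(1) = 1` and
`∑ h₁ λ(h₂) = λ(h) 1 = ∑ λ(h₁) h₂`. -/
def IsCosemisimpleWith (k : Type) [CommRing k] (H : Type) [Ring H] [Module k H]
    (comul : H →ₗ[k] H ⊗[k] H) : Prop :=
  ∃ lam : H →ₗ[k] k, lam 1 = 1 ∧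
    (∀ h : H, (TensorProduct.rid k H) ((LinearMap.lTensor H lam) (comul h)) = lam h • 1) ∧
    (∀ h : H, (TensorProduct.lid k H) ((LinearMap.rTensor H lam) (comul h)) = lam h • 1)

/-- A Hopf algebra is cosemisimple if its dual is semisimple; equivalently (by the dual
Maschke theorem) if it admits a normalized two-sided integral `λ ∈ H*`. -/
abbrev IsCosemisimple (k : Type) [CommRing k] (H : Type) [Ring H] [HopfAlgebra k H] : Prop :=
  IsCosemisimpleWith k H (Coalgebra.comul (R := k))

set_option linter.style.haveILetI false
set_option linter.unusedSectionVars false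
set_option linter.unusedVariables false
set_option linter.unusedSimpArgs false

namespace EW
open Coalgebra WithConv

section sweedler
variable {F : Type} [Field F] {H : Type} [Ring H] [HopfAlgebra F H]

lemma coassoc_sum {V : Type} [AddCommGroup V] [Module F V] (Φ : H → H → H → V)
    (h1 : ∀ x x' y z, Φ (x + x') y z = Φ x y z + Φ x' y z)
    (h1' : ∀ (c : F) x y z, Φ (c • x) y z = c • Φ x y z)
    (h2 : ∀ x y y' z, Φ x (y + y') z = Φ x y z + Φ x y' z)
    (h2' : ∀ (c : F) x y z, Φ x (c • y) z = c • Φ x y z)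
    (h3 : ∀ x y z z', Φ x y (z + z') = Φ x y z + Φ x y z')
    (h3' : ∀ (c : F) x y z, Φ x y (c • z) = c • Φ x y z) (h : H) :
    ∑ i ∈ (ℛ F h).index, ∑ j ∈ (ℛ F ((ℛ F h).left i)).index,
      Φ ((ℛ F ((ℛ F h).left i)).left j) ((ℛ F ((ℛ F h).left i)).right j) ((ℛ F h).right i) =
    ∑ i ∈ (ℛ F h).index, ∑ j ∈ (ℛ F ((ℛ F h).right i)).index,
      Φ ((ℛ F h).left i) ((ℛ F ((ℛ F h).right i)).left j)
        ((ℛ F ((ℛ F h).right i)).right j) := by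
  let Ψ : H ⊗[F] (H ⊗[F] H) →ₗ[F] V :=
    TensorProduct.lift
      { toFun := fun x => TensorProduct.lift (LinearMap.mk₂ F (Φ x) (h2 x) (fun c y z => h2' c x y z)
          (h3 x) (fun c y z => h3' c x y z))
        map_add' := fun x x' => by ext y z; simp [h1]
        map_smul' := fun c x => by ext y z; simp [h1'] }
  have := congrArg Ψ (sum_tmul_tmul_eq (ℛ F h) (fun i => ℛ F ((ℛ F h).left i))
    (fun i => ℛ F ((ℛ F h).right i)))
  simpa [map_sum, Ψ] using this

lemma sum_right_counit {V : Type} [AddCommGroup V] [Module F V] (u : H →ₗ[F] V) (h : H) :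
    ∑ i ∈ (ℛ F h).index, (counit (R := F) ((ℛ F h).right i)) • u ((ℛ F h).left i) = u h := by
  have := congrArg (TensorProduct.lift (LinearMap.mk₂ F (fun (x : H) (c : F) => c • u x)
    (by simp) (by intros; simp only [map_smul]; rw [smul_comm]) (by simp [add_smul]) (by simp [mul_smul])))
      (sum_tmul_counit_eq (ℛ F h))
  simpa [map_sum, -sum_tmul_counit_eq] using this

lemma sum_left_counit {V : Type} [AddCommGroup V] [Module F V] (u : H →ₗ[F] V) (h : H) :
    ∑ i ∈ (ℛ F h).index, (counit (R := F) ((ℛ F h).left i)) • u ((ℛ F h).right i) = u h := by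
  have := congrArg u (sum_counit_smul (ℛ F h))
  simpa [map_sum] using this

lemma sum_antipode_right {V : Type} [AddCommGroup V] [Module F V] (β : H → H → V)
    (h1 : ∀ x x' y, β (x + x') y = β x y + β x' y)
    (h1' : ∀ (c : F) x y, β (c • x) y = c • β x y)
    (h2 : ∀ x y y', β x (y + y') = β x y + β x y')
    (h2' : ∀ (c : F) x y, β x (c • y) = c • β x y) (h : H) :
    ∑ i ∈ (ℛ F h).index, ∑ j ∈ (ℛ F ((ℛ F h).left i)).index,
      β ((ℛ F ((ℛ F h).left i)).left j)
        ((ℛ F ((ℛ F h).left i)).right j * HopfAlgebra.antipode F ((ℛ F h).right i)) = β h 1 := by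
  rw [coassoc_sum (fun x y z => β x (y * HopfAlgebra.antipode F z))]
  · let γ : H →ₗ[F] H →ₗ[F] V := LinearMap.mk₂ F β h1 h1' h2 h2'
    have : ∀ x y, β x y = γ x y := fun x y => rfl
    simp only [this, ← map_sum, HopfAlgebra.sum_mul_antipode_eq_smul]
    simp only [map_smul]
    exact sum_right_counit (γ.flip 1) h
  all_goals simp [h1, h1', h2, h2', add_mul, mul_add]

end sweedler

section action
variable {F : Type} [Field F] {H : Type} [Ring H] [HopfAlgebra F H]
  {A : Type} [Ring A] [Algebra F A] (ha : HopfAction F H A)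

lemma act_mul_sum (h : H) (a b : A) : ha.act h (a * b) =
    ∑ i ∈ (ℛ F h).index, ha.act ((ℛ F h).left i) a * ha.act ((ℛ F h).right i) b := by
  rw [ha.act_mul, ← (ℛ F h).eq]
  simp [map_sum]

lemma act_S1 (g : H) (a b : A) :
    ∑ i ∈ (ℛ F g).index, ha.act ((ℛ F g).left i)
      (a * ha.act (HopfAlgebra.antipode F ((ℛ F g).right i)) b) = ha.act g a * b := by
  simp only [act_mul_sum ha _ a, ← ha.mul_act]
  rw [sum_antipode_right (fun x y => ha.act x a * ha.act y b)]
  · simp [ha.one_act]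
  all_goals simp [add_mul, mul_add]

lemma act_of_invariant_right (h : H) (a b : A)
    (hb : ∀ g, ha.act g b = counit (R := F) g • b) :
    ha.act h (a * b) = ha.act h a * b := by
  rw [act_mul_sum]
  simp only [hb, mul_smul_comm]
  exact sum_right_counit (((LinearMap.mul F A).flip b) ∘ₗ ha.act.flip a) h

lemma act_of_invariant_left (h : H) (a b : A)
    (hb : ∀ g, ha.act g a = counit (R := F) g • a) :
    ha.act h (a * b) = a * ha.act h b := by
  rw [act_mul_sum]
  simp only [hb, smul_mul_assoc]
  exact sum_left_counit (((LinearMap.mul F A) a) ∘ₗ ha.act.flip b) h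

end action

section star
variable {F : Type} [Field F] {H : Type} [Ring H] [HopfAlgebra F H]
  {k : Type} [CommRing k] [Algebra F k] {V : Type} [AddCommGroup V] [Module k V] [Module F V]
  [IsScalarTower F k V]

noncomputable def starr (u : H →ₗ[F] V) : (H →ₗ[F] k) →ₗ[k] (H →ₗ[F] V) where
  toFun f := (TensorProduct.lift (LinearMap.mk₂ F (fun x y => f y • u x)
    (by simp) (by intros; simp only [map_smul]; rw [smul_comm]) (by simp [add_smul]) (by simp))) ∘ₗ comul
  map_add' f g := by
    ext h
    simp only [LinearMap.comp_apply, LinearMap.add_apply]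
    rw [← (ℛ F h).eq]
    simp [map_sum, add_smul, Finset.sum_add_distrib]
  map_smul' c f := by
    ext h
    simp only [LinearMap.comp_apply, LinearMap.smul_apply, RingHom.id_apply]
    rw [← (ℛ F h).eq]
    simp [map_sum, mul_smul, Finset.smul_sum]

lemma starr_apply (u : H →ₗ[F] V) (f : H →ₗ[F] k) (h : H) :
    starr u f h = ∑ i ∈ (ℛ F h).index, f ((ℛ F h).right i) • u ((ℛ F h).left i) := by
  simp only [starr, LinearMap.coe_mk, AddHom.coe_mk, LinearMap.comp_apply]
  rw [← (ℛ F h).eq]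
  simp [map_sum]

lemma starr_assoc (u : H →ₗ[F] V) (f g : H →ₗ[F] k) :
    starr (starr u f) g = starr u ((toConv f * toConv g).ofConv) := by
  ext h
  simp only [starr_apply, Finset.smul_sum]
  rw [coassoc_sum (fun x y z => g z • f y • u x)]
  · refine Finset.sum_congr rfl fun i _ => ?_
    have := (ℛ F ((ℛ F h).right i)).convMul_apply (toConv f) (toConv g)
    have h2 : (toConv f * toConv g).ofConv ((ℛ F h).right i) = _ := this
    rw [h2, Finset.sum_smul]
    refine Finset.sum_congr rfl fun j _ => ?_
    rw [← mul_smul, mul_comm]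
  all_goals intros; simp [add_smul, smul_add]
  all_goals try (simp only [smul_comm (_ : k) (_ : F)])
end star
end EW

namespace EW
open Coalgebra WithConv

section skryabin
variable {F : Type} [Field F] {H : Type} [Ring H] [HopfAlgebra F H] [FiniteDimensional F H]

lemma sk2 {k V B M : Type} [Field k] [Algebra F k] [AddCommGroup V] [Module k V] [Module F V]
    [IsScalarTower F k V] [Module.Finite k V]
    [CommRing B] [Algebra F B] [AddCommGroup M] [Module B M] [Module F M]
    (actB : H →ₗ[F] B →ₗ[F] B) (actM : H →ₗ[F] M →ₗ[F] M)
    (one_act : ∀ m, actM 1 m = m) (mul_act : ∀ g h m, actM (g * h) m = actM g (actM h m))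
    (compat : ∀ h (b : B) (m : M), actM h (b • m) =
      ∑ i ∈ (ℛ F h).index, actB ((ℛ F h).right i) b • actM ((ℛ F h).left i) m)
    (π : B →ₗ[F] k) (q : M →ₗ[F] V) (hq : Function.Surjective q)
    (hqπ : ∀ b m, q (b • m) = π b • q m)
    {r : ℕ} (m : Fin r → M) (hm : Submodule.span B (Set.range m) = ⊤)
    (hr : r ≤ Module.finrank k V) (b : Fin r → B) (hb : ∑ i, b i • m i = 0) (i : Fin r) (h : H) :
    π (actB h (b i)) = 0 := by
  classical
  let sg : B → (H →ₗ[F] k) := fun b => π ∘ₗ actB.flip b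
  let br : M →ₗ[F] (H →ₗ[F] V) := { 
    toFun := fun m => q ∘ₗ actM.flip m
    map_add' := fun x y => by ext h; simp
    map_smul' := fun c x => by ext h; simp }
  have hbr : ∀ b m, br (b • m) = starr (br m) (sg b) := by
    intro b m
    ext h
    rw [starr_apply]
    simp [br, sg, compat, map_sum, hqπ]
  let Ψ : (Fin r → (H →ₗ[F] k)) →ₗ[k] (H →ₗ[F] V) :=
    ∑ i, (starr (br (m i))).comp (LinearMap.proj i)
  have hΨ : ∀ f, Ψ f = ∑ i, starr (br (m i)) (f i) := by
    intro f; simp [Ψ]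
  have hstar_sum : ∀ {ι : Type} (s : Finset ι) (u : ι → (H →ₗ[F] V)) (f : H →ₗ[F] k),
      starr (∑ i ∈ s, u i) f = ∑ i ∈ s, starr (u i) f := by
    intro ι s u f
    ext h
    simp only [starr_apply, LinearMap.sum_apply, Finset.smul_sum]
    rw [Finset.sum_comm]
  have hclosed : ∀ u ∈ LinearMap.range Ψ, ∀ g : H →ₗ[F] k, starr u g ∈ LinearMap.range Ψ := by
    rintro _ ⟨f, rfl⟩ g
    refine ⟨fun i => (toConv (f i) * toConv g).ofConv, ?_⟩
    rw [hΨ, hΨ, hstar_sum]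
    exact Finset.sum_congr rfl fun i _ => (starr_assoc _ _ _).symm
  have hmem : ∀ x : M, br x ∈ LinearMap.range Ψ := by
    intro x
    have hx : x ∈ Submodule.span B (Set.range m) := hm ▸ Submodule.mem_top
    obtain ⟨c, rfl⟩ := (Submodule.mem_span_range_iff_exists_fun B).1 hx
    rw [map_sum]
    refine ⟨fun i => sg (c i), ?_⟩
    rw [hΨ]
    exact Finset.sum_congr rfl fun i _ => (hbr _ _).symm
  let e := Module.finBasis F H
  have hconst : ∀ x : M, (LinearMap.toSpanSingleton F V (q x)) ∘ₗ (counit (R := F) (A := H)) ∈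
      LinearMap.range Ψ := by
    intro x
    have : (LinearMap.toSpanSingleton F V (q x)) ∘ₗ (counit (R := F) (A := H)) =
        ∑ l, starr (br (actM (e l) x))
          ((Algebra.linearMap F k) ∘ₗ (e.coord l) ∘ₗ (HopfAlgebra.antipode F)) := by
      ext h
      simp only [LinearMap.sum_apply, starr_apply]
      rw [Finset.sum_comm]
      have h1 : ∀ y z : H, ∑ l, ((Algebra.linearMap F k) ∘ₗ (e.coord l) ∘ₗ
          (HopfAlgebra.antipode F)) z • (br (actM (e l) x)) y =
            q (actM (y * HopfAlgebra.antipode F z) x) := by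
        intro y z
        conv_rhs => rw [← e.sum_repr (HopfAlgebra.antipode F z)]
        simp only [Finset.mul_sum, map_sum, LinearMap.sum_apply]
        refine Finset.sum_congr rfl fun l _ => ?_
        simp [br, mul_act]
      simp only [h1]
      have h2 : ∀ y, q (actM y x) = (q ∘ₗ actM.flip x) y := fun y => rfl
      simp only [h2, ← map_sum]
      rw [HopfAlgebra.sum_mul_antipode_eq_smul]
      simp [one_act]
    rw [this]
    exact Submodule.sum_mem _ fun l _ => hclosed _ (hmem _) _
  have hsurj : Function.Surjective Ψ := by
    intro u
    change u ∈ LinearMap.range Ψ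
    have : u = ∑ l, starr (k := k) ((LinearMap.toSpanSingleton F V (u (e l))) ∘ₗ
        (counit (R := F) (A := H))) ((Algebra.linearMap F k) ∘ₗ (e.coord l)) := by
      ext h
      simp only [LinearMap.sum_apply, starr_apply]
      rw [Finset.sum_comm]
      have h1 : ∀ y z : H, ∑ l, ((Algebra.linearMap F k) ∘ₗ (e.coord l)) z •
          ((LinearMap.toSpanSingleton F V (u (e l))) ∘ₗ (counit (R := F) (A := H))) y =
            counit (R := F) y • u z := by
        intro y z
        conv_rhs => rw [← e.sum_repr z]
        simp only [map_sum, Finset.smul_sum]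
        refine Finset.sum_congr rfl fun l _ => ?_
        simp only [LinearMap.comp_apply, Algebra.linearMap_apply, algebraMap_smul, LinearMap.toSpanSingleton_apply, map_smul, Module.Basis.coord_apply]
        rw [smul_comm]
      simp only [h1]
      exact (sum_left_counit u h).symm
    rw [this]
    refine Submodule.sum_mem _ fun l _ => hclosed _ ?_ _
    obtain ⟨x, hx⟩ := hq (u (e l))
    rw [← hx]
    exact hconst x
  have hfin : Module.finrank k (Fin r → (H →ₗ[F] k)) = Module.finrank k (H →ₗ[F] V) := by
    apply le_antisymm
    · rw [Module.finrank_pi_fintype]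
      simp only [Module.finrank_linearMap F k, Module.finrank_self, mul_one, Finset.sum_const,
        Finset.card_univ, Fintype.card_fin, smul_eq_mul]
      rw [mul_comm]
      exact Nat.mul_le_mul_left _ hr
    · exact LinearMap.finrank_le_finrank_of_surjective hsurj
  have hinj : Function.Injective Ψ :=
    (LinearMap.injective_iff_surjective_of_finrank_eq_finrank hfin).2 hsurj
  have h0 : (fun i => sg (b i)) = 0 := by
    apply hinj
    rw [hΨ, map_zero]
    have : br (∑ i, b i • m i) = 0 := by rw [hb, map_zero]
    rw [map_sum] at this
    simpa only [hbr] using this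
  exact LinearMap.congr_fun (congrFun h0 i) h

set_option maxHeartbeats 1000000 in
lemma exists_gen {B M : Type} [CommRing B] [IsArtinianRing B] [AddCommGroup M] [Module B M]
    [Module.Finite B M] (r : ℕ)
    (h : ∀ P : Ideal B, P.IsMaximal →
      Module.finrank (B ⧸ P) (M ⧸ (P • ⊤ : Submodule B M)) ≤ r) :
    ∃ m : Fin r → M, Submodule.span B (Set.range m) = ⊤ := by
  classical
  -- generators modulo each maximal ideal
  have h1 : ∀ P : MaximalSpectrum B, ∃ m : Fin r → M,
      Submodule.span B (Set.range m) ⊔ P.asIdeal • ⊤ = ⊤ := by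
    intro P
    letI := Ideal.Quotient.field P.asIdeal
    let b := Module.finBasis (B ⧸ P.asIdeal) (M ⧸ (P.asIdeal • ⊤ : Submodule B M))
    choose g hg using fun i => Submodule.mkQ_surjective (P.asIdeal • ⊤ : Submodule B M) (b i)
    let m : Fin r → M := fun i => if hi : i.1 < Module.finrank (B ⧸ P.asIdeal) (M ⧸ (P.asIdeal • ⊤ : Submodule B M)) then
        g ⟨i.1, hi⟩ else 0
    have hgm : ∀ i, g i ∈ Submodule.span B (Set.range m) := by
      intro i
      apply Submodule.subset_span
      refine ⟨⟨i.1, lt_of_lt_of_le i.2 (h P.asIdeal P.isMaximal)⟩, ?_⟩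
      simp [m]
    refine ⟨m, ?_⟩
    rw [eq_top_iff]
    rintro x -
    have hx := b.sum_repr (Submodule.Quotient.mk x)
    choose c hc using fun i => Ideal.Quotient.mk_surjective (b.repr (Submodule.Quotient.mk x) i)
    have : x - ∑ i, c i • g i ∈ (P.asIdeal • ⊤ : Submodule B M) := by
      rw [← Submodule.Quotient.mk_eq_zero, ← Submodule.mkQ_apply, map_sub, map_sum]
      rw [Submodule.mkQ_apply, ← hx, sub_eq_zero]
      refine Finset.sum_congr rfl fun i _ => ?_
      rw [map_smul, hg, ← hc]
      rfl
    rw [← sub_add_cancel x (∑ i, c i • g i), add_comm]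
    exact Submodule.add_mem_sup (Submodule.sum_mem _ fun i _ => Submodule.smul_mem _ _ (hgm i)) this
  choose m hm using h1
  haveI : Finite (MaximalSpectrum B) := inferInstance
  haveI := Fintype.ofFinite (MaximalSpectrum B)
  have he : ∀ P : MaximalSpectrum B, ∃ e : B, (1 - e ∈ P.asIdeal) ∧
      ∀ Q : MaximalSpectrum B, Q ≠ P → e ∈ Q.asIdeal := by
    intro P
    have hcop : IsCoprime P.asIdeal (⨅ Q ∈ (Finset.univ.erase P), MaximalSpectrum.asIdeal Q) := by
      rw [Ideal.isCoprime_iff_sup_eq]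
      apply Ideal.sup_iInf_eq_top
      intro Q hQ
      rw [← Ideal.isCoprime_iff_sup_eq]
      apply Ideal.isCoprime_of_isMaximal
      intro hPQ
      exact (Finset.ne_of_mem_erase hQ) (MaximalSpectrum.ext hPQ.symm)
    rw [Ideal.isCoprime_iff_exists] at hcop
    obtain ⟨i, hi, j, hj, hij⟩ := hcop
    refine ⟨j, ?_, ?_⟩
    · rw [← hij]; simpa using hi
    · intro Q hQ
      simp only [Ideal.mem_iInf] at hj
      exact hj Q (by simp [hQ])
  choose e he1 he2 using he
  let n : Fin r → M := fun i => ∑ P, e P • m P i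
  refine ⟨n, ?_⟩
  set N := Submodule.span B (Set.range n) with hN
  have h2 : ∀ P : MaximalSpectrum B, N ⊔ P.asIdeal • ⊤ = ⊤ := by
    intro P
    rw [eq_top_iff]
    refine (hm P).ge.trans ?_
    refine sup_le ?_ le_sup_right
    rw [Submodule.span_le]
    rintro _ ⟨i, rfl⟩
    have h3 : m P i - n i ∈ (P.asIdeal • ⊤ : Submodule B M) := by
      have : m P i - n i = (1 - e P) • m P i - ∑ Q ∈ Finset.univ.erase P, e Q • m Q i := by
        have h5 : n i = e P • m P i + ∑ Q ∈ Finset.univ.erase P, e Q • m Q i :=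
          (Finset.add_sum_erase _ (fun Q => e Q • m Q i) (Finset.mem_univ P)).symm
        rw [h5, sub_smul, one_smul, sub_add_eq_sub_sub]
      rw [this]
      refine Submodule.sub_mem _ (Submodule.smul_mem_smul (he1 P) trivial)
        (Submodule.sum_mem _ fun Q hQ => Submodule.smul_mem_smul (he2 Q P ?_) trivial)
      exact (Finset.ne_of_mem_erase hQ).symm
    have : m P i = n i + (m P i - n i) := (add_sub_cancel _ _).symm
    rw [this]
    exact Submodule.add_mem_sup (Submodule.subset_span ⟨i, rfl⟩) h3
  -- product of maximal ideals
  have h3 : ∀ s : Finset (MaximalSpectrum B), N ⊔ (∏ P ∈ s, P.asIdeal) • ⊤ = ⊤ := by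
    intro s
    induction s using Finset.induction_on with
    | empty => simp
    | insert P s hP ih =>
      rw [Finset.prod_insert hP, mul_comm, eq_top_iff]
      refine ih.ge.trans ?_
      refine sup_le le_sup_left ?_
      calc (∏ P ∈ s, P.asIdeal) • (⊤ : Submodule B M)
          = (∏ P ∈ s, P.asIdeal) • (N ⊔ P.asIdeal • ⊤) := by rw [h2]
        _ = (∏ P ∈ s, P.asIdeal) • N ⊔ ((∏ P ∈ s, P.asIdeal) * P.asIdeal) • ⊤ := by
            rw [Submodule.smul_sup, Submodule.mul_smul]
        _ ≤ _ := sup_le_sup Submodule.smul_le_right le_rfl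
  have h4 : (∏ P : MaximalSpectrum B, P.asIdeal) ≤ Ideal.jacobson ⊥ := by
    rw [Ideal.jacobson]
    refine le_sInf ?_
    rintro J ⟨-, hJ⟩
    exact Ideal.prod_le_inf.trans (Finset.inf_le (f := MaximalSpectrum.asIdeal) (Finset.mem_univ (⟨J, hJ⟩ : MaximalSpectrum B)))
  rw [eq_top_iff]
  refine Submodule.le_of_le_smul_of_le_jacobson_bot (Module.Finite.fg_top) h4 ?_
  rw [h3]

set_option maxHeartbeats 1000000 in
lemma skryabin {B M : Type} 
    [CommRing B] [Algebra F B] [IsArtinianRing B] [AddCommGroup M] [Module B M] [Module F M]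
    [IsScalarTower F B M] [Module.Finite B M]
    (actB : H →ₗ[F] B →ₗ[F] B) (actM : H →ₗ[F] M →ₗ[F] M)
    (one_act : ∀ m, actM 1 m = m) (mul_act : ∀ g h m, actM (g * h) m = actM g (actM h m))
    (compat : ∀ h (b : B) (m : M), actM h (b • m) =
      ∑ i ∈ (ℛ F h).index, actB ((ℛ F h).right i) b • actM ((ℛ F h).left i) m)
    (hs : ∀ P : Ideal B, P.IsMaximal → ∀ b, (∀ h, actB h b ∈ P) → b = 0) :
    ∃ (r : ℕ) (m : Fin r → M), Submodule.span B (Set.range m) = ⊤ ∧ LinearIndependent B m := by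
  classical
  have hex : ∃ r : ℕ, ∃ m : Fin r → M, Submodule.span B (Set.range m) = ⊤ :=
    Module.Finite.exists_fin
  let r := Nat.find hex
  obtain ⟨m, hm⟩ : ∃ m : Fin r → M, Submodule.span B (Set.range m) = ⊤ := Nat.find_spec hex
  refine ⟨r, m, hm, ?_⟩
  by_cases hr0 : r = 0
  · haveI : IsEmpty (Fin r) := by rw [hr0]; infer_instance
    exact linearIndependent_empty_type
  obtain ⟨P, hP, hPr⟩ : ∃ P : Ideal B, P.IsMaximal ∧
      r ≤ Module.finrank (B ⧸ P) (M ⧸ (P • ⊤ : Submodule B M)) := by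
    by_contra hcon
    push Not at hcon
    have := exists_gen (B := B) (M := M) (r - 1) (fun P hP => by have := hcon P hP; omega)
    exact Nat.find_min hex (m := r - 1) (by change r - 1 < r; omega) this
  letI := Ideal.Quotient.field P
  rw [Fintype.linearIndependent_iff]
  intro b hb i
  apply hs P hP
  intro h
  rw [← Ideal.Quotient.eq_zero_iff_mem]
  have := sk2 (k := B ⧸ P) (V := M ⧸ (P • ⊤ : Submodule B M)) actB actM one_act mul_act compat
    (Ideal.Quotient.mkₐ F P).toLinearMap ((P • ⊤ : Submodule B M).mkQ.restrictScalars F)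
    (Submodule.mkQ_surjective _) (fun b m => rfl) m hm hPr b hb i h
  exact this
end skryabin
end EW

namespace EW
open Coalgebra WithConv

section ML
variable {F : Type} [Field F] {H : Type} [Ring H] [HopfAlgebra F H] [FiniteDimensional F H]
  {L : Type} [Field L] [Algebra F L]
  {R : Type} [Ring R] [Algebra L R] [Algebra F R] [IsScalarTower F L R] [Module.Finite L R]
  {B : Type} [CommRing B] [Algebra L B] [Algebra F B] [IsScalarTower F L B]

lemma theta_inv (ha : HopfAction F H R) (Λ : H) (Θ : R →ₗ[L] L)
    (hΘ : ∀ r, ha.act Λ r = algebraMap L R (Θ r)) [Nontrivial R]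
    (hΛ : ∀ x, Λ * x = counit (R := F) x • Λ) (h : H) (r : R) :
    Θ (ha.act h r) = counit (R := F) h • Θ r := by
  apply (algebraMap L R).injective
  rw [← hΘ, ← ha.mul_act, hΛ, Algebra.algebraMap_eq_smul_one (counit (R := F) h • Θ r), smul_assoc,
    ← Algebra.algebraMap_eq_smul_one, ← hΘ]
  simp

lemma theta_adj (ha : HopfAction F H R) (Θ : R →ₗ[L] L)
    (hinv : ∀ h r, Θ (ha.act h r) = counit (R := F) h • Θ r) (g : H) (a b : R) :
    Θ (ha.act g a * b) = Θ (a * ha.act (HopfAlgebra.antipode F g) b) := by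
  rw [← act_S1, map_sum]
  simp only [hinv]
  exact sum_left_counit ((Θ.restrictScalars F) ∘ₗ (LinearMap.mul F R a) ∘ₗ
    (ha.act.flip b) ∘ₗ (HopfAlgebra.antipode F)) g

lemma exists_loc [Nontrivial R] (ha : HopfAction F H R)
    (hL : ∀ h (l : L) r, ha.act h (l • r) = l • ha.act h r)
    (Λ : H) (Θ : R →ₗ[L] L)
    (hΘ : ∀ r, ha.act Λ r = algebraMap L R (Θ r))
    (hΛ : ∀ x, Λ * x = counit (R := F) x • Λ)
    (actB : H →ₗ[F] B →ₗ[F] B) (j : B →ₐ[L] R) (hj : Function.Injective j)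
    (hact : ∀ h b, j (actB h b) = ha.act h (j b))
    (hnd : ∀ b, (∀ c, Θ (j (b * c)) = 0) → b = 0)
    (ε : R →ₐ[L] L) (t : R) (ht : ∀ f, t * f = ε f • t) (ht1 : ε t = 1) :
    ∃ b : B, (∀ c, b * c = ε (j c) • b) ∧ ε (j b) ≠ 0 := by
  haveI : Module.Finite L B := Module.Finite.of_injective j.toLinearMap hj
  haveI : IsArtinianRing B := IsArtinianRing.of_finite L B
  letI : Module B R :=
    { smul := fun b m => m * j b
      one_smul := fun m => by change m * j 1 = m; simp
      mul_smul := fun b c m => by change m * j (b * c) = m * j c * j b; rw [mul_comm, map_mul, mul_assoc]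
      smul_zero := fun b => by change 0 * j b = 0; simp
      smul_add := fun b m n => by change (m + n) * j b = m * j b + n * j b; rw [add_mul]
      add_smul := fun b c m => by change m * j (b + c) = m * j b + m * j c; rw [map_add, mul_add]
      zero_smul := fun m => by change m * j 0 = 0; simp }
  have hsm : ∀ (b : B) (m : R), b • m = m * j b := fun _ _ => rfl
  have hFL : ∀ (c : F) (b : B), c • b = (algebraMap F L c) • b := fun c b => (algebraMap_smul L c b).symm
  have hFR : ∀ (c : F) (b : R), c • b = (algebraMap F L c) • b := fun c b => (algebraMap_smul L c b).symm
  haveI : IsScalarTower F B R := ⟨fun c b m => by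
    rw [hsm, hsm, hFL, hFR, map_smul, mul_smul_comm]⟩
  haveI : IsScalarTower L B R := ⟨fun c b m => by
    rw [hsm, hsm, map_smul, mul_smul_comm]⟩
  haveI : Module.Finite B R := Module.Finite.of_restrictScalars_finite L B R
  obtain ⟨r, m, hm, hli⟩ := skryabin (F := F) (H := H) (B := B) (M := R) actB ha.act ha.one_act ha.mul_act
    (fun h b m => by simp only [hsm, hact]; exact act_mul_sum ha h m (j b))
    (by
      intro P hP b hb
      apply hnd
      intro c
      have h1 : actB Λ (b * c) ∈ P := by
        have : actB Λ (b * c) = ∑ i ∈ (ℛ F Λ).index, actB ((ℛ F Λ).left i) b *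
            actB ((ℛ F Λ).right i) c := by
          apply hj
          rw [hact, map_mul, act_mul_sum, map_sum]
          simp only [map_mul, hact]
        rw [this]
        exact P.sum_mem fun i _ => P.mul_mem_right _ (hb _)
      have h2 : actB Λ (b * c) = algebraMap L B (Θ (j (b * c))) := by
        apply hj
        rw [hact, hΘ, AlgHom.commutes]
      by_contra h0
      rw [h2] at h1
      apply hP.ne_top
      exact Ideal.eq_top_of_isUnit_mem _ h1 ((IsUnit.mk0 _ h0).map (algebraMap L B)))
  have htm : t ∈ Submodule.span B (Set.range m) := hm ▸ Submodule.mem_top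
  obtain ⟨b, hb⟩ := (Submodule.mem_span_range_iff_exists_fun B).1 htm
  have h1 : ∀ i c, b i * c = ε (j c) • b i := by
    intro i c
    have : ∑ i, (c * b i - ε (j c) • b i) • m i = 0 := by
      simp only [sub_smul, Finset.sum_sub_distrib, mul_smul, smul_assoc, ← Finset.smul_sum, hb]
      rw [hsm, ht, sub_self]
    have := Fintype.linearIndependent_iff.1 hli _ this i
    rw [mul_comm]
    exact sub_eq_zero.1 this
  have h2 : ∃ i, ε (j (b i)) ≠ 0 := by
    by_contra hcon
    push Not at hcon
    rw [← hb] at ht1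
    simp [hsm, map_sum, hcon] at ht1
  obtain ⟨i, hi⟩ := h2
  exact ⟨b i, h1 i, hi⟩

lemma exists_dual {L B : Type} [Field L] [CommRing B] [Algebra L B] [Module.Finite L B] (θ : B →ₗ[L] L)
    (hnd : ∀ b, (∀ c, θ (b * c) = 0) → b = 0) :
    ∃ (n : ℕ) (v w : Fin n → B), (∀ b, b = ∑ i, θ (v i * b) • w i) ∧
      (∀ b, b = ∑ i, θ (b * w i) • v i) := by
  classical
  let β : LinearMap.BilinForm L B := (LinearMap.mul L B).compr₂ θ
  have hβ : β.Nondegenerate := by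
    refine ⟨fun b hb => hnd b hb, fun b hb => hnd b fun c => ?_⟩
    rw [mul_comm]; exact hb c
  let v := Module.finBasis L B
  let w := β.dualBasis hβ v
  have hw : ∀ i j, θ (w i * v j) = if j = i then 1 else 0 := fun i j =>
    LinearMap.BilinForm.apply_dualBasis_left hβ v i j
  refine ⟨_, v, w, ?_, ?_⟩
  · intro b
    conv_lhs => rw [← w.sum_repr b]
    refine Finset.sum_congr rfl fun i _ => ?_
    congr 1
    have : θ (v i * ∑ l, w.repr b l • w l) = w.repr b i := by
      rw [mul_comm]
      simp only [Finset.sum_mul, map_sum, smul_mul_assoc, map_smul, hw]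
      simp
    rw [← this, w.sum_repr]
  · intro b
    conv_lhs => rw [← v.sum_repr b]
    refine Finset.sum_congr rfl fun i _ => ?_
    congr 1
    have : θ ((∑ l, v.repr b l • v l) * w i) = v.repr b i := by
      rw [mul_comm]
      simp only [Finset.mul_sum, map_sum, mul_smul_comm, map_smul, hw]
      simp
    rw [← this, v.sum_repr]

lemma G_inv (actB : H →ₗ[F] B →ₗ[F] B) (mul_act : ∀ g h b, actB (g * h) b = actB g (actB h b))
    (one_act : ∀ b, actB 1 b = b)
    (hLB : ∀ h (l : L) b, actB h (l • b) = l • actB h b)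
    (θ : B →ₗ[L] L)
    (hadj : ∀ g a b, θ (actB g a * b) = θ (a * actB (HopfAlgebra.antipode F g) b))
    {n : ℕ} (v w : Fin n → B) (h1 : ∀ b, b = ∑ i, θ (v i * b) • w i)
    (h2 : ∀ b, b = ∑ i, θ (b * w i) • v i)
    {V : Type} [AddCommGroup V] [Module L V] [Module F V] [IsScalarTower F L V]
    (G : B →ₗ[L] B →ₗ[L] V) (h : H) :
    ∑ k, ∑ i ∈ (ℛ F h).index, G (actB ((ℛ F h).left i) (w k)) (actB ((ℛ F h).right i) (v k)) =
    counit (R := F) h • ∑ k, G (w k) (v k) := by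
  rw [Finset.sum_comm]
  have key : ∀ x y : H, ∑ k, G (actB x (w k)) (actB y (v k)) =
      ∑ l, G (actB (x * HopfAlgebra.antipode F y) (w l)) (v l) := by
    intro x y
    calc ∑ k, G (actB x (w k)) (actB y (v k))
        = ∑ k, ∑ l, G (actB x (θ (v k * actB (HopfAlgebra.antipode F y) (w l)) • w k)) (v l) := by
          refine Finset.sum_congr rfl fun k _ => ?_
          conv_lhs => rw [h2 (actB y (v k))]
          simp only [map_sum, map_smul, hadj, hLB, LinearMap.smul_apply]
      _ = _ := by
          rw [Finset.sum_comm]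
          refine Finset.sum_congr rfl fun l _ => ?_
          rw [← LinearMap.sum_apply, ← map_sum, ← map_sum, ← h1, mul_act]
  simp only [key]
  rw [Finset.sum_comm, Finset.smul_sum]
  refine Finset.sum_congr rfl fun l _ => ?_
  rw [← LinearMap.sum_apply, ← map_sum, ← LinearMap.sum_apply, ← map_sum,
    HopfAlgebra.sum_mul_antipode_eq_smul, map_smul, LinearMap.smul_apply, one_act,
    ← algebraMap_smul L, map_smul, LinearMap.smul_apply, algebraMap_smul]

lemma ML [Nontrivial R] (ha : HopfAction F H R)
    (hL : ∀ h (l : L) r, ha.act h (l • r) = l • ha.act h r)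
    (Λ : H) (Θ : R →ₗ[L] L)
    (hΘ : ∀ r, ha.act Λ r = algebraMap L R (Θ r))
    (hΛ : ∀ x, Λ * x = counit (R := F) x • Λ) (hΛ1 : counit (R := F) Λ = 1)
    (actB : H →ₗ[F] B →ₗ[F] B) (j : B →ₐ[L] R) (hj : Function.Injective j)
    (hact : ∀ h b, j (actB h b) = ha.act h (j b))
    (hnd : ∀ b, (∀ c, Θ (j (b * c)) = 0) → b = 0)
    (ε : R →ₐ[L] L) (t : R) (ht : ∀ f, t * f = ε f • t) (ht1 : ε t = 1)
    (δL : L → L) (δ : R →+ R) (hδmul : ∀ r s, δ (r * s) = δ r * s + r * δ s)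
    (hδsmul : ∀ (l : L) r, δ (l • r) = δL l • r + l • δ r)
    (hδact : ∀ h r, δ (ha.act h r) = ha.act h (δ r)) (b : B) :
    δ (j b) ∈ j.range := by
  obtain ⟨b0, hb0, hb0'⟩ := exists_loc ha hL Λ Θ hΘ hΛ actB j hj hact hnd ε t ht ht1
  haveI : Module.Finite L B := Module.Finite.of_injective j.toLinearMap hj
  let θ : B →ₗ[L] L := Θ ∘ₗ j.toLinearMap
  have hθ : ∀ b, θ b = Θ (j b) := fun _ => rfl
  obtain ⟨n, v, w, h1, h2⟩ := exists_dual θ hnd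
  have hadj : ∀ g a b, θ (actB g a * b) = θ (a * actB (HopfAlgebra.antipode F g) b) := by
    intro g a b
    simp only [hθ, map_mul, hact]
    exact theta_adj ha Θ (theta_inv ha Λ Θ hΘ hΛ) g _ _
  have hLB : ∀ h (l : L) b, actB h (l • b) = l • actB h b := by
    intro h l b; apply hj; simp [hact, hL]
  have hmulB : ∀ g h b, actB (g * h) b = actB g (actB h b) := by
    intro g h b; apply hj; simp [hact, ha.mul_act]
  have honeB : ∀ b, actB 1 b = b := by
    intro b; apply hj; simp [hact, ha.one_act]
  -- z
  let G0 : B →ₗ[L] B →ₗ[L] R := ((LinearMap.mul L R).compl₂ j.toLinearMap).comp j.toLinearMap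
  let z : R := ∑ k, j (w k) * j (v k)
  have hz : z = algebraMap L R (Θ z) := by
    have := G_inv actB hmulB honeB hLB θ hadj v w h1 h2 G0 Λ
    rw [hΛ1, one_smul] at this
    have h3 : ha.act Λ z = z := by
      simp only [z, map_sum, act_mul_sum]
      simpa [G0, hact] using this
    rw [← hΘ, h3]
  have hz0 : Θ z ≠ 0 := by
    intro h0
    have hz' : z = 0 := by rw [hz, h0, map_zero]
    have h4 := h1 b0
    have h5 : ε (j b0) = θ b0 * ε z := by
      conv_lhs => rw [h4]
      simp only [mul_comm _ b0, hb0, map_sum, map_smul, z, map_mul, smul_eq_mul, Finset.mul_sum]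
      refine Finset.sum_congr rfl fun k _ => by ring
    rw [hz', map_zero, mul_zero] at h5
    exact hb0' h5
  let J : Submodule L R := LinearMap.range j.toLinearMap
  have hJ : ∀ b, j b ∈ J := fun b => ⟨b, rfl⟩
  have hJmul : ∀ x ∈ J, ∀ y ∈ J, x * y ∈ J := by
    rintro _ ⟨x, rfl⟩ _ ⟨y, rfl⟩
    exact ⟨x * y, by simp⟩
  let G : B →ₗ[L] B →ₗ[L] (R ⧸ J) := LinearMap.mk₂ L (fun w v => J.mkQ (j w * δ (j v)))
    (fun x y z => by rw [map_add, add_mul, map_add])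
    (fun c x y => by rw [map_smul, smul_mul_assoc, map_smul])
    (fun x y z => by rw [map_add, map_add, mul_add, map_add])
    (fun c x y => by
      rw [map_smul, hδsmul, mul_add, mul_smul_comm, mul_smul_comm, map_add, map_smul, map_smul]
      have : J.mkQ (j x * j y) = 0 := by
        rw [Submodule.mkQ_apply, Submodule.Quotient.mk_eq_zero]
        exact hJmul _ (hJ _) _ (hJ _)
      rw [this, smul_zero, zero_add])
  have hG : ∀ w v, G w v = J.mkQ (j w * δ (j v)) := fun _ _ => rfl
  let x : R := ∑ k, j (w k) * δ (j (v k))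
  have hxJ : x ∈ J := by
    have := G_inv actB hmulB honeB hLB θ hadj v w h1 h2 G Λ
    rw [hΛ1, one_smul] at this
    have h3 : J.mkQ (ha.act Λ x) = J.mkQ x := by
      simp only [x, map_sum, act_mul_sum]
      simpa only [hG, hact, hδact] using this
    rw [hΘ] at h3
    have h4 : J.mkQ (algebraMap L R (Θ x)) = 0 := by
      rw [Submodule.mkQ_apply, Submodule.Quotient.mk_eq_zero]
      exact ⟨algebraMap L B (Θ x), by simp⟩
    rw [h4] at h3
    exact (Submodule.Quotient.mk_eq_zero J).1 h3.symm
  have e1 : ∑ k, G (w k) (v k * b) = ∑ k, G (b * w k) (v k) := by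
    calc ∑ k, G (w k) (v k * b)
        = ∑ k, ∑ l, G (θ (v k * (b * w l)) • w k) (v l) := by
          refine Finset.sum_congr rfl fun k _ => ?_
          conv_lhs => rw [h2 (v k * b)]
          simp only [map_sum, map_smul, LinearMap.smul_apply, mul_assoc]
      _ = _ := by
          rw [Finset.sum_comm]
          refine Finset.sum_congr rfl fun l _ => ?_
          rw [← LinearMap.sum_apply, ← map_sum, ← h1]
  have e2 : ∑ k, G (b * w k) (v k) = 0 := by
    have : ∑ k, G (b * w k) (v k) = J.mkQ (j b * x) := by
      simp only [hG, x, Finset.mul_sum, map_sum, map_mul, mul_assoc]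
    rw [this]
    exact (Submodule.Quotient.mk_eq_zero J).2 (hJmul _ (hJ _) _ hxJ)
  have e3 : ∑ k, G (w k) (v k * b) = J.mkQ (x * j b) + J.mkQ (z * δ (j b)) := by
    simp only [hG, x, z, Finset.sum_mul, map_sum, map_mul, hδmul, mul_add, map_add,
      Finset.sum_add_distrib, mul_assoc]
  have e4 : J.mkQ (x * j b) = 0 := (Submodule.Quotient.mk_eq_zero J).2 (hJmul _ hxJ _ (hJ _))
  rw [e1, e2, e4, zero_add, hz, ← Algebra.smul_def, map_smul] at e3
  have e5 := (smul_eq_zero.1 e3.symm).resolve_left hz0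
  obtain ⟨y, hy⟩ := (Submodule.Quotient.mk_eq_zero J).1 e5
  exact ⟨y, hy⟩
end ML
end EW

namespace EW
open Coalgebra WithConv

abbrev KL (F H L : Type) [Field F] [Ring H] [HopfAlgebra F H] [Field L] [Algebra F L] : Type :=
  WithConv (H →ₗ[F] L)

section integral
variable {F : Type} [Field F] {H : Type} [Ring H] [HopfAlgebra F H]

lemma left_integral [IsSemisimpleRing H] :
    ∃ Λ : H, (∀ x, x * Λ = counit (R := F) x • Λ) ∧ counit (R := F) Λ = 1 := by
  let I : Submodule H H := RingHom.ker (Bialgebra.counitAlgHom F H)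
  obtain ⟨J, hJ⟩ := exists_isCompl I
  have h1 : (1 : H) ∈ I ⊔ J := by rw [hJ.sup_eq_top]; trivial
  obtain ⟨k, hk, Λ, hΛ, hs⟩ := Submodule.mem_sup.1 h1
  have hk0 : counit (R := F) k = 0 := hk
  refine ⟨Λ, fun x => ?_, ?_⟩
  · have h2 : x * Λ - counit (R := F) x • Λ ∈ J := by
      refine J.sub_mem (J.smul_mem x hΛ) ?_
      rw [Algebra.smul_def]
      exact J.smul_mem _ hΛ
    have h3 : x * Λ - counit (R := F) x • Λ ∈ I := by
      change Bialgebra.counitAlgHom F H _ = 0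
      simp
    have := (Submodule.disjoint_def.1 hJ.disjoint) _ h3 h2
    exact sub_eq_zero.1 this
  · have := congrArg (counit (R := F)) hs
    simpa [hk0] using this

lemma right_integral [IsSemisimpleRing H] :
    ∃ Λ : H, (∀ x, Λ * x = counit (R := F) x • Λ) ∧ counit (R := F) Λ = 1 := by
  let e : Hᵐᵒᵖ →+* F := (Bialgebra.counitAlgHom F H).toRingHom.fromOpposite (fun x y => mul_comm _ _)
  let I : Submodule Hᵐᵒᵖ Hᵐᵒᵖ := RingHom.ker e
  have he : ∀ x : H, e (MulOpposite.op x) = counit (R := F) x := fun x => rfl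
  obtain ⟨J, hJ⟩ := exists_isCompl I
  have h1 : (1 : Hᵐᵒᵖ) ∈ I ⊔ J := by rw [hJ.sup_eq_top]; trivial
  obtain ⟨k, hk, Λ, hΛ, hs⟩ := Submodule.mem_sup.1 h1
  have hk0 : e k = 0 := hk
  have hΛ1 : e Λ = 1 := by
    have := congrArg e hs
    simpa [hk0] using this
  refine ⟨Λ.unop, fun x => ?_, ?_⟩
  · have h2 : MulOpposite.op x * Λ - MulOpposite.op (algebraMap F H (counit (R := F) x)) * Λ ∈ J := by
      exact J.sub_mem (J.smul_mem _ hΛ) (J.smul_mem _ hΛ)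
    have h3 : MulOpposite.op x * Λ - MulOpposite.op (algebraMap F H (counit (R := F) x)) * Λ ∈ I := by
      change e _ = 0
      rw [map_sub, map_mul, map_mul, he, he]
      simp
    have := sub_eq_zero.1 ((Submodule.disjoint_def.1 hJ.disjoint) _ h3 h2)
    have := congrArg MulOpposite.unop this
    simp only [MulOpposite.unop_mul, MulOpposite.unop_op] at this
    rw [this, Algebra.smul_def, Algebra.commutes]
  · rw [← he, MulOpposite.op_unop, hΛ1]

lemma exists_integral [IsSemisimpleRing H] :
    ∃ Λ : H, (∀ x, x * Λ = counit (R := F) x • Λ) ∧ (∀ x, Λ * x = counit (R := F) x • Λ) ∧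
      counit (R := F) Λ = 1 := by
  obtain ⟨Λ, h1, h2⟩ := left_integral (F := F) (H := H)
  obtain ⟨M, h3, h4⟩ := right_integral (F := F) (H := H)
  have : Λ = M := by
    have a := h1 M
    have b := h3 Λ
    rw [h4, one_smul] at a
    rw [h2, one_smul] at b
    rw [← a, b]
  subst this
  exact ⟨Λ, h1, h3, h2⟩
end integral

section KL
variable {F : Type} [Field F] {H : Type} [Ring H] [HopfAlgebra F H]
  {L : Type} [Field L] [Algebra F L]

lemma kl_ext {f g : KL F H L} (h : ∀ x, f.ofConv x = g.ofConv x) : f = g := by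
  apply WithConv.ext; ext x; exact h x

lemma kl_mul (f g : KL F H L) (h : H) : (f * g).ofConv h =
    ∑ i ∈ (ℛ F h).index, f.ofConv ((ℛ F h).left i) * g.ofConv ((ℛ F h).right i) :=
  (ℛ F h).convMul_apply f g

lemma kl_algebraMap (l : L) (h : H) : (algebraMap L (KL F H L) l).ofConv h =
    counit (R := F) h • l := by
  rw [LinearMap.convAlgebraMap_apply, Algebra.smul_def (counit (R := F) h), smul_eq_mul, mul_comm]

instance kl_tower : IsScalarTower F L (KL F H L) :=
  ⟨fun a b c => kl_ext fun x => by simp⟩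

instance kl_finite [FiniteDimensional F H] : Module.Finite L (KL F H L) :=
  Module.Finite.equiv (WithConv.linearEquiv L (H →ₗ[F] L)).symm

noncomputable def klEval (h : H) : KL F H L →ₗ[L] L where
  toFun f := f.ofConv h
  map_add' f g := rfl
  map_smul' c f := rfl

noncomputable def klEps : KL F H L →ₐ[L] L where
  toFun f := f.ofConv 1
  map_add' f g := rfl
  map_zero' := rfl
  map_one' := by simp
  map_mul' f g := by simp [Algebra.TensorProduct.one_def]
  commutes' l := by rw [kl_algebraMap]; simp

instance kl_nontrivial : Nontrivial (KL F H L) :=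
  (klEps (F := F) (H := H) (L := L)).toRingHom.domain_nontrivial

noncomputable def klActFun : H →ₗ[F] KL F H L →ₗ[F] KL F H L :=
  LinearMap.mk₂ F (fun h f => toConv (f.ofConv ∘ₗ LinearMap.mulRight F h))
    (fun h h' f => kl_ext fun x => by simp [mul_add])
    (fun c h f => kl_ext fun x => by simp)
    (fun h f f' => kl_ext fun x => by simp)
    (fun c h f => kl_ext fun x => by simp)

lemma klActFun_apply (h : H) (f : KL F H L) (x : H) :
    (klActFun h f).ofConv x = f.ofConv (x * h) := rfl

noncomputable def klAct : HopfAction F H (KL F H L) where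
  act := klActFun
  one_act f := kl_ext fun x => by rw [klActFun_apply, mul_one]
  mul_act g h f := kl_ext fun x => by simp only [klActFun_apply, mul_assoc]
  act_one h := kl_ext fun x => by
    rw [klActFun_apply]
    simp [mul_comm, Algebra.smul_def]
  act_mul h f g := kl_ext fun x => by
    rw [klActFun_apply]
    have h1 : (comul (x * h) : H ⊗[F] H) = ∑ i ∈ (ℛ F h).index, ∑ j ∈ (ℛ F x).index,
        ((ℛ F x).left j * (ℛ F h).left i) ⊗ₜ[F] ((ℛ F x).right j * (ℛ F h).right i) := by
      rw [Bialgebra.comul_mul, ← (ℛ F h).eq, ← (ℛ F x).eq, Finset.sum_mul_sum, Finset.sum_comm]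
      simp
    rw [LinearMap.convMul_apply, h1, ← (ℛ F h).eq]
    simp [map_sum, kl_mul, klActFun_apply, -LinearMap.convMul_apply]


lemma ML_KL [FiniteDimensional F H] (Λ : H) (hΛ0 : ∀ x, x * Λ = counit (R := F) x • Λ)
    (hΛ : ∀ x, Λ * x = counit (R := F) x • Λ) (hΛ1 : counit (R := F) Λ = 1)
    (lam : H →ₗ[F] F) (hlam1 : lam 1 = 1)
    (hlam : ∀ h : H, (TensorProduct.lid F H) ((LinearMap.rTensor H lam) (comul h)) = lam h • 1)
    (B : Subalgebra L (KL F H L)) (hcomm : ∀ x ∈ B, ∀ y ∈ B, x * y = y * x)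
    (hst : ∀ h, ∀ f ∈ B, klActFun h f ∈ B)
    (hnd : ∀ b ∈ B, (∀ c ∈ B, (b * c).ofConv Λ = 0) → b = 0)
    (δ : Derivation F L L) (b : KL F H L) (hb : b ∈ B) :
    (toConv (δ.toLinearMap ∘ₗ b.ofConv) : KL F H L) ∈ B := by
  letI : CommRing B := { (inferInstance : Ring B) with
    mul_comm := fun x y => Subtype.ext (hcomm _ x.2 _ y.2) }
  letI : Algebra L B := B.algebra
  let actB : H →ₗ[F] B →ₗ[F] B := LinearMap.mk₂ F (fun h b => ⟨klActFun h b.1, hst h _ b.2⟩)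
    (fun h h' f => Subtype.ext (by simp))
    (fun c h f => Subtype.ext (by simp))
    (fun h f f' => Subtype.ext (by simp))
    (fun c h f => Subtype.ext (by simp))
  have := ML (F := F) (H := H) (L := L) (R := KL F H L) (B := B) klAct (fun h l r => rfl) Λ (klEval Λ)
    (fun r => kl_ext fun x => by
      rw [kl_algebraMap]
      change r.ofConv (x * Λ) = _
      rw [hΛ0, map_smul]; rfl) hΛ hΛ1 actB B.val Subtype.val_injective (fun h b => rfl)
    (fun b hb => Subtype.ext (hnd b.1 b.2 fun c hc => hb ⟨c, hc⟩)) klEps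
    (toConv (Algebra.linearMap F L ∘ₗ lam))
    (fun f => kl_ext fun x => by
      have h1 := hlam x
      rw [← (ℛ F x).eq] at h1
      simp only [map_sum, LinearMap.rTensor_tmul, TensorProduct.lid_tmul] at h1
      have h2 := congrArg f.ofConv h1
      simp only [map_sum, map_smul] at h2
      rw [kl_mul]
      simp only [ofConv_smul, LinearMap.smul_apply, LinearMap.comp_apply, Algebra.linearMap_apply,
        ← Algebra.smul_def, ofConv_toConv] 
      rw [h2, Algebra.smul_def, mul_comm]; rfl)
    (by change algebraMap F L (lam 1) = 1; rw [hlam1, map_one]) δ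
    { toFun := fun f => toConv (δ.toLinearMap ∘ₗ f.ofConv)
      map_zero' := kl_ext fun x => by simp
      map_add' := fun f g => kl_ext fun x => by simp }
    (fun r s => kl_ext fun x => by
      simp only [AddMonoidHom.coe_mk, ZeroHom.coe_mk, ofConv_add, LinearMap.add_apply, kl_mul,
        LinearMap.comp_apply, map_sum, ← Finset.sum_add_distrib, ofConv_toConv]
      refine Finset.sum_congr rfl fun i _ => ?_
      have := δ.leibniz (r.ofConv ((ℛ F x).left i)) (s.ofConv ((ℛ F x).right i))
      simp only [smul_eq_mul] at this
      change δ _ = δ _ * _ + _ * δ _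
      rw [this]; ring)
    (fun l r => kl_ext fun x => by
      have := δ.leibniz l (r.ofConv x)
      simp only [smul_eq_mul] at this
      change δ (l * r.ofConv x) = δ l * r.ofConv x + l * δ (r.ofConv x)
      rw [this]; ring)
    (fun h r => rfl) ⟨b, hb⟩
  obtain ⟨y, hy⟩ := this
  have hy' : (y : KL F H L) = toConv (δ.toLinearMap ∘ₗ b.ofConv) := hy
  rw [← hy']
  exact y.2

end KL
end EW

namespace EW
open Coalgebra WithConv

lemma field_trivial {F K : Type} [Field F] [IsAlgClosed F] [Field K] [Algebra F K]
    [Algebra.EssFiniteType F K] (h : ∀ δ : Derivation F K K, δ = 0) :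
    Function.Surjective (algebraMap F K) := by
  have h1 : Subsingleton (Ω[K⁄F]) := by
    refine ⟨fun a b => ?_⟩
    rw [← sub_eq_zero, ← Module.forall_dual_apply_eq_zero_iff K]
    intro φ
    have : φ = 0 := by
      apply (KaehlerDifferential.linearMapEquivDerivation F K (M := K)).injective
      rw [h (KaehlerDifferential.linearMapEquivDerivation F K φ), map_zero]
    rw [this]; rfl
  haveI : Algebra.FormallyUnramified F K := ⟨h1⟩
  haveI : Algebra.IsSeparable F K := (Algebra.FormallyUnramified.iff_isSeparable F K).1 inferInstance
  exact (IsAlgClosed.algebraMap_bijective_of_isIntegral (k := F) (K := K)).2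

section fod
variable {F : Type} [Field F] {H : Type} [Ring H] [HopfAlgebra F H] [FiniteDimensional F H]
  {L : Type} [Field L] [Algebra F L]

/-- reduced echelon basis -/
lemma echelon (B : Submodule L (KL F H L)) {d : ℕ} (e : Module.Basis (Fin d) F H) :
    ∃ (κ : Type) (_ : Fintype κ) (_ : DecidableEq κ) (a : κ → Fin d) (v : κ → KL F H L),
      (∀ i, v i ∈ B) ∧ (∀ i j, (v i).ofConv (e (a j)) = if i = j then 1 else 0) ∧
      (∀ b ∈ B, b = ∑ i, b.ofConv (e (a i)) • v i) := by
  classical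
  let ev : Fin d → Module.Dual L B := fun i => (klEval (e i)).comp B.subtype
  have hev : ∀ i b, ev i b = (b : KL F H L).ofConv (e i) := fun _ _ => rfl
  obtain ⟨κ, a, ha, hsp, hli⟩ := exists_linearIndependent' L ev
  haveI : Finite κ := Finite.of_injective a ha
  haveI := Fintype.ofFinite κ
  have hsep : ∀ b : B, (∀ i, ev i b = 0) → b = 0 := by
    intro b hb
    apply Subtype.ext
    apply WithConv.ext
    exact e.ext fun i => hb i
  have hsep' : ∀ b : B, (∀ i, ev (a i) b = 0) → b = 0 := by
    intro b hb
    apply hsep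
    intro i
    have h1 : ev i ∈ Submodule.span L (Set.range (ev ∘ a)) := by
      rw [hsp]; exact Submodule.subset_span ⟨i, rfl⟩
    have h2 : Submodule.span L (Set.range (ev ∘ a)) ≤ LinearMap.ker (Module.Dual.eval L B b) := by
      rw [Submodule.span_le]
      rintro _ ⟨i, rfl⟩
      exact hb i
    exact h2 h1
  let E : B →ₗ[L] (κ → L) := LinearMap.pi fun i => ev (a i)
  have hinj : Function.Injective E := by
    rw [injective_iff_map_eq_zero]
    intro b hb
    exact hsep' b fun i => congrFun hb i
  have hsurj : Function.Surjective E := by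
    refine (LinearMap.injective_iff_surjective_of_finrank_eq_finrank ?_).1 hinj
    apply le_antisymm
    · exact LinearMap.finrank_le_finrank_of_injective hinj
    · rw [Module.finrank_fintype_fun_eq_card, ← Subspace.dual_finrank_eq (K := L) (V := B)]
      exact hli.fintype_card_le_finrank
  choose v hv using fun i : κ => hsurj (Pi.single i 1)
  have hv' : ∀ i j, (v i : KL F H L).ofConv (e (a j)) = if i = j then 1 else 0 := by
    intro i j
    have := congrFun (hv i) j
    rw [Pi.single_apply] at this
    simp only [eq_comm (a := i)]
    exact this
  refine ⟨κ, inferInstance, inferInstance, a, fun i => v i, fun i => (v i).2, hv', ?_⟩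
  intro b hb
  have : (⟨b, hb⟩ : B) = ∑ i, b.ofConv (e (a i)) • v i := by
    apply hinj
    rw [map_sum]
    funext j
    simp only [map_smul, hv]
    simp [Finset.sum_apply, Pi.single_apply]
    rfl
  have := congrArg Subtype.val this
  simpa using this

variable {K : Type} [Field K] [Algebra F K]  [Algebra K L] [IsScalarTower F K L]

noncomputable def klMap : KL F H K →+* KL F H L where
  toFun f := toConv ((IsScalarTower.toAlgHom F K L).toLinearMap ∘ₗ f.ofConv)
  map_zero' := kl_ext fun x => by simp
  map_add' f g := kl_ext fun x => by simp
  map_one' := kl_ext fun x => by simp [← IsScalarTower.algebraMap_apply]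
  map_mul' f g := kl_ext fun x => by
    simp only [kl_mul, ofConv_toConv, LinearMap.comp_apply, map_sum]
    simp

lemma klMap_apply (f : KL F H K) (x : H) :
    (klMap (L := L) f).ofConv x = algebraMap K L (f.ofConv x) := rfl

lemma klMap_inj : Function.Injective (klMap : KL F H K →+* KL F H L) := by
  intro f g h
  refine kl_ext fun x => (algebraMap K L).injective ?_
  rw [← klMap_apply, h, klMap_apply]

noncomputable def klRes (B : Subalgebra L (KL F H L)) : Subalgebra K (KL F H K) where
  carrier := {f | klMap f ∈ B}
  mul_mem' := fun {a b} ha hb => by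
    change klMap (a * b) ∈ B
    rw [map_mul]; exact B.mul_mem ha hb
  add_mem' := fun {a b} ha hb => by
    change klMap (a + b) ∈ B
    rw [map_add]; exact B.add_mem ha hb
  algebraMap_mem' := fun r => by
    change klMap _ ∈ B
    have : klMap (algebraMap K (KL F H K) r) = algebraMap L (KL F H L) (algebraMap K L r) := by
      refine kl_ext fun x => ?_
      rw [klMap_apply, kl_algebraMap, kl_algebraMap]
      simp [Algebra.smul_def, ← IsScalarTower.algebraMap_apply]
    rw [this]; exact B.algebraMap_mem _

/-- field of definition -/
lemma fod [IsAlgClosed F] (Λ : H) (hΛ0 : ∀ x, x * Λ = counit (R := F) x • Λ)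
    (hΛ : ∀ x, Λ * x = counit (R := F) x • Λ) (hΛ1 : counit (R := F) Λ = 1)
    (lam : H →ₗ[F] F) (hlam1 : lam 1 = 1)
    (hlam : ∀ h : H, (TensorProduct.lid F H) ((LinearMap.rTensor H lam) (comul h)) = lam h • 1)
    (B : Subalgebra L (KL F H L)) (hcomm : ∀ x ∈ B, ∀ y ∈ B, x * y = y * x)
    (hst : ∀ h, ∀ f ∈ B, klActFun h f ∈ B)
    (hnd : ∀ b ∈ B, (∀ c ∈ B, (b * c).ofConv Λ = 0) → b = 0) :
    ∃ (κ : Type) (_ : Fintype κ) (v : κ → (H →ₗ[F] F)) (x : κ → H),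
      (∀ i, (toConv (Algebra.linearMap F L ∘ₗ v i) : KL F H L) ∈ B) ∧
      ∀ b ∈ B, b = ∑ i, b.ofConv (x i) • (toConv (Algebra.linearMap F L ∘ₗ v i) : KL F H L) := by
  classical
  let e := Module.finBasis F H
  obtain ⟨κ, _, _, a, v, hvB, hve, hvs⟩ := echelon (Subalgebra.toSubmodule B) e
  let S : Set L := Set.range fun p : κ × Fin (Module.finrank F H) => (v p.1).ofConv (e p.2)
  let K := IntermediateField.adjoin F S
  have hS : S.Finite := Set.finite_range _
  haveI : Algebra.EssFiniteType F K := by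
    rw [IntermediateField.essFiniteType_iff]
    exact ⟨hS.toFinset, by simp [K]⟩
  have hvK : ∀ i s, (v i).ofConv (e s) ∈ K := fun i s =>
    IntermediateField.subset_adjoin F S ⟨(i, s), rfl⟩
  have hvK' : ∀ i h, (v i).ofConv h ∈ K := by
    intro i h
    rw [← e.sum_repr h, map_sum]
    refine sum_mem fun s _ => ?_
    rw [map_smul, Algebra.smul_def]
    exact mul_mem (K.algebraMap_mem _) (hvK i s)
  let v0 : κ → KL F H K := fun i => toConv
    (LinearMap.codRestrict (Subalgebra.toSubmodule K.toSubalgebra) (v i).ofConv (hvK' i))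
  have hv0 : ∀ i, klMap (v0 i) = v i := fun i => rfl
  let B0 : Subalgebra K (KL F H K) := klRes B
  have hB0 : ∀ f, f ∈ B0 ↔ klMap f ∈ B := fun f => Iff.rfl
  have hder : ∀ δ : Derivation F K K, δ = 0 := by
    intro δ
    have h1 : ∀ i, (toConv (δ.toLinearMap ∘ₗ (v0 i).ofConv) : KL F H K) ∈ B0 := by
      intro i
      apply ML_KL Λ hΛ0 hΛ hΛ1 lam hlam1 hlam B0
      · intro x hx y hy
        apply klMap_inj (L := L)
        rw [map_mul, map_mul, hcomm _ hx _ hy]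
      · intro h f hf
        exact hst h _ hf
      · intro b hb hbc
        apply klMap_inj (L := L)
        rw [map_zero]
        apply hnd _ hb
        intro c hc
        rw [hvs c hc, Finset.mul_sum, ofConv_sum, LinearMap.sum_apply]
        refine Finset.sum_eq_zero fun i _ => ?_
        rw [mul_smul_comm, ofConv_smul, LinearMap.smul_apply, ← hv0, ← map_mul, klMap_apply, hbc, map_zero,
          smul_zero]
        rw [hB0, hv0]; exact hvB i
      · rw [hB0, hv0]; exact hvB i
    have h2 : ∀ i s, δ ⟨(v i).ofConv (e s), hvK i s⟩ = 0 := by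
      intro i s
      have h3 := hvs _ (h1 i)
      have h4 : (klMap (toConv (δ.toLinearMap ∘ₗ (v0 i).ofConv) : KL F H K) : KL F H L) = 0 := by
        rw [h3]
        refine Finset.sum_eq_zero fun l _ => ?_
        rw [klMap_apply]
        have h5 : (v0 i).ofConv (e (a l)) = if i = l then 1 else 0 := by
          apply Subtype.ext
          change (v i).ofConv (e (a l)) = _
          rw [hve]; split_ifs <;> rfl
        have h6 : (δ.toLinearMap ∘ₗ (v0 i).ofConv) (e (a l)) = 0 := by
          rw [LinearMap.comp_apply, h5]
          change δ _ = 0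
          split_ifs <;> simp
        rw [ofConv_toConv, h6, map_zero, zero_smul]
      have h7 : (toConv (δ.toLinearMap ∘ₗ (v0 i).ofConv) : KL F H K) = 0 := by
        apply klMap_inj (L := L)
        rw [h4, map_zero]
      exact LinearMap.congr_fun (congrArg WithConv.ofConv h7) (e s)
    ext ⟨x, hx⟩
    congr 1
    change δ ⟨x, hx⟩ = 0
    induction hx using IntermediateField.adjoin_induction with
    | mem x hx =>
      obtain ⟨⟨i, s⟩, rfl⟩ := hx
      exact h2 i s
    | algebraMap x => exact δ.map_algebraMap x
    | add x y hx hy h1 h2 =>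
      have := δ.map_add ⟨x, hx⟩ ⟨y, hy⟩
      rw [h1, h2, add_zero] at this
      exact this
    | inv x hx h1 =>
      have := δ.leibniz_inv ⟨x, hx⟩
      rw [h1, smul_zero] at this
      exact this
    | mul x y hx hy h1 h2 =>
      have := δ.leibniz ⟨x, hx⟩ ⟨y, hy⟩
      rw [h1, h2, smul_zero, smul_zero, add_zero] at this
      exact this
  have hsurj := field_trivial hder
  have hbij : Function.Bijective (algebraMap F K) := ⟨(algebraMap F K).injective, hsurj⟩
  let eq : F ≃ₐ[F] K := AlgEquiv.ofBijective (Algebra.ofId F K) hbij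
  let u : κ → (H →ₗ[F] F) := fun i => eq.symm.toLinearMap ∘ₗ (v0 i).ofConv
  have hu : ∀ i, (toConv (Algebra.linearMap F L ∘ₗ u i) : KL F H L) = v i := by
    intro i
    refine kl_ext fun x => ?_
    change algebraMap F L (eq.symm ((v0 i).ofConv x)) = _
    rw [IsScalarTower.algebraMap_apply F K L]
    have : algebraMap F K (eq.symm ((v0 i).ofConv x)) = (v0 i).ofConv x :=
      eq.apply_symm_apply _
    rw [this]; rfl
  refine ⟨κ, inferInstance, u, fun i => e (a i), fun i => ?_, fun b hb => ?_⟩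
  · rw [hu]; exact hvB i
  · simp only [hu]; exact hvs b hb
end fod
end EW

namespace EW
open Coalgebra WithConv

section artin
variable {F : Type} [Field F] {H : Type} [Ring H] [HopfAlgebra F H]
  {A : Type} [DivisionRing A] [Algebra F A] (ha : HopfAction F H A)

def invF : Subfield A where
  carrier := {a | ∀ h, ha.act h a = counit (R := F) h • a}
  mul_mem' := fun {a b} h1 h2 h => by
    rw [act_of_invariant_left ha h a b h1, h2, mul_smul_comm]
  one_mem' := fun h => by rw [ha.act_one, Algebra.algebraMap_eq_smul_one]
  add_mem' := fun {a b} h1 h2 h => by rw [map_add, h1, h2, smul_add]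
  zero_mem' := fun h => by simp
  neg_mem' := fun {a} h1 h => by rw [map_neg, h1, smul_neg]
  inv_mem' := fun a h1 h => by
    by_cases h0 : a = 0
    · simp [h0]
    have := act_of_invariant_left ha h a a⁻¹ h1
    rw [mul_inv_cancel₀ h0, ha.act_one, Algebra.algebraMap_eq_smul_one] at this
    apply mul_left_cancel₀ h0
    rw [← this, mul_smul_comm, mul_inv_cancel₀ h0]

lemma mem_invF (a : A) : a ∈ invF ha ↔ ∀ h, ha.act h a = counit (R := F) h • a := Iff.rfl

lemma artin_li {ι : Type} (a : ι → A)
    (hli : ∀ (s : Finset ι) (c : ι → A), (∀ j ∈ s, c j ∈ invF ha) → ∑ j ∈ s, c j * a j = 0 →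
      ∀ j ∈ s, c j = 0) (s : Finset ι) :
    ∀ c : ι → A, (∀ h, ∑ j ∈ s, c j * ha.act h (a j) = 0) → ∀ j ∈ s, c j = 0 := by
  classical
  induction s using Finset.induction_on with
  | empty => intro c _ j hj; simp at hj
  | insert k s hk ih =>
    intro c hc
    by_cases hck : c k = 0
    · have h1 := ih c (fun h => by
        have := hc h
        rwa [Finset.sum_insert hk, hck, zero_mul, zero_add] at this)
      intro j hj
      rcases Finset.mem_insert.1 hj with rfl | hj
      · exact hck
      · exact h1 j hj
    exfalso
    let b : ι → A := fun j => (c k)⁻¹ * c j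
    have hbk : b k = 1 := inv_mul_cancel₀ hck
    have hb : ∀ h, ∑ j ∈ insert k s, b j * ha.act h (a j) = 0 := by
      intro h
      have := congrArg (fun x => (c k)⁻¹ * x) (hc h)
      simpa only [Finset.mul_sum, mul_zero, ← mul_assoc] using this
    have hg : ∀ g h, ∑ j ∈ insert k s, ha.act g (b j) * ha.act h (a j) = 0 := by
      intro g h
      simp only [← act_S1]
      rw [Finset.sum_comm]
      refine Finset.sum_eq_zero fun i _ => ?_
      rw [← map_sum]
      simp only [← ha.mul_act, hb, map_zero]
    have hinv : ∀ j ∈ insert k s, b j ∈ invF ha := by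
      intro j hj g
      rcases Finset.mem_insert.1 hj with rfl | hj
      · rw [hbk, ha.act_one, Algebra.algebraMap_eq_smul_one]
      have := ih (fun j => ha.act g (b j) - counit (R := F) g • b j) (fun h => by
        have h1 := hg g h
        have h2 := congrArg (fun x => counit (R := F) g • x) (hb h)
        simp only [Finset.smul_sum, smul_zero] at h2
        rw [← sub_eq_zero.2 (h1.trans h2.symm), ← Finset.sum_sub_distrib, Finset.sum_insert hk, hbk,
          ha.act_one, Algebra.algebraMap_eq_smul_one]
        simp [sub_mul]) j hj
      exact sub_eq_zero.1 this
    have h1 := hb 1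
    simp only [ha.one_act] at h1
    have := hli _ b hinv h1 k (Finset.mem_insert_self _ _)
    rw [hbk] at this
    exact one_ne_zero this

lemma artin_card [FiniteDimensional F H] {ι : Type} [Fintype ι] (a : ι → A)
    (hli : ∀ (s : Finset ι) (c : ι → A), (∀ j ∈ s, c j ∈ invF ha) → ∑ j ∈ s, c j * a j = 0 →
      ∀ j ∈ s, c j = 0) : Fintype.card ι ≤ Module.finrank F H := by
  let e := Module.finBasis F H
  have h1 : LinearIndependent A (fun (j : ι) (i : Fin (Module.finrank F H)) => ha.act (e i) (a j)) := by
    rw [Fintype.linearIndependent_iff]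
    intro c hc j
    apply artin_li ha a hli Finset.univ c _ j (Finset.mem_univ _)
    intro h
    have h2 : (∑ j, (LinearMap.mulLeft F (c j)) ∘ₗ ha.act.flip (a j)) = 0 := by
      apply e.ext
      intro i
      have := congrFun hc i
      simpa using this
    simpa using LinearMap.congr_fun h2 h
  have := h1.fintype_card_le_finrank
  simpa using this

end artin

section tens
variable {F : Type} [Field F] {H : Type} [Ring H] [HopfAlgebra F H]

lemma mem_tensorIdeal {κ : Type} [Fintype κ] (N : Submodule F H) (v : κ → (H →ₗ[F] F))
    (hN : ∀ h, (∀ i, v i h = 0) → h ∈ N) (X : H ⊗[F] H)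
    (hX : ∀ i j, LinearMap.mul' F F (TensorProduct.map (v i) (v j) X) = 0) :
    X ∈ tensorIdeal F H N := by
  classical
  let V : H →ₗ[F] (κ → F) := LinearMap.pi v
  obtain ⟨s, hs⟩ := LinearMap.exists_rightInverse_of_surjective V.rangeRestrict V.range_rangeRestrict
  obtain ⟨g, hg⟩ := LinearMap.exists_extend s
  let P : H →ₗ[F] H := g ∘ₗ V
  have hP : ∀ x, x - P x ∈ N := by
    intro x
    apply hN
    have h1 : P x = s (V.rangeRestrict x) := LinearMap.congr_fun hg (V.rangeRestrict x)
    have h2 : V (P x) = V x := by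
      rw [h1]
      exact congrArg Subtype.val (LinearMap.congr_fun hs (V.rangeRestrict x))
    intro i
    rw [map_sub, sub_eq_zero]
    exact (congrFun h2 i).symm
  have h1 : ∀ Y : H ⊗[F] H, Y - TensorProduct.map P P Y ∈ tensorIdeal F H N := by
    intro Y
    induction Y using TensorProduct.induction_on with
    | zero => simp
    | add x y hx hy =>
      rw [map_add, add_sub_add_comm]
      exact Submodule.add_mem _ hx hy
    | tmul x y =>
      have : x ⊗ₜ[F] y - TensorProduct.map P P (x ⊗ₜ[F] y) = (x - P x) ⊗ₜ y + (P x) ⊗ₜ (y - P y) := by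
        rw [TensorProduct.map_tmul, sub_tmul, tmul_sub]; abel
      rw [this]
      exact Submodule.add_mem _ (Submodule.subset_span (Or.inl ⟨_, hP x, y, rfl⟩))
        (Submodule.subset_span (Or.inr ⟨_, _, hP y, rfl⟩))
  have h2 : ∀ Y : H ⊗[F] H, TensorProduct.map P P Y =
      ∑ i, ∑ j, LinearMap.mul' F F (TensorProduct.map (v i) (v j) Y) •
        (g (Pi.single i 1) ⊗ₜ[F] g (Pi.single j 1)) := by
    intro Y
    induction Y using TensorProduct.induction_on with
    | zero => simp
    | add x y hx hy => simp only [map_add, hx, hy, add_smul, Finset.sum_add_distrib]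
    | tmul x y =>
      have hPx : ∀ x, P x = ∑ i, v i x • g (Pi.single i 1) := by
        intro x
        change g (V x) = _
        rw [pi_eq_sum_univ (V x), map_sum]
        refine Finset.sum_congr rfl fun i _ => ?_
        rw [map_smul]
        congr 2
        funext j
        simp [Pi.single_apply, eq_comm]
      rw [TensorProduct.map_tmul, hPx x, hPx y, sum_tmul]
      simp only [tmul_sum, TensorProduct.map_tmul, LinearMap.mul'_apply, smul_tmul_smul]
  have := h1 X
  rw [h2] at this
  simpa [hX] using this

end tens

section EWfield
variable {F : Type} [Field F] [IsAlgClosed F] {H : Type} [Ring H] [HopfAlgebra F H]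
  [FiniteDimensional F H] {L : Type} [Field L] [Algebra F L] (ha : HopfAction F H L)

lemma finite_inv : Module.Finite (invF ha) L := by
  rw [← Module.rank_lt_aleph0_iff]
  refine lt_of_le_of_lt (rank_le (n := Module.finrank F H) ?_) Cardinal.natCast_lt_aleph0
  intro s hs
  have := artin_card ha (fun i : s => (i : L)) (by
    intro t c hc h0 j hj
    classical
    rw [linearIndependent_iff'] at hs
    have := hs t (fun j => if hj : c j ∈ invF ha then ⟨c j, hj⟩ else 0) (by
      rw [← h0]
      refine Finset.sum_congr rfl fun j hj => ?_
      simp only [hc j hj, dif_pos]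
      rfl) j hj
    simp only [hc j hj, dif_pos] at this
    exact congrArg Subtype.val this)
  simpa using this

noncomputable def rho : L →+* KL F H L where
  toFun a := toConv (ha.act.flip a)
  map_zero' := kl_ext fun x => by simp
  map_add' a b := kl_ext fun x => by simp
  map_one' := kl_ext fun x => by simp [ha.act_one]
  map_mul' a b := kl_ext fun x => by
    rw [kl_mul]
    exact act_mul_sum ha x a b

lemma rho_apply (a : L) (h : H) : (rho ha a).ofConv h = ha.act h a := rfl

noncomputable def rhoB : Subalgebra L (KL F H L) :=
  (Submodule.span L (Set.range (rho ha))).toSubalgebra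
    (Submodule.subset_span ⟨1, map_one _⟩)
    (by
      intro x y hx hy
      induction hx using Submodule.span_induction with
      | mem x hx =>
        obtain ⟨a, rfl⟩ := hx
        induction hy using Submodule.span_induction with
        | mem y hy =>
          obtain ⟨b, rfl⟩ := hy
          exact Submodule.subset_span ⟨a * b, map_mul _ _ _⟩
        | zero => simp
        | add x y _ _ hx hy => rw [mul_add]; exact Submodule.add_mem _ hx hy
        | smul c x _ hx => rw [mul_smul_comm]; exact Submodule.smul_mem _ _ hx
      | zero => simp
      | add x y _ _ hx hy => rw [add_mul]; exact Submodule.add_mem _ hx hy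
      | smul c x _ hx => rw [smul_mul_assoc]; exact Submodule.smul_mem _ _ hx)

lemma rhoB_ind {p : KL F H L → Prop} (h1 : ∀ a, p (rho ha a)) (h0 : p 0)
    (hadd : ∀ x y, p x → p y → p (x + y)) (hsm : ∀ (c : L) x, p x → p (c • x))
    (x : KL F H L) (hx : x ∈ rhoB ha) : p x := by
  have hx' : x ∈ Submodule.span L (Set.range (rho ha)) := hx
  clear hx
  induction hx' using Submodule.span_induction with
  | mem x hx => obtain ⟨a, rfl⟩ := hx; exact h1 a
  | zero => exact h0
  | add x y _ _ h1 h2 => exact hadd x y h1 h2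
  | smul c x _ h1 => exact hsm c x h1

lemma rho_mem (a : L) : rho ha a ∈ rhoB ha := Submodule.subset_span ⟨a, rfl⟩

lemma rhoB_comm (x : KL F H L) (hx : x ∈ rhoB ha) (y : KL F H L) (hy : y ∈ rhoB ha) :
    x * y = y * x := by
  refine rhoB_ind ha (p := fun x => x * y = y * x) ?_ (by simp)
    (fun x x' h h' => by rw [add_mul, mul_add, h, h'])
    (fun c x h => by rw [smul_mul_assoc, mul_smul_comm, h]) x hx
  intro a
  refine rhoB_ind ha (p := fun y => rho ha a * y = y * rho ha a) ?_ (by simp)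
    (fun x x' h h' => by rw [add_mul, mul_add, h, h'])
    (fun c x h => by rw [smul_mul_assoc, mul_smul_comm, h]) y hy
  intro b
  rw [← map_mul, ← map_mul, mul_comm]

lemma rhoB_stable (h : H) (x : KL F H L) (hx : x ∈ rhoB ha) : klActFun h x ∈ rhoB ha := by
  refine rhoB_ind ha (p := fun x => klActFun h x ∈ rhoB ha) ?_ (by simp)
    (fun x x' h h' => by rw [map_add]; exact add_mem h h')
    (fun c x hx => (rhoB ha).smul_mem hx c) x hx
  intro a
  have : klActFun h (rho ha a) = rho ha (ha.act h a) := kl_ext fun x => by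
    rw [klActFun_apply, rho_apply, rho_apply, ha.mul_act]
  rw [this]
  exact rho_mem ha _

lemma rhoB_nd (Λ : H) (hΛ0 : ∀ x, x * Λ = counit (R := F) x • Λ)
    (hΛ : ∀ x, Λ * x = counit (R := F) x • Λ) (hΛ1 : counit (R := F) Λ = 1)
    (b : KL F H L) (hb : b ∈ rhoB ha) (hbc : ∀ c ∈ rhoB ha, (b * c).ofConv Λ = 0) : b = 0 := by
  haveI := finite_inv ha
  let tr : L →ₗ[invF ha] invF ha :=
    { toFun := fun x => ⟨ha.act Λ x, fun h => by rw [← ha.mul_act, hΛ0]; simp⟩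
      map_add' := fun x y => Subtype.ext (by simp)
      map_smul' := fun c x => Subtype.ext (act_of_invariant_left ha Λ c.1 x c.2) }
  have htr : ∀ x, (tr x : L) = ha.act Λ x := fun _ => rfl
  obtain ⟨n, v, w, -, h2⟩ := exists_dual tr (by
    intro b hb
    by_contra h0
    have := congrArg Subtype.val (hb b⁻¹)
    rw [htr, mul_inv_cancel₀ h0, ha.act_one, hΛ1, map_one] at this
    exact one_ne_zero this)
  have hinv : ∀ (h : H) (r : L), ha.act Λ (ha.act h r) = counit (R := F) h • ha.act Λ r := by
    intro h r
    rw [← ha.mul_act, hΛ]; simp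
  have hadj : ∀ g (a b : L), ha.act Λ (ha.act g a * b) =
      ha.act Λ (a * ha.act (HopfAlgebra.antipode F g) b) := by
    intro g a b
    rw [← act_S1 ha g a b, map_sum]
    simp only [hinv]
    exact sum_left_counit (ha.act Λ ∘ₗ (LinearMap.mul F L a) ∘ₗ
      (ha.act.flip b) ∘ₗ (HopfAlgebra.antipode F)) g
  have key : ∀ h, b.ofConv h =
      ∑ j, (b * rho ha (ha.act (HopfAlgebra.antipode F h) (w j))).ofConv Λ * v j := by
    intro h
    refine rhoB_ind ha (p := fun b => b.ofConv h =
      ∑ j, (b * rho ha (ha.act (HopfAlgebra.antipode F h) (w j))).ofConv Λ * v j) ?_ (by simp)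
      (fun x x' h h' => by
        simp only [add_mul, ofConv_add, LinearMap.add_apply, Finset.sum_add_distrib]
        rw [← h, ← h'])
      (fun c x h => by
        simp only [smul_mul_assoc, ofConv_smul, LinearMap.smul_apply]
        rw [← Finset.smul_sum, ← h]) b hb
    intro a
    rw [rho_apply]
    conv_lhs => rw [h2 (ha.act h a)]
    refine Finset.sum_congr rfl fun j _ => ?_
    rw [← map_mul, rho_apply, ← hadj]
    rfl
  refine kl_ext fun h => ?_
  rw [key]
  simp [hbc _ (rho_mem ha _), -LinearMap.convMul_apply]

lemma mem_kernel {A : Type} [Ring A] [Algebra F A] (ha : HopfAction F H A) (h : H) :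
    h ∈ ha.actionKernel ↔ ∀ a, ha.act h a = 0 := by
  simp [ModAlgAction.actionKernel]

lemma EWfield [IsSemisimpleRing H] (hcss : IsCosemisimple F H) :
    (∀ h : H, (comul (R := F) h) - TensorProduct.comm F H H (comul (R := F) h)
      ∈ tensorIdeal F H ha.actionKernel) ∧
    ∀ h ∈ ha.actionKernel, comul (R := F) h ∈ tensorIdeal F H ha.actionKernel := by
  obtain ⟨Λ, hΛ0, hΛ, hΛ1⟩ := exists_integral (F := F) (H := H)
  obtain ⟨lam, hlam1, -, hlam⟩ := hcss
  obtain ⟨κ, _, v, x, hvB, hB⟩ := fod Λ hΛ0 hΛ hΛ1 lam hlam1 hlam (rhoB ha) (rhoB_comm ha)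
    (rhoB_stable ha) (rhoB_nd ha Λ hΛ0 hΛ hΛ1)
  have hN : ∀ h, (∀ i, v i h = 0) → h ∈ ha.actionKernel := by
    intro h hv
    rw [mem_kernel]
    intro a
    rw [← rho_apply, hB _ (rho_mem ha a)]
    simp [hv]
  have hN2 : ∀ h ∈ ha.actionKernel, ∀ b ∈ rhoB ha, b.ofConv h = 0 := by
    intro h hh b hb
    rw [mem_kernel] at hh
    refine rhoB_ind ha (p := fun b => b.ofConv h = 0) hh rfl
      (fun x y h1 h2 => by rw [ofConv_add, LinearMap.add_apply, h1, h2, add_zero])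
      (fun c x h1 => by rw [ofConv_smul, LinearMap.smul_apply, h1, smul_zero]) b hb
  have hvv : ∀ i j (X : H ⊗[F] H), LinearMap.mul' F L (TensorProduct.map
      (Algebra.linearMap F L ∘ₗ v i) (Algebra.linearMap F L ∘ₗ v j) X) =
        algebraMap F L (LinearMap.mul' F F (TensorProduct.map (v i) (v j) X)) := by
    intro i j X
    induction X using TensorProduct.induction_on with
    | zero => simp
    | add x y hx hy => simp only [map_add, hx, hy]
    | tmul x y => simp
  have hsw : ∀ i j (X : H ⊗[F] H), LinearMap.mul' F F (TensorProduct.map (v i) (v j)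
      (TensorProduct.comm F H H X)) = LinearMap.mul' F F (TensorProduct.map (v j) (v i) X) := by
    intro i j X
    induction X using TensorProduct.induction_on with
    | zero => simp
    | add x y hx hy => simp only [map_add, hx, hy]
    | tmul x y => simp [mul_comm]
  refine ⟨fun h => mem_tensorIdeal _ v hN _ fun i j => ?_,
    fun h hh => mem_tensorIdeal _ v hN _ fun i j => ?_⟩
  · rw [map_sub, map_sub, sub_eq_zero, hsw]
    apply (algebraMap F L).injective
    rw [← hvv, ← hvv]
    exact LinearMap.congr_fun (congrArg WithConv.ofConv (rhoB_comm ha _ (hvB i) _ (hvB j))) h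
  · apply (algebraMap F L).injective
    rw [← hvv, map_zero]
    exact hN2 h hh _ ((rhoB ha).mul_mem (hvB i) (hvB j))
end EWfield
end EW

namespace EW
open Coalgebra WithConv

section divalg
variable {F : Type} [Field F] {H : Type} [Ring H] [HopfAlgebra F H]
  [FiniteDimensional F H] {D : Type} [DivisionRing D] [Algebra F D] (ha : HopfAction F H D)

noncomputable abbrev centerField (F D : Type) [Field F] [DivisionRing D] [Algebra F D] :
    Field (Subalgebra.center F D) :=
  { (inferInstance : CommRing (Subalgebra.center F D)) with
    inv := fun z => ⟨(z : D)⁻¹, by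
      rw [Subalgebra.mem_center_iff]
      intro b
      by_cases hz : (z : D) = 0
      · simp [hz]
      have := Subalgebra.mem_center_iff.1 z.2 b
      have h2 : (z : D) * b = b * z := this.symm
      exact ((Commute.inv_left₀ (a := (z : D)) (b := b) h2).eq).symm⟩
    exists_pair_ne := ⟨0, 1, fun h => zero_ne_one (congrArg Subtype.val h)⟩
    mul_inv_cancel := fun z hz => Subtype.ext (mul_inv_cancel₀ fun h => hz (Subtype.ext h))
    inv_zero := Subtype.ext inv_zero
    nnqsmul := _
    nnqsmul_def := fun _ _ => rfl
    qsmul := _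
    qsmul_def := fun _ _ => rfl }

noncomputable abbrev centerAlg (F D : Type) [Field F] [DivisionRing D] [Algebra F D] :
    Algebra (Subalgebra.center F D) D :=
  Algebra.ofModule (fun r x y => by rw [Subalgebra.smul_def, Subalgebra.smul_def, smul_mul_assoc])
    (fun r x y => by
      rw [Subalgebra.smul_def, Subalgebra.smul_def, smul_eq_mul, smul_eq_mul, ← mul_assoc,
        Subalgebra.mem_center_iff.1 r.2 x, mul_assoc])

attribute [local instance] centerAlg

lemma adjoin_top (d m : ℕ) (hd : Module.finrank F H = d) (hm0 : m ≠ 0)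
    (hm : Module.finrank (Subalgebra.center F D) D = m ^ 2)
    (hcop : Nat.Coprime d.factorial m) :
    Algebra.adjoin (Subalgebra.center F D) (invF ha : Set D) = ⊤ := by
  letI : Field (Subalgebra.center F D) := centerField F D
  haveI : Module.Finite (Subalgebra.center F D) D :=
    Module.finite_of_finrank_pos (by rw [hm]; positivity)
  let D' := Algebra.adjoin (Subalgebra.center F D) (invF ha : Set D)
  letI : DivisionRing D' := divisionRingOfFiniteDimensional (Subalgebra.center F D) D'
  have hle : Module.finrank D' D ≤ d := by
    refine Module.finrank_le_of_rank_le (rank_le (n := d) ?_)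
    intro s hs
    have := artin_card ha (fun i : s => (i : D)) (by
      intro t c hc h0 j hj
      classical
      rw [linearIndependent_iff'] at hs
      have := hs t (fun j => if hj : c j ∈ invF ha then ⟨c j, Algebra.subset_adjoin hj⟩ else 0) (by
        rw [← h0]
        refine Finset.sum_congr rfl fun j hj => ?_
        simp only [hc j hj, dif_pos]
        rfl) j hj
      simp only [hc j hj, dif_pos] at this
      exact congrArg Subtype.val this)
    rw [hd] at this
    simpa using this
  haveI : Module.Finite D' D := Module.Finite.of_restrictScalars_finite (Subalgebra.center F D) D' D
  have hpos : 0 < Module.finrank D' D := Module.finrank_pos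
  have hdvd : Module.finrank D' D ∣ m ^ 2 := by
    rw [← hm, ← Module.finrank_mul_finrank (Subalgebra.center F D) D' D]
    exact dvd_mul_left _ _
  have h1 : Module.finrank D' D = 1 := by
    refine Nat.eq_one_of_dvd_coprimes (hcop.pow_right 2) (Nat.dvd_factorial hpos hle) hdvd
  rw [finrank_eq_one_iff_of_nonzero' (1 : D) one_ne_zero] at h1
  rw [eq_top_iff]
  intro x _
  obtain ⟨c, hc⟩ := h1 x
  rw [← hc, Subalgebra.smul_def, smul_eq_mul, mul_one]
  exact c.2

lemma span_inv (hT : Algebra.adjoin (Subalgebra.center F D) (invF ha : Set D) = ⊤) :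
    Submodule.span (Subalgebra.center F D) (invF ha : Set D) = ⊤ := by
  have := Algebra.adjoin_eq_span (Subalgebra.center F D) (invF ha : Set D)
  rw [hT] at this
  have h2 : (Submonoid.closure (invF ha : Set D) : Set D) = (invF ha : Set D) :=
    congrArg SetLike.coe (Submonoid.closure_eq (invF ha).toSubmonoid)
  rw [h2] at this
  rw [← this, Algebra.top_toSubmodule]

lemma act_center (hT : Algebra.adjoin (Subalgebra.center F D) (invF ha : Set D) = ⊤)
    (h : H) (z : D) (hz : z ∈ Subalgebra.center F D) : ha.act h z ∈ Subalgebra.center F D := by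
  rw [Subalgebra.mem_center_iff] at hz ⊢
  intro b
  have hb : b ∈ Submodule.span (Subalgebra.center F D) (invF ha : Set D) := by
    rw [span_inv ha hT]; trivial
  induction hb using Submodule.span_induction with
  | mem e he =>
    rw [← act_of_invariant_left ha h e z he, ← act_of_invariant_right ha h z e he, hz]
  | zero => simp
  | add x y _ _ hx hy => rw [add_mul, mul_add, hx, hy]
  | smul c x _ hx => rw [smul_mul_assoc, mul_smul_comm, hx]

noncomputable def haZ (hT : Algebra.adjoin (Subalgebra.center F D) (invF ha : Set D) = ⊤) :
    HopfAction F H (Subalgebra.center F D) where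
  act := LinearMap.mk₂ F (fun h z => ⟨ha.act h z, act_center ha hT h z z.2⟩)
    (fun _ _ _ => Subtype.ext (by simp)) (fun _ _ _ => Subtype.ext (by simp))
    (fun _ _ _ => Subtype.ext (by simp)) (fun _ _ _ => Subtype.ext (by simp))
  one_act a := Subtype.ext (ha.one_act a)
  mul_act g h a := Subtype.ext (ha.mul_act g h a)
  act_one h := Subtype.ext (ha.act_one h)
  act_mul h a b := Subtype.ext (by
    change ha.act h (a * b) = _
    rw [act_mul_sum]
    conv_rhs => rw [← (ℛ F h).eq]
    simp [map_sum])

lemma haZ_act (hT : Algebra.adjoin (Subalgebra.center F D) (invF ha : Set D) = ⊤) (h : H)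
    (z : Subalgebra.center F D) : ((haZ ha hT).act h z : D) = ha.act h z := rfl

lemma haZ_kernel (hT : Algebra.adjoin (Subalgebra.center F D) (invF ha : Set D) = ⊤) :
    (haZ ha hT).actionKernel = ha.actionKernel := by
  ext h
  simp only [ModAlgAction.actionKernel, Submodule.mem_iInf, LinearMap.mem_ker, LinearMap.flip_apply]
  constructor
  · intro hh b
    have hb : b ∈ Submodule.span (Subalgebra.center F D) (invF ha : Set D) := by
      rw [span_inv ha hT]; trivial
    rw [Submodule.mem_span_set'] at hb
    obtain ⟨n, f, g, rfl⟩ := hb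
    rw [map_sum]
    refine Finset.sum_eq_zero fun i _ => ?_
    rw [Subalgebra.smul_def, smul_eq_mul, act_of_invariant_right ha h _ _ (g i).2, ← haZ_act ha hT,
      hh]
    simp
  · intro hh z
    exact Subtype.ext (hh z)

lemma EWdiv [IsAlgClosed F] [IsSemisimpleRing H] (hcss : IsCosemisimple F H)
    (d m : ℕ) (hd : Module.finrank F H = d) (hm0 : m ≠ 0)
    (hm : Module.finrank (Subalgebra.center F D) D = m ^ 2)
    (hcop : Nat.Coprime d.factorial m) :
    (∀ h : H, (comul (R := F) h) - TensorProduct.comm F H H (comul (R := F) h)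
      ∈ tensorIdeal F H ha.actionKernel) ∧
    ∀ h ∈ ha.actionKernel, comul (R := F) h ∈ tensorIdeal F H ha.actionKernel := by
  have hT := adjoin_top ha d m hd hm0 hm hcop
  rw [← haZ_kernel ha hT]
  letI : Field (Subalgebra.center F D) := centerField F D
  exact EWfield (haZ ha hT) hcss
end divalg

section hopfideal
variable {F : Type} [Field F] {H : Type} [Ring H] [HopfAlgebra F H]

lemma triv_dim (h1 : Module.finrank F H ≤ 1) [FiniteDimensional F H] (h : H) :
    TensorProduct.comm F H H (comul (R := F) h) = comul (R := F) h := by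
  haveI : Nontrivial H := by
    refine ⟨0, 1, fun h => ?_⟩
    have := congrArg (counit (R := F)) h
    simp at this
  have h2 : Module.finrank F H = 1 := le_antisymm h1 Module.finrank_pos
  rw [finrank_eq_one_iff_of_nonzero' (1 : H) one_ne_zero] at h2
  obtain ⟨c, rfl⟩ := h2 h
  simp [Algebra.TensorProduct.one_def]

noncomputable def can : H ⊗[F] H →ₗ[F] H ⊗[F] H :=
  TensorProduct.lift (LinearMap.mk₂ F (fun g h => (g ⊗ₜ[F] (1 : H)) * comul (R := F) h)
    (fun _ _ _ => by simp [add_tmul, add_mul]) (fun _ _ _ => by simp [← smul_tmul'])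
    (fun _ _ _ => by simp [mul_add]) (fun _ _ _ => by simp))

lemma can_tmul (g h : H) : can (g ⊗ₜ[F] h) = (g ⊗ₜ[F] (1 : H)) * comul (R := F) h := rfl

lemma can_inv (g h : H) : can (∑ i ∈ (ℛ F h).index,
    (g * HopfAlgebra.antipode F ((ℛ F h).left i)) ⊗ₜ[F] ((ℛ F h).right i)) = g ⊗ₜ[F] h := by
  have h0 : ∀ x y, can ((g * HopfAlgebra.antipode F x) ⊗ₜ[F] y) = ∑ j ∈ (ℛ F y).index,
      (g * HopfAlgebra.antipode F x * (ℛ F y).left j) ⊗ₜ[F] (ℛ F y).right j := by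
    intro x y
    rw [can_tmul]
    conv_lhs => rw [← (ℛ F y).eq]
    simp [Finset.mul_sum]
  rw [map_sum]
  simp only [h0]
  rw [← coassoc_sum (fun x y z => (g * HopfAlgebra.antipode F x * y) ⊗ₜ[F] z)]
  · simp only [mul_assoc, ← sum_tmul, ← Finset.mul_sum, HopfAlgebra.sum_antipode_mul_eq_smul]
    have := sum_left_counit ((TensorProduct.mk F H H) g) h
    simpa [smul_tmul] using this
  all_goals simp [add_mul, mul_add, add_tmul, tmul_add, smul_tmul']

lemma tensorIdeal_map (N : Submodule F H) (hN : ∀ x ∈ N, ∀ h : H, h * x ∈ N ∧ x * h ∈ N)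
    (hΔ : ∀ x ∈ N, comul (R := F) x ∈ tensorIdeal F H N) (X : H ⊗[F] H)
    (hX : X ∈ tensorIdeal F H N) : can X ∈ tensorIdeal F H N := by
  have hl : ∀ (g : H) (Y : H ⊗[F] H), Y ∈ tensorIdeal F H N →
      (g ⊗ₜ[F] (1 : H)) * Y ∈ tensorIdeal F H N := by
    intro g Y hY
    induction hY using Submodule.span_induction with
    | mem y hy =>
      rcases hy with ⟨a, haN, b, rfl⟩ | ⟨a, b, hb, rfl⟩
      · rw [Algebra.TensorProduct.tmul_mul_tmul]
        exact Submodule.subset_span (Or.inl ⟨_, (hN a haN g).1, _, rfl⟩)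
      · rw [Algebra.TensorProduct.tmul_mul_tmul, one_mul]
        exact Submodule.subset_span (Or.inr ⟨_, _, hb, rfl⟩)
    | zero => simp
    | add x y _ _ hx hy => rw [mul_add]; exact Submodule.add_mem _ hx hy
    | smul c x _ hx => rw [mul_smul_comm]; exact Submodule.smul_mem _ _ hx
  induction hX using Submodule.span_induction with
  | mem y hy =>
    rcases hy with ⟨a, haN, b, rfl⟩ | ⟨a, b, hb, rfl⟩
    · rw [can_tmul]
      conv => rw [← (ℛ F b).eq]
      rw [Finset.mul_sum]
      refine Submodule.sum_mem _ fun i _ => ?_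
      rw [Algebra.TensorProduct.tmul_mul_tmul]
      exact Submodule.subset_span (Or.inl ⟨_, (hN a haN _).2, _, rfl⟩)
    · rw [can_tmul]
      exact hl _ _ (hΔ b hb)
  | zero => simp
  | add x y _ _ hx hy => rw [map_add]; exact Submodule.add_mem _ hx hy
  | smul c x _ hx => rw [map_smul]; exact Submodule.smul_mem _ _ hx

lemma antipode_mem [FiniteDimensional F H] (N : Submodule F H)
    (hN : ∀ x ∈ N, ∀ h : H, h * x ∈ N ∧ x * h ∈ N)
    (hΔ : ∀ x ∈ N, comul (R := F) x ∈ tensorIdeal F H N)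
    (hε : ∀ x ∈ N, counit (R := F) x = 0) (h : H) (hh : h ∈ N) : HopfAlgebra.antipode F h ∈ N := by
  have hsurj : Function.Surjective (can (F := F) (H := H)) := by
    rw [← LinearMap.range_eq_top, eq_top_iff, ← TensorProduct.span_tmul_eq_top, Submodule.span_le]
    rintro _ ⟨g, h, rfl⟩
    exact ⟨_, can_inv g h⟩
  have hinj : Function.Injective (can (F := F) (H := H)) :=
    LinearMap.injective_iff_surjective.2 hsurj
  let R : tensorIdeal F H N →ₗ[F] tensorIdeal F H N := can.restrict (tensorIdeal_map N hN hΔ)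
  have hRinj : Function.Injective R := fun x y hxy =>
    Subtype.ext (hinj (congrArg Subtype.val hxy))
  have hRs := LinearMap.injective_iff_surjective.1 hRinj
  obtain ⟨Y, hY⟩ := hRs ⟨(1 : H) ⊗ₜ[F] h, Submodule.subset_span (Or.inr ⟨_, _, hh, rfl⟩)⟩
  have hY2 : can Y.1 = (1 : H) ⊗ₜ[F] h := congrArg Subtype.val hY
  rw [← can_inv] at hY2
  have hY3 := hinj hY2
  have hE : ∀ X ∈ tensorIdeal F H N,
      TensorProduct.rid F H (LinearMap.lTensor H (counit (R := F)) X) ∈ N := by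
    intro X hX
    induction hX using Submodule.span_induction with
    | mem y hy =>
      rcases hy with ⟨a, haN, b, rfl⟩ | ⟨a, b, hb, rfl⟩
      · simpa using N.smul_mem _ haN
      · simp [hε b hb]
    | zero => simp
    | add x y _ _ hx hy => rw [map_add, map_add]; exact Submodule.add_mem _ hx hy
    | smul c x _ hx => rw [map_smul, map_smul]; exact Submodule.smul_mem _ _ hx
  have := hE _ Y.2
  rw [hY3] at this
  have h2 := sum_right_counit (HopfAlgebra.antipode F) h
  rw [map_sum, map_sum] at this
  simp only [LinearMap.lTensor_tmul, TensorProduct.rid_tmul, one_mul] at this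
  rwa [h2] at this

lemma tensorIdeal_bot : tensorIdeal F H (⊥ : Submodule F H) = ⊥ := by
  rw [eq_bot_iff, tensorIdeal, Submodule.span_le]
  rintro _ (⟨a, haN, b, rfl⟩ | ⟨a, b, hb, rfl⟩)
  · rw [Submodule.mem_bot] at haN; simp [haN]
  · rw [Submodule.mem_bot] at hb; simp [hb]

lemma kernel_hopf [FiniteDimensional F H] {A : Type} [Ring A] [Nontrivial A] [Algebra F A]
    (ha : HopfAction F H A)
    (hΔ : ∀ h ∈ ha.actionKernel, comul (R := F) h ∈ tensorIdeal F H ha.actionKernel) :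
    IsHopfIdeal F H ha.actionKernel := by
  have hk : ∀ h, h ∈ ha.actionKernel ↔ ∀ a, ha.act h a = 0 := fun h => by
    simp [ModAlgAction.actionKernel]
  have h1 : ∀ x ∈ ha.actionKernel, ∀ h : H,
      h * x ∈ ha.actionKernel ∧ x * h ∈ ha.actionKernel := by
    intro x hx h
    rw [hk] at hx
    simp only [hk, ha.mul_act, hx, map_zero, implies_true, and_self]
  have h2 : ∀ x ∈ ha.actionKernel, counit (R := F) x = 0 := by
    intro x hx
    have := (hk x).1 hx 1
    rw [ha.act_one] at this
    exact (algebraMap F A).injective (this.trans (map_zero _).symm)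
  exact ⟨h1, hΔ, h2, fun x hx => antipode_mem _ h1 hΔ h2 x hx⟩
end hopfideal
end EW

/-- Let `H` be a semisimple cosemisimple Hopf algebra of dimension `d` over an
algebraically closed field `F` and `D` a division algebra over `F` of degree `m` with
`gcd(d!, m) = 1`.  Then any action of `H` on `D` factors through an action of a
cocommutative Hopf algebra (the quotient of `H` by the kernel of the action is
cocommutative); in particular if the action is inner faithful then `H` is cocommutative. -/
theorem action_on_division_algebra_factors_through_cocommutative
    (F : Type) [Field F] [IsAlgClosed F]
    (H : Type) [Ring H] [HopfAlgebra F H] [FiniteDimensional F H]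
    [IsSemisimpleRing H] (hcss : IsCosemisimple F H)
    (D : Type) [DivisionRing D] [Algebra F D]
    (d m : ℕ) (hd : Module.finrank F H = d)
    (hm : Module.finrank (Subalgebra.center F D) D = m ^ 2)
    (hcop : Nat.Coprime d.factorial m)
    (ha : HopfAction F H D) :
    (∀ h : H,
      Coalgebra.comul (R := F) h - (TensorProduct.comm F H H) (Coalgebra.comul (R := F) h)
        ∈ tensorIdeal F H ha.actionKernel) ∧
    (ha.InnerFaithful → ∀ h : H,
      (TensorProduct.comm F H H) (Coalgebra.comul (R := F) h) = Coalgebra.comul (R := F) h) := by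
  by_cases hm0 : m = 0
  · have h1 : Module.finrank F H ≤ 1 := by
      rw [hm0, Nat.coprime_zero_right, Nat.factorial_eq_one] at hcop
      omega
    refine ⟨fun h => ?_, fun _ h => EW.triv_dim h1 h⟩
    rw [EW.triv_dim h1 h, sub_self]
    exact Submodule.zero_mem _
  obtain ⟨h1, h2⟩ := EW.EWdiv ha hcss d m hd hm0 hm hcop
  refine ⟨h1, fun hf h => ?_⟩
  have hb : ha.actionKernel = ⊥ := hf _ (EW.kernel_hopf ha h2) (fun x hx a => by
    simp only [ModAlgAction.actionKernel, Submodule.mem_iInf, LinearMap.mem_ker,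
      LinearMap.flip_apply] at hx
    exact hx a)
  have h3 := h1 h
  rw [hb, EW.tensorIdeal_bot, Submodule.mem_bot, sub_eq_zero] at h3
  exact h3.symm
end

section
/- Let H be a semisimple Hopf algebra over k (hence also cosemisimple), let R be a finitely generated subring of k carrying a Hopf R-order H_R of H, and for a prime p let H_p = H_R ⊗_R F̄_p via a ring homomorphism ψ: R → F̄_p. Then for all sufficiently large primes p, the Hopf algebra H_p over F̄_p is semisimple and cosemisimple. -/
open TensorProduct

noncomputable def bcComul (R S H : Type) [CommRing R] [CommRing S] [Algebra R S]
    [AddCommGroup H] [Module R H] (comul : H →ₗ[R] H ⊗[R] H) :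
    S ⊗[R] H →ₗ[S] (S ⊗[R] H) ⊗[S] (S ⊗[R] H) :=
  (TensorProduct.AlgebraTensorModule.distribBaseChange R S H H).toLinearMap ∘ₗ
    comul.baseChange S

noncomputable def bcCounit (R S H : Type) [CommRing R] [CommRing S] [Algebra R S]
    [AddCommGroup H] [Module R H] (counit : H →ₗ[R] R) :
    S ⊗[R] H →ₗ[S] S :=
  (TensorProduct.AlgebraTensorModule.rid R S S).toLinearMap ∘ₗ counit.baseChange S


/-- The natural map `M ⊗[R] M → H ⊗[k] H` induced by an `R`-linear map `ι : M → H`,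
where `R → k`. -/
noncomputable def ordTensor (R k : Type) [CommRing R] [CommRing k] [Algebra R k]
    (H : Type) [AddCommGroup H] [Module k H] [Module R H] [IsScalarTower R k H]
    (M : Type) [AddCommGroup M] [Module R M] (ι : M →ₗ[R] H) :
    M ⊗[R] M →ₗ[R] H ⊗[k] H :=
  TensorProduct.lift (LinearMap.mk₂ R (fun x y => ι x ⊗ₜ[k] ι y)
    (fun x x' y => by simp [map_add, TensorProduct.add_tmul])
    (fun r x y => by
      show ι (r • x) ⊗ₜ[k] ι y = r • (ι x ⊗ₜ[k] ι y)
      rw [map_smul, ← algebraMap_smul k r (ι x), TensorProduct.smul_tmul',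
        algebraMap_smul])
    (fun x y y' => by simp [map_add, TensorProduct.tmul_add])
    (fun r x y => by
      show ι x ⊗ₜ[k] ι (r • y) = r • (ι x ⊗ₜ[k] ι y)
      rw [map_smul, ← algebraMap_smul k r (ι y), TensorProduct.tmul_smul,
        algebraMap_smul]))

section Part1
open Coalgebra HopfAlgebra

section SweedlerBasics
variable (k : Type) {H : Type} [CommRing k] [Ring H] [HopfAlgebra k H]

/-- index set of a Sweedler sum -/
noncomputable def sw (h : H) : Finset (H × H) := (Coalgebra.Repr.arbitrary k h).index

lemma sw_eq (h : H) : ∑ p ∈ sw k h, p.1 ⊗ₜ[k] p.2 = comul (R := k) h :=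
  (Coalgebra.Repr.arbitrary k h).eq

variable {k}
lemma sw_map {M : Type} [AddCommGroup M] [Module k M] (F : H ⊗[k] H →ₗ[k] M) (h : H) :
    F (comul (R := k) h) = ∑ p ∈ sw k h, F (p.1 ⊗ₜ[k] p.2) := by
  rw [← sw_eq, map_sum]

variable (k)
lemma sw_counit_left (h : H) : ∑ p ∈ sw k h, counit (R := k) p.1 • p.2 = h :=
  sum_counit_smul (Coalgebra.Repr.arbitrary k h)

lemma sw_counit_right (h : H) : ∑ p ∈ sw k h, counit (R := k) p.2 • p.1 = h := by
  have := sum_tmul_counit_eq (Coalgebra.Repr.arbitrary k h)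
  apply_fun (TensorProduct.rid k H) at this
  simp only [map_sum, TensorProduct.rid_tmul, one_smul] at this
  exact this

lemma sw_coassoc (h : H) :
    ∑ p ∈ sw k h, ∑ q ∈ sw k p.1, q.1 ⊗ₜ[k] (q.2 ⊗ₜ[k] p.2) =
    ∑ p ∈ sw k h, ∑ q ∈ sw k p.2, p.1 ⊗ₜ[k] (q.1 ⊗ₜ[k] q.2) :=
  sum_tmul_tmul_eq (Coalgebra.Repr.arbitrary k h) (fun i => Coalgebra.Repr.arbitrary k i.1)
    (fun i => Coalgebra.Repr.arbitrary k i.2)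

lemma sw_S_left (h : H) : ∑ p ∈ sw k h, antipode k p.1 * p.2 = counit (R := k) h • (1 : H) :=
  sum_antipode_mul_eq_smul (Coalgebra.Repr.arbitrary k h)

lemma sw_S_right (h : H) : ∑ p ∈ sw k h, p.1 * antipode k p.2 = counit (R := k) h • (1 : H) :=
  sum_mul_antipode_eq_smul (Coalgebra.Repr.arbitrary k h)

lemma sw_mul (a b : H) : comul (R := k) (a * b) =
    ∑ p ∈ sw k a, ∑ q ∈ sw k b, (p.1 * q.1) ⊗ₜ[k] (p.2 * q.2) := by
  rw [Bialgebra.comul_mul, ← sw_eq k a, ← sw_eq k b, Finset.sum_mul_sum]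
  simp

variable {k}
/-- if `M (h₁ ⊗ h₂) = ε h`, then `M (h₁ ⊗ h₂) ⊗ h₃ = 1 ⊗ h` -/
lemma sw_cancel_left (M : H ⊗[k] H →ₗ[k] H)
    (hM : ∀ h : H, ∑ p ∈ sw k h, M (p.1 ⊗ₜ p.2) = counit (R := k) h • (1 : H)) (h : H) :
    ∑ p ∈ sw k h, ∑ q ∈ sw k p.2, M (p.1 ⊗ₜ q.1) ⊗ₜ[k] q.2 = 1 ⊗ₜ[k] h := by
  have := congr((TensorProduct.map M LinearMap.id ∘ₗ
    (TensorProduct.assoc k H H H).symm.toLinearMap) $(sw_coassoc k h))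
  simp only [map_sum, LinearMap.comp_apply, LinearEquiv.coe_coe, TensorProduct.assoc_symm_tmul,
    TensorProduct.map_tmul, LinearMap.id_apply] at this
  rw [← this]
  simp_rw [← TensorProduct.sum_tmul, hM, TensorProduct.smul_tmul]
  rw [← TensorProduct.tmul_sum, sw_counit_left]

lemma sw_cancel_right (M : H ⊗[k] H →ₗ[k] H)
    (hM : ∀ h : H, ∑ p ∈ sw k h, M (p.1 ⊗ₜ p.2) = counit (R := k) h • (1 : H)) (h : H) :
    ∑ p ∈ sw k h, ∑ q ∈ sw k p.1, q.1 ⊗ₜ[k] M (q.2 ⊗ₜ p.2) = h ⊗ₜ[k] 1 := by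
  have := congr((TensorProduct.map LinearMap.id M) $(sw_coassoc k h))
  simp only [map_sum, TensorProduct.map_tmul, LinearMap.id_apply] at this
  rw [this]
  simp_rw [← TensorProduct.tmul_sum, hM, ← TensorProduct.smul_tmul]
  rw [← TensorProduct.sum_tmul, sw_counit_right]

/-- the antipode is an anti-coalgebra map -/
lemma comul_antipode' (h : H) : comul (R := k) (antipode k h) =
    ∑ p ∈ sw k h, antipode k p.2 ⊗ₜ[k] antipode k p.1 := by
  let G : H →ₗ[k] H ⊗[k] H := TensorProduct.map (antipode k) (antipode k) ∘ₗ
    (TensorProduct.comm k H H).toLinearMap ∘ₗ comul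
  have hG : ∀ x, G x = ∑ p ∈ sw k x, antipode k p.2 ⊗ₜ[k] antipode k p.1 := by
    intro x
    simp only [G, LinearMap.comp_apply]
    rw [← sw_eq]; simp
  have key : WithConv.toConv G * WithConv.toConv (comul (R := k) (A := H)) = 1 := by
    ext x
    rw [(Coalgebra.Repr.arbitrary k x).convMul_apply]
    change ∑ p ∈ sw k x, G p.1 * comul p.2 = _
    simp only [hG]
    have : ∀ p : H × H, (∑ q ∈ sw k p.1, antipode k q.2 ⊗ₜ[k] antipode k q.1) * comul p.2 =
      ∑ q ∈ sw k p.1, ∑ r ∈ sw k p.2, (antipode k q.2 * r.1) ⊗ₜ[k] (antipode k q.1 * r.2) := by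
      intro p
      rw [← sw_eq k p.2, Finset.sum_mul_sum]; simp
    simp only [this]
    let F : H ⊗[k] (H ⊗[k] H) →ₗ[k] H ⊗[k] H := LinearMap.mul' k (H ⊗[k] H) ∘ₗ
      TensorProduct.map (TensorProduct.map (antipode k) (antipode k) ∘ₗ
        (TensorProduct.comm k H H).toLinearMap) comul ∘ₗ
        (TensorProduct.assoc k H H H).symm.toLinearMap
    have hF : ∀ a b c : H, F (a ⊗ₜ (b ⊗ₜ c)) =
        ∑ r ∈ sw k c, (antipode k b * r.1) ⊗ₜ[k] (antipode k a * r.2) := by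
      intro a b c
      simp only [F, LinearMap.comp_apply, LinearEquiv.coe_coe, TensorProduct.assoc_symm_tmul,
        TensorProduct.map_tmul, TensorProduct.comm_tmul, LinearMap.mul'_apply]
      rw [← sw_eq k c, Finset.mul_sum]; simp
    have h1 := congr(F $(sw_coassoc k x))
    simp only [map_sum, hF] at h1
    rw [h1]
    have h2 : ∀ p : H × H, ∑ q ∈ sw k p.2, ∑ r ∈ sw k q.2,
        (antipode k q.1 * r.1) ⊗ₜ[k] (antipode k p.1 * r.2) = 1 ⊗ₜ[k] (antipode k p.1 * p.2) := by
      intro p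
      have := sw_cancel_left (k := k) (LinearMap.mul' k H ∘ₗ (antipode k).rTensor H)
        (fun h => by simpa using sw_S_left k h) p.2
      have := congr((LinearMap.mulLeft k (antipode k p.1)).lTensor H $this)
      simpa [map_sum] using this
    simp only [h2]
    rw [← TensorProduct.tmul_sum, sw_S_left]
    simp [Algebra.TensorProduct.one_def, Algebra.algebraMap_eq_smul_one]
  have := left_inv_eq_right_inv key LinearMap.comul_right_inv
  have := congr(WithConv.ofConv $this h)
  rw [← hG]; simpa using this.symm

end SweedlerBasics

end Part1

section Part2
open Coalgebra HopfAlgebra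

section Integrals
variable {k : Type} {H : Type} [CommRing k] [Ring H] [HopfAlgebra k H]

lemma one_tmul_eq (h : H) : (1 : H) ⊗ₜ[k] h =
    ∑ q ∈ sw k h, (antipode k q.1 ⊗ₜ[k] (1 : H)) * comul (R := k) q.2 := by
  rw [← sw_cancel_left (k := k) (LinearMap.mul' k H ∘ₗ (antipode k).rTensor H)
        (fun h => by simpa using sw_S_left k h) h]
  refine Finset.sum_congr rfl fun q _ => ?_
  rw [← sw_eq k q.2, Finset.mul_sum]; simp

lemma tmul_one_eq (h : H) : h ⊗ₜ[k] (1 : H) =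
    ∑ q ∈ sw k h, comul (R := k) q.1 * ((1 : H) ⊗ₜ[k] antipode k q.2) := by
  rw [← sw_cancel_right (k := k) (LinearMap.mul' k H ∘ₗ (antipode k).lTensor H)
        (fun h => by simpa using sw_S_right k h) h]
  refine Finset.sum_congr rfl fun q _ => ?_
  rw [← sw_eq k q.1, Finset.sum_mul]; simp

lemma int_left (Λ : H) (hΛ : ∀ h : H, h * Λ = counit (R := k) h • Λ) (h : H) :
    ((1 : H) ⊗ₜ[k] h) * comul (R := k) Λ = (antipode k h ⊗ₜ[k] (1 : H)) * comul (R := k) Λ := by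
  rw [one_tmul_eq, Finset.sum_mul]
  simp_rw [mul_assoc, ← Bialgebra.comul_mul, hΛ, map_smul, mul_smul_comm, ← smul_mul_assoc,
    TensorProduct.smul_tmul', ← map_smul]
  rw [← Finset.sum_mul, ← TensorProduct.sum_tmul, ← map_sum, sw_counit_right]

lemma int_right (Λ : H) (hΛ : ∀ h : H, Λ * h = counit (R := k) h • Λ) (h : H) :
    comul (R := k) Λ * (h ⊗ₜ[k] (1 : H)) = comul (R := k) Λ * ((1 : H) ⊗ₜ[k] antipode k h) := by
  rw [tmul_one_eq, Finset.mul_sum]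
  simp_rw [← mul_assoc, ← Bialgebra.comul_mul, hΛ, map_smul, smul_mul_assoc, ← mul_smul_comm,
    ← TensorProduct.tmul_smul, ← map_smul]
  rw [← Finset.mul_sum, ← TensorProduct.tmul_sum, ← map_sum, sw_counit_left]

lemma casimir (Λ : H) (hΛ : ∀ h : H, h * Λ = counit (R := k) h • Λ) (h : H) :
    ∑ p ∈ sw k Λ, (h * p.1) ⊗ₜ[k] antipode k p.2 =
    ∑ p ∈ sw k Λ, p.1 ⊗ₜ[k] (antipode k p.2 * h) := by
  have h1 : ∀ p : H × H, (h * p.1) ⊗ₜ[k] antipode k p.2 = ∑ q ∈ sw k h, ∑ r ∈ sw k q.1,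
      (r.1 * p.1) ⊗ₜ[k] (antipode k (r.2 * p.2) * q.2) := by
    intro p
    have := sw_cancel_right (k := k) (LinearMap.mul' k H ∘ₗ (antipode k).rTensor H)
        (fun h => by simpa using sw_S_left k h) h
    have := congr(TensorProduct.map (LinearMap.mulRight k p.1)
      (LinearMap.mulLeft k (antipode k p.2)) $this)
    simpa [map_sum, antipode_mul_antidistrib, mul_assoc] using this.symm
  simp_rw [h1]
  rw [Finset.sum_comm]
  have h2 : ∀ q : H × H, ∑ p ∈ sw k Λ, ∑ r ∈ sw k q.1,
      (r.1 * p.1) ⊗ₜ[k] (antipode k (r.2 * p.2) * q.2) =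
      counit (R := k) q.1 • ∑ p ∈ sw k Λ, p.1 ⊗ₜ[k] (antipode k p.2 * q.2) := by
    intro q
    have := congr(((LinearMap.mulRight k q.2 ∘ₗ antipode k).lTensor H) $(sw_mul k q.1 Λ))
    rw [hΛ, map_smul, map_smul, ← sw_eq] at this
    rw [Finset.sum_comm]
    simpa [map_sum] using this.symm
  simp_rw [h2, Finset.smul_sum]
  rw [Finset.sum_comm]
  refine Finset.sum_congr rfl fun p _ => ?_
  simp_rw [← TensorProduct.tmul_smul, ← mul_smul_comm]
  rw [← TensorProduct.tmul_sum, ← Finset.mul_sum, sw_counit_left]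

end Integrals

section Maschke
variable {R F H : Type} [CommRing R] [Field F] [Algebra R F] [Ring H] [HopfAlgebra R H]

theorem maschke (Λ : H) (hΛ : ∀ h : H, h * Λ = counit (R := R) h • Λ)
    (hε : algebraMap R F (counit (R := R) Λ) ≠ 0) : IsSemisimpleRing (F ⊗[R] H) := by
  refine IsSemisimpleModule.mk (toComplementedLattice := ⟨fun N => ?_⟩)
  let N' : Submodule F (F ⊗[R] H) := N.restrictScalars F
  obtain ⟨f, hf⟩ := N'.subtype.exists_leftInverse_of_injective (by simp)
  have hf' : ∀ n : N', f n = n := fun n => congr($hf n)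
  let i : H →ₐ[R] F ⊗[R] H := Algebra.TensorProduct.includeRight
  let c : F := (algebraMap R F (counit (R := R) Λ))⁻¹
  let e : (F ⊗[R] H) →ₗ[F] (F ⊗[R] H) := c • ∑ p ∈ sw R Λ,
    LinearMap.mulLeft F (i p.1) ∘ₗ N'.subtype ∘ₗ f ∘ₗ LinearMap.mulLeft F (i (antipode R p.2))
  have he : ∀ m, e m = c • ∑ p ∈ sw R Λ, i p.1 * (f (i (antipode R p.2) * m) : F ⊗[R] H) := by
    intro m; simp [e]
  have hN : ∀ m, e m ∈ N := by
    intro m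
    rw [he, ← Finset.sum_congr rfl (fun p _ => rfl)]
    refine N'.smul_mem c (N'.sum_mem fun p _ => ?_)
    exact N.smul_mem (i p.1) (f _).2
  have hid : ∀ m ∈ N, e m = m := by
    intro m hm
    have : ∀ p : H × H, (f (i (antipode R p.2) * m) : F ⊗[R] H) = i (antipode R p.2) * m := by
      intro p
      have hm' : i (antipode R p.2) * m ∈ N' := N.smul_mem (i (antipode R p.2)) hm
      exact congr(Subtype.val $(hf' ⟨_, hm'⟩))
    rw [he]
    simp_rw [this, ← mul_assoc, ← map_mul]
    rw [← Finset.sum_mul, ← map_sum, sw_S_right, map_smul, map_one, smul_mul_assoc, one_mul,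
      ← algebraMap_smul F (counit (R := R) Λ) m, smul_smul, inv_mul_cancel₀ hε, one_smul]
  have hlin1 : ∀ (h : H) m, e (i h * m) = i h * e m := by
    intro h m
    let B : H ⊗[R] H →ₗ[R] F ⊗[R] H := TensorProduct.lift
      (LinearMap.mk₂ R (fun a b => i a * (f (i b * m) : F ⊗[R] H))
        (by intros; simp [add_mul]) (by intros; simp) (by intros; simp [add_mul, mul_add])
        (by
          intro r a b
          rw [map_smul, smul_mul_assoc, ← algebraMap_smul F r, map_smul, ← algebraMap_smul F r]
          simp))
    have := congr(B $(casimir Λ hΛ h))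
    simp only [map_sum, B, TensorProduct.lift.tmul, LinearMap.mk₂_apply, map_mul, mul_assoc] at this
    rw [he, he, mul_smul_comm, Finset.mul_sum, this]
  have hlin : ∀ (a m : F ⊗[R] H), e (a * m) = a * e m := by
    intro a m
    induction a with
    | zero => simp
    | add x y hx hy => simp [add_mul, hx, hy]
    | tmul x y =>
      have : x ⊗ₜ[R] y = x • i y := by simp [i, TensorProduct.smul_tmul']
      rw [this, smul_mul_assoc, map_smul, hlin1, smul_mul_assoc]
  let E : (F ⊗[R] H) →ₗ[F ⊗[R] H] N :=
    { toFun := fun m => ⟨e m, hN m⟩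
      map_add' := by intros; ext1; simp
      map_smul' := by intro a m; ext1; simpa using hlin a m }
  exact ⟨LinearMap.ker E, LinearMap.isCompl_of_proj (f := E) (fun x => Subtype.ext (hid x x.2))⟩

end Maschke

end Part2

section Part3
open Coalgebra HopfAlgebra

section Semi
variable {k : Type} {H : Type} [Field k] [Ring H] [HopfAlgebra k H] [IsSemisimpleRing H]

lemma exists_left_int : ∃ Λ : H, (∀ h : H, h * Λ = counit (R := k) h • Λ) ∧
    counit (R := k) Λ = 1 := by
  let I : Submodule H H := RingHom.ker (Bialgebra.counitAlgHom k H : H →+* k)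
  have hI : ∀ x, x ∈ I ↔ counit (R := k) x = 0 := fun x => by
    show x ∈ RingHom.ker _ ↔ _
    rw [RingHom.mem_ker]; rfl
  obtain ⟨J, hJ⟩ := exists_isCompl I
  obtain ⟨a, ha, b, hb, hab⟩ := Submodule.mem_sup.1 (hJ.sup_eq_top ▸ Submodule.mem_top : (1 : H) ∈ I ⊔ J)
  have hb1 : counit (R := k) b = 1 := by
    have := congr(counit (R := k) $hab)
    rwa [map_add, (hI a).1 ha, zero_add, Bialgebra.counit_one] at this
  refine ⟨b, fun h => ?_, hb1⟩
  have h1 : h * b - counit (R := k) h • b ∈ J := by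
    refine J.sub_mem (J.smul_mem h hb) ?_
    rw [← one_mul b, ← smul_mul_assoc]; exact J.smul_mem (_ • 1) hb
  have h2 : h * b - counit (R := k) h • b ∈ I := by
    rw [hI]; simp [hb1]
  have := hJ.disjoint.le_bot (show _ ∈ I ⊓ J from ⟨h2, h1⟩)
  exact sub_eq_zero.1 (by simpa using this)

lemma exists_right_int : ∃ Λ : H, (∀ h : H, Λ * h = counit (R := k) h • Λ) ∧
    counit (R := k) Λ = 1 := by
  let ε : Hᵐᵒᵖ →+* k := ((Bialgebra.counitAlgHom k H : H →+* k).fromOpposite (fun x y => mul_comm _ _))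
  have hε : ∀ x : H, ε (MulOpposite.op x) = counit (R := k) x := fun x => rfl
  let I : Submodule Hᵐᵒᵖ Hᵐᵒᵖ := RingHom.ker ε
  have hI : ∀ x, x ∈ I ↔ ε x = 0 := fun x => RingHom.mem_ker
  obtain ⟨J, hJ⟩ := exists_isCompl I
  obtain ⟨a, ha, b, hb, hab⟩ := Submodule.mem_sup.1 (hJ.sup_eq_top ▸ Submodule.mem_top : (1 : Hᵐᵒᵖ) ∈ I ⊔ J)
  have hb1 : ε b = 1 := by
    have := congr(ε $hab)
    rwa [map_add, (hI a).1 ha, zero_add, map_one] at this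
  refine ⟨b.unop, fun h => ?_, hb1⟩
  have h1 : MulOpposite.op h * b - counit (R := k) h • b ∈ J := by
    refine J.sub_mem (J.smul_mem _ hb) ?_
    rw [← one_mul b, ← smul_mul_assoc]; exact J.smul_mem (_ • 1) hb
  have h2 : MulOpposite.op h * b - counit (R := k) h • b ∈ I := by
    rw [hI, map_sub, map_mul, hb1, hε]
    have : ε (counit (R := k) h • b) = counit (R := k) h * ε b := by
      show counit (R := k) (counit (R := k) h • b.unop) = _
      rw [map_smul]; rfl
    rw [this, hb1, sub_self]
  have := hJ.disjoint.le_bot (show _ ∈ I ⊓ J from ⟨h2, h1⟩)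
  have := sub_eq_zero.1 ((Submodule.mem_bot _).1 this)
  exact congr(MulOpposite.unop $this)

lemma exists_int : ∃ Λ : H, (∀ h : H, h * Λ = counit (R := k) h • Λ) ∧
    (∀ h : H, Λ * h = counit (R := k) h • Λ) ∧ counit (R := k) Λ = 1 := by
  obtain ⟨a, ha, ha1⟩ := exists_left_int (k := k) (H := H)
  obtain ⟨b, hb, hb1⟩ := exists_right_int (k := k) (H := H)
  have h1 := ha b
  have h2 := hb a
  rw [hb1, one_smul] at h1
  rw [ha1, one_smul] at h2
  have : a = b := h1.symm.trans h2
  subst this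
  exact ⟨a, ha, hb, ha1⟩

lemma antipode_inj : Function.Injective (antipode k : H →ₗ[k] H) := by
  obtain ⟨Λ, hl, hr, h1⟩ := exists_int (k := k) (H := H)
  let I : Submodule H H :=
    { carrier := {x | antipode k x = 0}
      add_mem' := by intro a b ha hb; simp only [Set.mem_ofPred_eq] at *; rw [map_add, ha, hb, add_zero]
      zero_mem' := by simp
      smul_mem' := by
        intro c x hx; simp only [Set.mem_ofPred_eq, smul_eq_mul] at *
        rw [antipode_mul_antidistrib, hx, zero_mul] }
  obtain ⟨J, hJ⟩ := exists_isCompl I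
  obtain ⟨a, ha, b, hb, hab⟩ := Submodule.mem_sup.1 (hJ.sup_eq_top ▸ Submodule.mem_top : (1 : H) ∈ I ⊔ J)
  have ha' : antipode k a = 0 := ha
  have hxa : ∀ x, antipode k x = 0 → x * a = x := by
    intro x hx
    have e1 : x * a + x * b = x := by rw [← mul_add, hab, mul_one]
    have e2 : x * b ∈ I := by
      show antipode k (x * b) = 0
      rw [antipode_mul_antidistrib, hx, mul_zero]
    have := hJ.disjoint.le_bot (show _ ∈ I ⊓ J from ⟨e2, J.smul_mem x hb⟩)
    rw [(Submodule.mem_bot _).1 this, add_zero] at e1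
    exact e1
  have key := int_right (k := k) Λ hr a
  rw [ha', TensorProduct.tmul_zero, mul_zero, ← sw_eq, Finset.sum_mul] at key
  simp only [Algebra.TensorProduct.tmul_mul_tmul, mul_one] at key
  refine (injective_iff_map_eq_zero _).2 fun y hy => ?_
  have key2 := congr((LinearMap.mul' k H ∘ₗ TensorProduct.map (LinearMap.mulLeft k y) (antipode k)) $key)
  simp only [map_sum, LinearMap.comp_apply, TensorProduct.map_tmul, LinearMap.mul'_apply,
    LinearMap.mulLeft_apply, map_zero] at key2
  have h3 : ∀ p : H × H, y * (p.1 * a) * antipode k p.2 = y * (p.1 * antipode k p.2) := by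
    intro p
    rw [← mul_assoc y, hxa (y * p.1) (by rw [antipode_mul_antidistrib, hy, mul_zero]), mul_assoc]
  simp_rw [h3] at key2
  rwa [← Finset.mul_sum, sw_S_right, h1, one_smul, mul_one] at key2

end Semi

end Part3

section Part4
open Coalgebra HopfAlgebra

section Inv
variable (k : Type) {H : Type} [Field k] [Ring H] [HopfAlgebra k H] [IsSemisimpleRing H]
  [FiniteDimensional k H]

lemma exists_ai : ∃ f : H →ₗ[k] H, (∀ x, f (antipode k x) = x) ∧ ∀ x, antipode k (f x) = x := by
  have hi := antipode_inj (k := k) (H := H)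
  have hb : Function.Bijective (antipode k : H →ₗ[k] H) :=
    ⟨hi, LinearMap.injective_iff_surjective.1 hi⟩
  let e := LinearEquiv.ofBijective _ hb
  exact ⟨e.symm.toLinearMap, fun x => e.symm_apply_apply x, fun x => e.apply_symm_apply x⟩

/-- the inverse of the antipode -/
noncomputable def ai : H →ₗ[k] H := (exists_ai k (H := H)).choose

@[simp] lemma ai_antipode (x : H) : ai k (antipode k x) = x :=
  (exists_ai k (H := H)).choose_spec.1 x
@[simp] lemma antipode_ai (x : H) : antipode k (ai k x) = x :=
  (exists_ai k (H := H)).choose_spec.2 x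

lemma ai_mul (x y : H) : ai k (x * y) = ai k y * ai k x := by
  apply antipode_inj (k := k)
  rw [antipode_mul_antidistrib]; simp
@[simp] lemma ai_one : ai k (1 : H) = 1 := by
  apply antipode_inj (k := k)
  simp
@[simp] lemma counit_ai (x : H) : counit (R := k) (ai k x) = counit (R := k) x := by
  conv_rhs => rw [← antipode_ai k x]
  rw [counit_antipode]

lemma comul_ai (h : H) : comul (R := k) (ai k h) = ∑ p ∈ sw k h, ai k p.2 ⊗ₜ[k] ai k p.1 := by
  have h1 := comul_antipode' (k := k) (ai k h)
  rw [antipode_ai] at h1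
  have := congr((TensorProduct.comm k H H) (TensorProduct.map (ai k) (ai k) $h1))
  rw [← sw_eq k h] at this
  simp only [map_sum, TensorProduct.map_tmul, TensorProduct.comm_tmul, ai_antipode] at this
  rw [sw_eq] at this
  exact this.symm

lemma sw_ai_left (h : H) : ∑ p ∈ sw k h, p.2 * ai k p.1 = counit (R := k) h • (1 : H) := by
  apply antipode_inj (k := k)
  simp only [map_sum, antipode_mul_antidistrib, antipode_ai, map_smul, antipode_one]
  exact sw_S_right k h
lemma sw_ai_right (h : H) : ∑ p ∈ sw k h, ai k p.2 * p.1 = counit (R := k) h • (1 : H) := by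
  apply antipode_inj (k := k)
  simp only [map_sum, antipode_mul_antidistrib, antipode_ai, map_smul, antipode_one]
  exact sw_S_left k h

end Inv

section Ops
variable {k : Type} {H : Type} [CommRing k] [Ring H] [HopfAlgebra k H]

/-- `y ↦ f(y₂) y₁` -/
noncomputable def lop (f : H →ₗ[k] k) : Module.End k H :=
  (TensorProduct.rid k H).toLinearMap ∘ₗ f.lTensor H ∘ₗ comul
/-- `y ↦ f(y₁) y₂` -/
noncomputable def rop (f : H →ₗ[k] k) : Module.End k H :=
  (TensorProduct.lid k H).toLinearMap ∘ₗ f.rTensor H ∘ₗ comul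

lemma lop_apply (f : H →ₗ[k] k) (y : H) : lop f y = ∑ p ∈ sw k y, f p.2 • p.1 := by
  simp [lop, ← sw_eq k y]
lemma rop_apply (f : H →ₗ[k] k) (y : H) : rop f y = ∑ p ∈ sw k y, f p.1 • p.2 := by
  simp [rop, ← sw_eq k y]
lemma lop_comul (f : H →ₗ[k] k) (y : H) {α : Type} (s : Finset α) (u v : α → H)
    (h : comul (R := k) y = ∑ i ∈ s, u i ⊗ₜ[k] v i) : lop f y = ∑ i ∈ s, f (v i) • u i := by
  simp [lop, h]
lemma rop_comul (f : H →ₗ[k] k) (y : H) {α : Type} (s : Finset α) (u v : α → H)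
    (h : comul (R := k) y = ∑ i ∈ s, u i ⊗ₜ[k] v i) : rop f y = ∑ i ∈ s, f (u i) • v i := by
  simp [rop, h]

/-- the antipode squared -/
noncomputable def TT (k : Type) (H : Type) [CommRing k] [Ring H] [HopfAlgebra k H] : Module.End k H :=
  antipode k ∘ₗ antipode k
lemma TT_apply (x : H) : TT k H x = antipode k (antipode k x) := rfl
lemma TT_mul (x y : H) : TT k H (x * y) = TT k H x * TT k H y := by
  simp [TT_apply, antipode_mul_antidistrib]
lemma TT_one : TT k H 1 = 1 := by simp [TT_apply]
lemma comul_TT (h : H) : comul (R := k) (TT k H h) = ∑ p ∈ sw k h, TT k H p.1 ⊗ₜ[k] TT k H p.2 := by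
  have h1 := comul_antipode' (k := k) (antipode k h)
  have h2 := comul_antipode' (k := k) h
  rw [TT_apply, h1]
  have := congr((TensorProduct.comm k H H) (TensorProduct.map (antipode k) (antipode k) $h2))
  rw [← sw_eq] at this
  simpa [map_sum, TT_apply] using this

lemma lop_TT (f : H →ₗ[k] k) : lop f * TT k H = TT k H * lop (f ∘ₗ TT k H) := by
  ext y
  simp only [Module.End.mul_apply]
  rw [lop_comul f (TT k H y) _ _ _ (comul_TT y), lop_apply]; simp
lemma rop_TT (f : H →ₗ[k] k) : rop f * TT k H = TT k H * rop (f ∘ₗ TT k H) := by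
  ext y
  simp only [Module.End.mul_apply]
  rw [rop_comul f (TT k H y) _ _ _ (comul_TT y), rop_apply]; simp

lemma rop_lop (a b : H →ₗ[k] k) : rop a * lop b = lop b * rop a := by
  ext y
  simp only [Module.End.mul_apply]
  have := congr(((TensorProduct.lid k H).toLinearMap ∘ₗ TensorProduct.map a ((TensorProduct.rid k H).toLinearMap ∘ₗ b.lTensor H)) $(sw_coassoc k y))
  simp only [map_sum, LinearMap.comp_apply, TensorProduct.map_tmul, LinearEquiv.coe_coe,
    LinearMap.lTensor_tmul, TensorProduct.rid_tmul, TensorProduct.lid_tmul] at this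
  rw [lop_apply b y, rop_apply a y, map_sum, map_sum]
  simp only [map_smul, lop_apply, rop_apply, Finset.smul_sum]
  rw [← this]
  refine Finset.sum_congr rfl fun x _ => Finset.sum_congr rfl fun z _ => smul_comm _ _ _

lemma rop_rop (a b : H →ₗ[k] k) : rop a * rop b = rop (b ∘ₗ lop a) := by
  ext y
  simp only [Module.End.mul_apply]
  have := congr(((TensorProduct.lid k H).toLinearMap ∘ₗ TensorProduct.map b ((TensorProduct.lid k H).toLinearMap ∘ₗ a.rTensor H)) $(sw_coassoc k y))
  simp only [map_sum, LinearMap.comp_apply, TensorProduct.map_tmul, LinearEquiv.coe_coe,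
    LinearMap.rTensor_tmul, TensorProduct.lid_tmul] at this
  rw [rop_apply b y, rop_apply (b ∘ₗ lop a) y, map_sum]
  simp only [map_smul, lop_apply, rop_apply, Finset.smul_sum, LinearMap.comp_apply, map_sum]
  rw [← this]
  simp only [smul_smul, Finset.sum_smul, smul_eq_mul, mul_comm]

lemma lop_lop (a b : H →ₗ[k] k) : lop a * lop b = lop (a ∘ₗ lop b) := by
  ext y
  simp only [Module.End.mul_apply]
  have := congr(((TensorProduct.rid k H).toLinearMap ∘ₗ TensorProduct.map LinearMap.id (LinearMap.mul' k k ∘ₗ TensorProduct.map a b)) $(sw_coassoc k y))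
  simp only [map_sum, LinearMap.comp_apply, TensorProduct.map_tmul, LinearEquiv.coe_coe,
    LinearMap.mul'_apply, TensorProduct.rid_tmul, LinearMap.id_apply] at this
  rw [lop_apply b y, lop_apply (a ∘ₗ lop b) y, map_sum]
  simp only [map_smul, lop_apply, rop_apply, Finset.smul_sum, LinearMap.comp_apply, map_sum]
  simp only [smul_smul, Finset.sum_smul, smul_eq_mul, mul_comm] at this ⊢
  exact this

/-- `a(b(y₂) y₁) = b (a(y₁) y₂)` -/
lemma comp_lop_eq (a b : H →ₗ[k] k) : a ∘ₗ lop b = b ∘ₗ rop a := by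
  ext y
  simp only [LinearMap.comp_apply, lop_apply, rop_apply, map_sum, map_smul, smul_eq_mul, mul_comm]

lemma counit_lop (f : H →ₗ[k] k) (y : H) : counit (R := k) (lop f y) = f y := by
  conv_rhs => rw [← sw_counit_left k y]
  simp only [lop_apply, map_sum, map_smul, smul_eq_mul, mul_comm]
lemma counit_rop (f : H →ₗ[k] k) (y : H) : counit (R := k) (rop f y) = f y := by
  conv_rhs => rw [← sw_counit_right k y]
  simp only [rop_apply, map_sum, map_smul, smul_eq_mul, mul_comm]
lemma lop_counit : lop (counit (R := k) (A := H)) = 1 := by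
  ext y; rw [lop_apply]; exact sw_counit_right k y
lemma rop_counit : rop (counit (R := k) (A := H)) = 1 := by
  ext y; rw [rop_apply]; exact sw_counit_left k y
lemma lop_smul (c : k) (f : H →ₗ[k] k) : lop (c • f) = c • lop f := by
  ext y; simp [lop_apply, smul_smul, Finset.smul_sum]
lemma rop_smul (c : k) (f : H →ₗ[k] k) : rop (c • f) = c • rop f := by
  ext y; simp [rop_apply, smul_smul, Finset.smul_sum]
lemma rop_sum {α : Type} (s : Finset α) (f : α → H →ₗ[k] k) : rop (∑ i ∈ s, f i) = ∑ i ∈ s, rop (f i) := by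
  ext y; simp only [rop_apply, LinearMap.sum_apply, Finset.sum_smul]; rw [Finset.sum_comm]
lemma lop_sum {α : Type} (s : Finset α) (f : α → H →ₗ[k] k) : lop (∑ i ∈ s, f i) = ∑ i ∈ s, lop (f i) := by
  ext y; simp only [lop_apply, LinearMap.sum_apply, Finset.sum_smul]; rw [Finset.sum_comm]

end Ops

end Part4

section Part5
open Coalgebra HopfAlgebra

set_option linter.unusedSectionVars false
set_option linter.unusedSimpArgs false
section Trace
variable {k : Type} {H : Type} [Field k] [Ring H] [HopfAlgebra k H] [IsSemisimpleRing H]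
  [FiniteDimensional k H]

open Module in
lemma op_four (g : H →ₗ[k] k) (x : H) :
    ∑ p ∈ sw k x, g p.1 • LinearMap.mulLeft k p.2 =
    ∑ i, rop (g ∘ₗ LinearMap.mulRight k (finBasis k H i)) * LinearMap.mulLeft k x *
      rop ((finBasis k H).coord i ∘ₗ ai k) := by
  ext y
  have e1 : ∀ a z : H, rop (g ∘ₗ LinearMap.mulRight k a) (x * z) =
      ∑ p ∈ sw k x, ∑ q ∈ sw k z, g (p.1 * (q.1 * a)) • (p.2 * q.2) := by
    intro a z
    rw [rop]; simp only [LinearMap.comp_apply, sw_mul]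
    simp [mul_assoc]
  have e2 : (∑ i, rop (g ∘ₗ LinearMap.mulRight k (finBasis k H i)) * LinearMap.mulLeft k x *
      rop ((finBasis k H).coord i ∘ₗ ai k)) y =
      ∑ r ∈ sw k y, rop (g ∘ₗ LinearMap.mulRight k (ai k r.1)) (x * r.2) := by
    simp only [LinearMap.sum_apply, Module.End.mul_apply, LinearMap.mulLeft_apply]
    simp_rw [rop_apply (_ ∘ₗ ai k), Finset.mul_sum, map_sum]
    rw [Finset.sum_comm]
    refine Finset.sum_congr rfl fun r _ => ?_
    conv_rhs => rw [← (finBasis k H).sum_repr (ai k r.1)]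
    have : g ∘ₗ LinearMap.mulRight k (∑ i, (finBasis k H).repr (ai k r.1) i • finBasis k H i) =
      ∑ i, (finBasis k H).repr (ai k r.1) i • (g ∘ₗ LinearMap.mulRight k (finBasis k H i)) := by
      ext; simp [Finset.mul_sum, -Module.Basis.sum_repr]
    rw [this, rop_sum]
    simp [rop_smul]
  rw [e2]
  simp_rw [e1]
  simp only [LinearMap.sum_apply, LinearMap.smul_apply, LinearMap.mulLeft_apply]
  rw [Finset.sum_comm]
  refine Finset.sum_congr rfl fun p _ => ?_
  have := sw_cancel_left (k := k) (LinearMap.mul' k H ∘ₗ (ai k).lTensor H ∘ₗ (TensorProduct.comm k H H).toLinearMap)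
    (fun h => by simpa using sw_ai_left k h) y
  have := congr(((TensorProduct.lid k H).toLinearMap ∘ₗ TensorProduct.map (g ∘ₗ LinearMap.mulLeft k p.1)
    (LinearMap.mulLeft k p.2)) $this)
  simpa [map_sum] using this.symm

/-- the trace functional -/
noncomputable def lamf (f : H →ₗ[k] k) : H →ₗ[k] k :=
  LinearMap.trace k H ∘ₗ LinearMap.mulRight k (TT k H) ∘ₗ LinearMap.mulLeft k (lop f) ∘ₗ
    LinearMap.mul k H

lemma lamf_apply (f : H →ₗ[k] k) (x : H) :
    lamf f x = LinearMap.trace k H (lop f * LinearMap.mulLeft k x * TT k H) := rfl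

open Module in
lemma lamf_int' (f g : H →ₗ[k] k) (x : H) :
    ∑ p ∈ sw k x, g p.1 * lamf f p.2 = g 1 * lamf f x := by
  have e1 : ∑ p ∈ sw k x, g p.1 * lamf f p.2 =
      LinearMap.trace k H (lop f * (∑ p ∈ sw k x, g p.1 • LinearMap.mulLeft k p.2) * TT k H) := by
    simp [Finset.mul_sum, Finset.sum_mul, lamf_apply]
  rw [e1, op_four, Finset.mul_sum, Finset.sum_mul, map_sum]
  have e2 : ∀ i, LinearMap.trace k H (lop f * (rop (g ∘ₗ LinearMap.mulRight k (finBasis k H i)) *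
      LinearMap.mulLeft k x * rop ((finBasis k H).coord i ∘ₗ ai k)) * TT k H) =
      LinearMap.trace k H (lop f * rop ((g ∘ₗ LinearMap.mulRight k (finBasis k H i)) ∘ₗ
        lop ((finBasis k H).coord i ∘ₗ antipode k)) * (LinearMap.mulLeft k x * TT k H)) := by
    intro i
    have : ((finBasis k H).coord i ∘ₗ ai k) ∘ₗ TT k H = (finBasis k H).coord i ∘ₗ antipode k := by
      ext; simp [TT_apply]
    simp only [mul_assoc]
    rw [rop_TT, this, ← rop_rop]
    rw [show ∀ a b c d e : Module.End k H, a * (b * (c * (d * e))) = (a * b * c * d) * e by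
      intros; simp only [mul_assoc]]
    rw [LinearMap.trace_mul_comm]
    simp only [← mul_assoc]
    rw [rop_lop]
  simp_rw [e2]
  rw [← map_sum, ← Finset.sum_mul, ← Finset.mul_sum, ← rop_sum]
  have e3 : ∑ i, (g ∘ₗ LinearMap.mulRight k (finBasis k H i)) ∘ₗ
        lop ((finBasis k H).coord i ∘ₗ antipode k) = g 1 • counit (R := k) (A := H) := by
    ext y
    simp only [LinearMap.sum_apply, LinearMap.comp_apply, lop_apply, map_sum, map_smul]
    rw [Finset.sum_comm]
    have := congr(g $(sw_S_right k y))
    rw [map_sum, map_smul] at this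
    simp only [LinearMap.smul_apply, smul_eq_mul] at this ⊢
    rw [mul_comm, ← this]
    refine Finset.sum_congr rfl fun p _ => ?_
    conv_rhs => rw [← (finBasis k H).sum_repr (antipode k p.2)]
    simp [Finset.mul_sum, -Module.Basis.sum_repr]
  rw [e3, rop_smul, rop_counit]
  simp [lamf_apply, mul_assoc]

lemma dual_ext {x y : H} (h : ∀ g : H →ₗ[k] k, g x = g y) : x = y := by
  have := (Module.forall_dual_apply_eq_zero_iff k (x - y)).1 (fun g => by
    rw [map_sub, h, sub_self])
  exact sub_eq_zero.1 this

lemma lamf_int (f : H →ₗ[k] k) (x : H) : lop (lamf f) x = lamf f x • (1 : H) := by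
  apply dual_ext (k := k)
  intro g
  rw [lop_apply]; simp only [map_sum, map_smul, smul_eq_mul]
  simp_rw [mul_comm _ (g _)]
  exact lamf_int' f g x

open Module in
lemma op_six (f : H →ₗ[k] k) (a : H) :
    f.smulRight a = ∑ i, LinearMap.mulLeft k (a * finBasis k H i) *
      lop ((finBasis k H).coord i ∘ₗ ai k ∘ₗ lop f) := by
  ext y
  simp only [LinearMap.sum_apply, Module.End.mul_apply, LinearMap.mulLeft_apply, LinearMap.smulRight_apply]
  have h1 : ∑ r ∈ sw k y, a * (ai k (lop f r.2) * r.1) = f y • a := by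
    have := congr(((LinearMap.mulLeft k a ∘ₗ LinearMap.mul' k H ∘ₗ (TensorProduct.comm k H H).toLinearMap
      ∘ₗ ((ai k).lTensor H)) ∘ₗ (((TensorProduct.rid k H).toLinearMap ∘ₗ f.lTensor H).lTensor H)) $(sw_coassoc k y))
    simp only [map_sum, LinearMap.comp_apply, LinearMap.lTensor_tmul, LinearEquiv.coe_coe,
      TensorProduct.rid_tmul, TensorProduct.comm_tmul, LinearMap.mul'_apply, LinearMap.mulLeft_apply, map_smul, smul_mul_assoc, mul_smul_comm] at this
    simp_rw [lop_apply, map_sum, Finset.sum_mul, Finset.mul_sum, map_smul, smul_mul_assoc, mul_smul_comm]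
    rw [← this]
    simp_rw [← Finset.smul_sum, ← Finset.mul_sum, sw_ai_right]
    conv_rhs => rw [← sw_counit_left k y]
    simp [Finset.sum_smul, smul_smul, mul_comm]
  rw [← h1]
  simp_rw [lop_apply (_ ∘ₗ ai k ∘ₗ _), Finset.mul_sum]
  rw [Finset.sum_comm]
  refine Finset.sum_congr rfl fun p _ => ?_
  conv_lhs => rw [← (finBasis k H).sum_repr (ai k (lop f p.2))]
  simp [-Module.Basis.sum_repr, Finset.sum_mul, Finset.mul_sum, mul_assoc]

lemma TT_mulLeft (x : H) : TT k H * LinearMap.mulLeft k x = LinearMap.mulLeft k (TT k H x) * TT k H := by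
  ext y; simp [TT_mul]
lemma TT_mulRight (x : H) : TT k H * LinearMap.mulRight k x = LinearMap.mulRight k (TT k H x) * TT k H := by
  ext y; simp [TT_mul]

lemma exists_lamf_ne : ∃ f : H →ₗ[k] k, lamf f ≠ 0 := by
  by_contra! hcon
  obtain ⟨Λ, hl, hr, h1⟩ := exists_int (k := k) (H := H)
  have h : ∀ f : H →ₗ[k] k, LinearMap.trace k H (f.smulRight 1 * TT k H) = 0 := by
    intro f
    rw [op_six, Finset.sum_mul, map_sum]
    refine Finset.sum_eq_zero fun i _ => ?_
    rw [mul_assoc, LinearMap.trace_mul_comm, mul_assoc, TT_mulLeft, ← mul_assoc, ← lamf_apply, hcon]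
    rfl
  have := h (counit (R := k))
  have e : (counit (R := k) (A := H)).smulRight 1 * TT k H = (counit (R := k) (A := H)).smulRight (1 : H) := by
    ext y; simp [TT_apply, counit_antipode]
  rw [e, LinearMap.trace_smulRight] at this
  simp at this

lemma op_five (f : H →ₗ[k] k) (h : H) : lop (f ∘ₗ LinearMap.mulRight k h) = ∑ p ∈ sw k h,
    LinearMap.mulRight k (ai k p.1) * lop f * LinearMap.mulRight k p.2 := by
  ext y
  have e1 : ∀ z : H, lop f (y * z) =
      ∑ p ∈ sw k y, ∑ q ∈ sw k z, f (p.2 * q.2) • (p.1 * q.1) := by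
    intro z
    rw [lop]; simp only [LinearMap.comp_apply, sw_mul]
    simp
  simp only [LinearMap.sum_apply, Module.End.mul_apply, LinearMap.mulRight_apply]
  simp_rw [e1, Finset.sum_mul]
  rw [Finset.sum_comm, lop_apply]
  refine Finset.sum_congr rfl fun p _ => ?_
  have := sw_cancel_left (k := k) (LinearMap.mul' k H ∘ₗ (ai k).lTensor H ∘ₗ (TensorProduct.comm k H H).toLinearMap)
    (fun h => by simpa using sw_ai_left k h) h
  have := congr(((TensorProduct.rid k H).toLinearMap ∘ₗ TensorProduct.map (LinearMap.mulLeft k p.1) 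
    (f ∘ₗ LinearMap.mulLeft k p.2)) $this)
  simpa [map_sum, mul_assoc] using this.symm

/-- `Tr (l_f T) = f(Λ) Tr T` -/
lemma trace_lop (Λ : H) (hl : ∀ h : H, h * Λ = counit (R := k) h • Λ)
    (h1 : counit (R := k) Λ = 1) (f : H →ₗ[k] k) :
    LinearMap.trace k H (lop f * TT k H) = f Λ * LinearMap.trace k H (TT k H) := by
  have h2 := op_five f Λ
  have h3 : f ∘ₗ LinearMap.mulRight k Λ = f Λ • counit (R := k) (A := H) := by
    ext y; simp [hl, mul_comm]
  rw [h3, lop_smul, lop_counit] at h2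
  have h4 := congr(LinearMap.trace k H ($h2 * TT k H))
  rw [smul_mul_assoc, one_mul, map_smul, smul_eq_mul] at h4
  rw [h4, Finset.sum_mul, map_sum]
  have h5 : ∀ p : H × H, LinearMap.trace k H (LinearMap.mulRight k (ai k p.1) * lop f * LinearMap.mulRight k p.2
    * TT k H) = LinearMap.trace k H (lop f * LinearMap.mulRight k (antipode k p.1 * p.2) * TT k H) := by
    intro p
    rw [mul_assoc, mul_assoc, LinearMap.trace_mul_comm]
    have : TT k H (ai k p.1) = antipode k p.1 := by simp [TT_apply]
    simp only [mul_assoc]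
    rw [TT_mulRight, this, ← mul_assoc (LinearMap.mulRight k _)]
    congr 3
    ext y; simp [mul_assoc]
  simp_rw [h5]
  rw [← map_sum, ← Finset.sum_mul, ← Finset.mul_sum]
  have h6 : ∑ p ∈ sw k Λ, LinearMap.mulRight k (antipode k p.1 * p.2) = (1 : Module.End k H) := by
    ext y
    simp only [LinearMap.sum_apply, LinearMap.mulRight_apply]
    rw [← Finset.mul_sum, sw_S_left, h1]; simp
  rw [h6, mul_one]

end Trace

end Part5

section Part6
open Coalgebra HopfAlgebra

set_option linter.unusedSectionVars false
set_option linter.unusedSimpArgs false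
section Frob
variable {k : Type} {H : Type} [Field k] [Ring H] [HopfAlgebra k H] [IsSemisimpleRing H]
  [FiniteDimensional k H]

lemma int_shift (lam : H →ₗ[k] k) (hlam : ∀ x, lop lam x = lam x • (1 : H)) (x y : H) :
    lop (lam ∘ₗ LinearMap.mulRight k y) x = ∑ p ∈ sw k y, lam (x * p.2) • ai k p.1 := by
  rw [op_five]
  simp [LinearMap.sum_apply, hlam]

open Module in
lemma int_nondeg (lam : H →ₗ[k] k) (hlam : ∀ x, lop lam x = lam x • (1 : H)) (h0 : lam ≠ 0)
    (y : H) (hy : ∀ x, lam (x * y) = 0) : y = 0 := by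
  have key : ∀ y, (∀ x, lam (x * y) = 0) → ∀ f : H →ₗ[k] k, ∀ x, lam (x * rop f y) = 0 := by
    intro y hy f x
    have h1 := int_shift lam hlam x y
    have h2 : lam ∘ₗ LinearMap.mulRight k y = 0 := by ext z; simp [hy]
    rw [h2] at h1
    have h3 := congr(f (antipode k $h1))
    simp only [map_sum, map_smul, antipode_ai, smul_eq_mul] at h3
    rw [rop_apply, Finset.mul_sum, map_sum]
    simp only [mul_smul_comm, map_smul, smul_eq_mul]
    exact Eq.trans (Finset.sum_congr rfl fun p _ => mul_comm _ _)
      (h3.symm.trans (by simp [lop_apply]))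
  have key2 : ∀ y, (∀ x, lam (x * y) = 0) → counit (R := k) y = 0 := by
    intro y hy
    have e : ∀ x, lam (x * (counit (R := k) y • (1 : H))) = 0 := by
      intro x
      rw [← sw_S_left]
      have : ∑ p ∈ sw k y, antipode k p.1 * p.2 = ∑ i, finBasis k H i *
          rop ((finBasis k H).coord i ∘ₗ antipode k) y := by
        simp_rw [rop_apply, Finset.mul_sum]
        rw [Finset.sum_comm]
        refine Finset.sum_congr rfl fun p _ => ?_
        conv_lhs => rw [← (finBasis k H).sum_repr (antipode k p.1)]
        simp [Finset.sum_mul, -Module.Basis.sum_repr]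
      rw [this, Finset.mul_sum, map_sum]
      refine Finset.sum_eq_zero fun i _ => ?_
      rw [← mul_assoc]; exact key y hy _ _
    by_contra hne
    apply h0
    ext x
    have := e x
    rw [mul_smul_comm, mul_one, map_smul, smul_eq_mul] at this
    simpa [hne] using this
  apply dual_ext (k := k)
  intro f
  rw [← counit_rop f y, key2 _ (key y hy f), map_zero]

theorem frob : ∃ (Λ : H) (lam : H →ₗ[k] k) (N : ℕ), (∀ h : H, h * Λ = counit (R := k) h • Λ) ∧
    (∀ h : H, Λ * h = counit (R := k) h • Λ) ∧ counit (R := k) Λ = 1 ∧ lam Λ = 1 ∧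
    (∀ y, (∀ x, lam (x * y) = 0) → y = 0) ∧ (∀ x y, lam (x * y) = lam (y * TT k H x)) ∧
    0 < N ∧ TT k H ^ N = 1 := by
  obtain ⟨Λ, hl, hr, h1⟩ := exists_int (k := k) (H := H)
  obtain ⟨lam, hlam, hΛ, h0⟩ : ∃ lam : H →ₗ[k] k, (∀ x, lop lam x = lam x • (1 : H)) ∧ lam Λ = 1 ∧ lam ≠ 0 := by
    obtain ⟨f, hf⟩ := exists_lamf_ne (k := k) (H := H)
    have hne : lamf f Λ ≠ 0 := by
      intro h
      have := int_nondeg _ (lamf_int f) hf Λ (fun x => by rw [hl, map_smul, h, smul_zero])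
      rw [this, map_zero] at h1
      exact zero_ne_one h1
    refine ⟨(lamf f Λ)⁻¹ • lamf f, fun x => ?_, by simp [hne], by simp [hne, hf]⟩
    rw [lop_smul, LinearMap.smul_apply, lamf_int, LinearMap.smul_apply, smul_assoc]
  have nd := int_nondeg lam hlam h0
  have N3 : ∀ h, lop (lam ∘ₗ LinearMap.mulLeft k h) Λ = antipode k h := by
    intro h
    have := congr((TensorProduct.rid k H).toLinearMap (lam.lTensor H $(int_left Λ hl h)))
    rw [← sw_eq, Finset.mul_sum, Finset.mul_sum] at this
    simp only [map_sum, Algebra.TensorProduct.tmul_mul_tmul, one_mul, LinearMap.lTensor_tmul,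
      LinearEquiv.coe_coe, TensorProduct.rid_tmul] at this
    rw [lop_apply]; simp only [LinearMap.comp_apply, LinearMap.mulLeft_apply]
    rw [this]
    simp_rw [← mul_smul_comm]
    rw [← Finset.mul_sum, ← lop_apply, hlam, hΛ, one_smul, mul_one]
  have N4 : ∀ h, lop (lam ∘ₗ LinearMap.mulRight k (antipode k h)) Λ = h := by
    intro h
    have := congr((TensorProduct.rid k H).toLinearMap (lam.lTensor H $(int_right Λ hr h)))
    rw [← sw_eq, Finset.sum_mul, Finset.sum_mul] at this
    simp only [map_sum, Algebra.TensorProduct.tmul_mul_tmul, mul_one, LinearMap.lTensor_tmul,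
      LinearEquiv.coe_coe, TensorProduct.rid_tmul] at this
    rw [lop_apply]; simp only [LinearMap.comp_apply, LinearMap.mulRight_apply]
    rw [← this]
    simp_rw [← smul_mul_assoc]
    rw [← Finset.sum_mul, ← lop_apply, hlam, hΛ, one_smul, one_mul]
  have inj : ∀ a b : H →ₗ[k] k, lop a Λ = lop b Λ → a = b := by
    let E : (H →ₗ[k] k) →ₗ[k] H :=
      { toFun := fun f => lop f Λ
        map_add' := by intros; simp [lop_apply, add_smul, Finset.sum_add_distrib]
        map_smul' := by intros; simp [lop_smul] }
    have hs : Function.Surjective E := fun h => ⟨_, N4 h⟩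
    have hi : Function.Injective E :=
      (LinearMap.injective_iff_surjective_of_finrank_eq_finrank (Subspace.dual_finrank_eq)).2 hs
    intro a b h
    exact hi h
  have naka : ∀ x y, lam (x * y) = lam (y * TT k H x) := by
    intro x y
    have := inj (lam ∘ₗ LinearMap.mulLeft k x) (lam ∘ₗ LinearMap.mulRight k (TT k H x))
      (by rw [N3, TT_apply, N4])
    exact congr($this y)
  let g := rop lam Λ
  have hg : ∀ x, rop lam x = lam x • g := by
    intro x
    apply dual_ext (k := k)
    intro f
    have e1 : lam ∘ₗ lop f = (lam (lop f Λ)) • lam := by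
      apply inj
      rw [← lop_lop, lop_smul, LinearMap.smul_apply, Module.End.mul_apply, hlam, hlam, hΛ, one_smul]
    have e2 := congr($e1 x)
    have e3 := comp_lop_eq lam f
    have e4 : ∀ z, lam (lop f z) = f (rop lam z) := fun z => congr($e3 z)
    rw [LinearMap.comp_apply, LinearMap.smul_apply, e4, e4] at e2
    rw [e2, map_smul, smul_eq_mul, smul_eq_mul, mul_comm]
  have hgl : IsGroupLikeElem k g := by
    refine ⟨by rw [counit_rop, hΛ], ?_⟩
    have := congr((TensorProduct.lid k (H ⊗[k] H)).toLinearMap (lam.rTensor (H ⊗[k] H) $(sw_coassoc k Λ)))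
    simp only [map_sum, LinearMap.rTensor_tmul, LinearEquiv.coe_coe, TensorProduct.lid_tmul] at this
    have e1 : comul (R := k) g = ∑ p ∈ sw k Λ, lam p.1 • ∑ q ∈ sw k p.2, q.1 ⊗ₜ[k] q.2 := by
      simp only [g]
      rw [rop_apply, map_sum]; simp only [map_smul, sw_eq]
    rw [e1]
    simp_rw [Finset.smul_sum]
    rw [← this]
    simp_rw [TensorProduct.smul_tmul', ← TensorProduct.sum_tmul]
    simp_rw [← rop_apply, hg, TensorProduct.smul_tmul]
    rw [← TensorProduct.tmul_sum, ← rop_apply]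
  have hSg : ∀ x, lam (antipode k x) = lam (x * g) := by
    intro x
    rw [← N3]
    simp only [g]
    rw [lop_apply, rop_apply, Finset.mul_sum, map_sum, map_sum]
    simp [mul_comm]
  have hcomm : ∀ y, y * g = g * TT k H (TT k H y) := by
    intro y
    rw [← sub_eq_zero]
    apply nd
    intro x
    rw [mul_sub, map_sub, sub_eq_zero, ← mul_assoc, ← hSg, antipode_mul_antidistrib, naka, TT_apply,
      ← antipode_mul_antidistrib, hSg, ← TT_apply, mul_assoc, naka, mul_assoc]
  have hfin : Finite (GroupLike k H) := (linearIndep_groupLikeVal (R := k) (A := H)).finite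
  obtain ⟨n, hn, hgn⟩ := (isOfFinOrder_iff_pow_eq_one).1 (isOfFinOrder_of_finite (⟨g, hgl⟩ : GroupLike k H))
  have hgn' : g ^ n = 1 := congr(GroupLike.val $hgn)
  have hpow : ∀ m : ℕ, ∀ y, y * g ^ m = g ^ m * ((TT k H ^ (2 * m)) y) := by
    intro m
    induction m with
    | zero => intro y; simp
    | succ m ih =>
      intro y
      rw [pow_succ', ← mul_assoc, hcomm, mul_assoc, ih, ← mul_assoc, mul_add, mul_one, pow_add]
      rfl
  refine ⟨Λ, lam, 2 * n, hl, hr, h1, hΛ, nd, naka, by omega, ?_⟩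
  ext y
  have := hpow n y
  rw [hgn', mul_one, one_mul] at this
  exact this.symm

end Frob

end Part6

section Part7
section LinAlg
variable {k : Type} [Field k] [CharZero k]

lemma tr_rep {n N : ℕ} (hN : 0 < N) {ζ : k} (hζ : IsPrimitiveRoot ζ N)
    (v v' : Matrix (Fin n) (Fin n) k) (hv : v ^ N = 1) (hv' : v' * v = 1) :
    ∃ r : ℕ → ℕ, v.trace = ∑ j ∈ Finset.range N, (r j : k) * ζ ^ j ∧
      v'.trace = ∑ j ∈ Finset.range N, (r j : k) * ζ⁻¹ ^ j := by
  have hN0 : (N : k) ≠ 0 := by exact_mod_cast hN.ne'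
  have hζ0 : ζ ≠ 0 := hζ.ne_zero hN.ne'
  let u : ℕ → Matrix (Fin n) (Fin n) k := fun j => (ζ⁻¹ ^ j) • v
  have hu : ∀ j, (u j) ^ N = 1 := by
    intro j
    simp only [u]
    rw [smul_pow, hv, ← pow_mul, mul_comm, pow_mul, inv_pow, hζ.pow_eq_one]; simp
  let P : ℕ → Matrix (Fin n) (Fin n) k := fun j => (N : k)⁻¹ • ∑ m ∈ Finset.range N, (u j) ^ m
  have huP : ∀ j, u j * P j = P j := by
    intro j
    have := mul_geom_sum (u j) N
    rw [hu, sub_self, sub_mul, one_mul, sub_eq_zero] at this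
    simp only [P]
    rw [mul_smul_comm, this]
  have huP' : ∀ j m, u j ^ m * P j = P j := by
    intro j m
    induction m with
    | zero => simp
    | succ m ih => rw [pow_succ, mul_assoc, huP, ih]
  have hP : ∀ j, P j * P j = P j := by
    intro j
    conv_lhs => enter [1]; simp only [P]
    rw [smul_mul_assoc, Finset.sum_mul]
    simp_rw [huP']
    rw [Finset.sum_const, Finset.card_range, ← Nat.cast_smul_eq_nsmul k, smul_smul,
      inv_mul_cancel₀ hN0, one_smul]
  have hvP : ∀ j, v * P j = ζ ^ j • P j := by
    intro j
    conv_rhs => rw [← huP j]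
    simp only [u, smul_mul_assoc, smul_smul]
    rw [← mul_pow, mul_inv_cancel₀ hζ0, one_pow, one_smul]
  have hvP' : ∀ j, v' * P j = ζ⁻¹ ^ j • P j := by
    intro j
    have : P j = ζ⁻¹ ^ j • (v * P j) := by
      rw [hvP, smul_smul, ← mul_pow, inv_mul_cancel₀ hζ0, one_pow, one_smul]
    conv_lhs => rw [this]
    rw [mul_smul_comm, ← mul_assoc, hv', one_mul]
  have hsum : ∑ j ∈ Finset.range N, P j = 1 := by
    simp only [P, u]
    rw [← Finset.smul_sum, Finset.sum_comm, Finset.sum_eq_single 0]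
    · simp only [pow_zero, Finset.sum_const, Finset.card_range]
      rw [← Nat.cast_smul_eq_nsmul k, smul_smul,
        inv_mul_cancel₀ hN0, one_smul]
    · intro m hm hm0
      simp_rw [smul_pow, ← pow_mul, mul_comm _ m, pow_mul]
      rw [← Finset.sum_smul]
      have h1 : ζ⁻¹ ^ m ≠ 1 := hζ.inv.pow_ne_one_of_pos_of_lt hm0 (Finset.mem_range.1 hm)
      have h2 := mul_geom_sum (ζ⁻¹ ^ m) N
      rw [← pow_mul, mul_comm m, pow_mul, hζ.inv.pow_eq_one, one_pow, sub_self] at h2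
      rw [(mul_eq_zero.1 h2).resolve_left (sub_ne_zero.2 h1), zero_smul]
    · intro h; simp [hN] at h
  have htr : ∀ j, ∃ r : ℕ, (P j).trace = r := by
    intro j
    have hid : IsIdempotentElem (Matrix.toLin' (P j)) := by
      show Matrix.toLin' (P j) * Matrix.toLin' (P j) = _
      rw [← Module.End.mul_eq_comp _ _ |>.symm, ← Matrix.toLin'_mul, hP]
    have := ((LinearMap.isProj_range_iff_isIdempotentElem _).2 hid).trace
    rw [Matrix.trace_toLin'_eq] at this
    exact ⟨_, this⟩
  choose r hr using htr
  refine ⟨r, ?_, ?_⟩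
  · conv_lhs => rw [← mul_one v, ← hsum, Finset.mul_sum, Matrix.trace_sum]
    simp_rw [hvP, Matrix.trace_smul, hr, smul_eq_mul, mul_comm]
  · conv_lhs => rw [← mul_one v', ← hsum, Finset.mul_sum, Matrix.trace_sum]
    simp_rw [hvP', Matrix.trace_smul, hr, smul_eq_mul, mul_comm]

lemma exists_emb (K E C : Type) [Field K] [Field E] [Algebra K E] [Field C] [IsAlgClosed C]
    [Algebra K C] (ζ : E) (h : IsAlgebraic K ζ) :
    ∃ (F : Subfield E) (_ : F →+* C) (z : F), (z : E) = ζ :=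
  ⟨(algebraicClosure K E).toSubfield,
    ((IsAlgClosed.lift : algebraicClosure K E →ₐ[K] C) : algebraicClosure K E →+* C),
    ⟨ζ, mem_algebraicClosure_iff.2 h⟩, rfl⟩

lemma pos_lemma {N : ℕ} (hN : 0 < N) {ζ : k} (hζ : ζ ^ N = 1) {m : ℕ} (r : Fin m → ℕ → ℕ)
    (h : ∑ i, (∑ j ∈ Finset.range N, (r i j : k) * ζ ^ j) *
      (∑ j ∈ Finset.range N, (r i j : k) * ζ⁻¹ ^ j) = 0) (i : Fin m) :
    ∑ j ∈ Finset.range N, (r i j : k) * ζ ^ j = 0 := by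
  have hint : IsIntegral ℤ ζ := IsIntegral.of_pow hN (by rw [hζ]; exact isIntegral_one)
  obtain ⟨F, σ, z, hz⟩ := exists_emb ℚ k ℂ ζ (hint.tower_top (A := ℚ)).isAlgebraic
  replace hz : algebraMap F k z = ζ := hz
  have hzN : z ^ N = 1 := by
    apply (algebraMap F k).injective
    rw [map_pow, hz, hζ, map_one]
  have hσ : ‖σ z‖ = 1 := Complex.norm_eq_one_of_pow_eq_one (n := N) (by rw [← map_pow, hzN, map_one]) hN.ne'
  let s : Fin m → F := fun i => ∑ j ∈ Finset.range N, (r i j : F) * z ^ j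
  let s' : Fin m → F := fun i => ∑ j ∈ Finset.range N, (r i j : F) * z⁻¹ ^ j
  have hs : ∀ i, algebraMap F k (s i) = ∑ j ∈ Finset.range N, (r i j : k) * ζ ^ j := by
    intro i; simp only [s, map_sum, map_mul, map_pow, hz, map_natCast]
  have hs' : ∀ i, algebraMap F k (s' i) = ∑ j ∈ Finset.range N, (r i j : k) * ζ⁻¹ ^ j := by
    intro i; simp only [s', map_sum, map_mul, map_pow, hz, map_natCast, map_inv₀]
  have h0 : ∑ i, s i * s' i = 0 := by
    apply (algebraMap F k).injective
    rw [map_sum, map_zero, ← h]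
    simp only [map_mul, hs, hs']
  have hc : ∀ i, σ (s' i) = (starRingEnd ℂ) (σ (s i)) := by
    intro i
    simp only [s, s', map_sum, map_mul, map_pow, map_natCast, map_inv₀, Complex.inv_eq_conj hσ]
  have h1 := congr(σ $h0)
  simp only [map_sum, map_mul, hc, Complex.mul_conj, map_zero] at h1
  have h2 : ∑ i, Complex.normSq (σ (s i)) = 0 := by exact_mod_cast h1
  have h3 := (Finset.sum_eq_zero_iff_of_nonneg (fun i _ => Complex.normSq_nonneg _)).1 h2 i (Finset.mem_univ _)
  rw [Complex.normSq_eq_zero, map_eq_zero] at h3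
  rw [← hs, h3, map_zero]

end LinAlg

end Part7

section Part8
open Coalgebra HopfAlgebra

section PiMat
variable {k : Type} [Field k] {m : ℕ} {d : Fin m → ℕ}

lemma pi_functional (φ : (Π i, Matrix (Fin (d i)) (Fin (d i)) k) →ₗ[k] k) :
    ∃ w : Π i, Matrix (Fin (d i)) (Fin (d i)) k, ∀ x, φ x = ∑ i, (x i * w i).trace := by
  let w : Π i, Matrix (Fin (d i)) (Fin (d i)) k := fun i =>
    Matrix.of fun b a => φ (Pi.single i (Matrix.single a b 1))
  refine ⟨w, ?_⟩
  let ψ : (Π i, Matrix (Fin (d i)) (Fin (d i)) k) →ₗ[k] k :=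
    ∑ i, Matrix.traceLinearMap (Fin (d i)) k k ∘ₗ LinearMap.mulRight k (w i) ∘ₗ LinearMap.proj i
  have : φ = ψ := by
    apply LinearMap.pi_ext'
    intro i
    apply Matrix.ext_linearMap
    intro a b
    ext
    simp only [ψ, LinearMap.comp_apply, LinearMap.sum_apply, Matrix.singleLinearMap_apply, LinearMap.coe_single,
      LinearMap.proj_apply, LinearMap.mulRight_apply, Matrix.traceLinearMap_apply]
    rw [Finset.sum_eq_single i]
    · simp [w, Matrix.trace_single_mul]
    · intro j _ hj; simp [Pi.single_eq_of_ne hj]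
    · simp
  intro x
  rw [this]; simp [ψ]

lemma pi_trace (a b : Π i, Matrix (Fin (d i)) (Fin (d i)) k)
    (T : Module.End k (Π i, Matrix (Fin (d i)) (Fin (d i)) k)) (hT : ∀ x, T x = a * x * b) :
    LinearMap.trace k _ T = ∑ i, (a i).trace * (b i).trace := by
  let B := Pi.basis fun i => Matrix.stdBasis k (Fin (d i)) (Fin (d i))
  rw [LinearMap.trace_eq_matrix_trace k B, Matrix.trace, Fintype.sum_sigma]
  refine Finset.sum_congr rfl fun i _ => ?_
  rw [Fintype.sum_prod_type, Matrix.trace, Matrix.trace, Finset.sum_mul_sum]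
  refine Finset.sum_congr rfl fun p _ => Finset.sum_congr rfl fun q _ => ?_
  rw [Matrix.diag_apply, LinearMap.toMatrix_apply, hT]
  simp only [B, Pi.basis_apply, Pi.basis_repr, Pi.mul_apply, Pi.single_eq_same, Matrix.stdBasis_eq_single]
  show (a i * Matrix.single p q (1 : k) * b i : Matrix (Fin (d i)) (Fin (d i)) k) p q = _
  simp [Matrix.mul_apply, Matrix.single_apply, Finset.sum_ite_eq, ite_and]
end PiMat

section Pos
variable {k : Type} {H : Type} [Field k] [IsAlgClosed k] [CharZero k] [Ring H] [HopfAlgebra k H]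
  [IsSemisimpleRing H] [FiniteDimensional k H]

theorem pos_main : LinearMap.trace k H (TT k H) ≠ 0 ∧ IsIntegral ℤ (LinearMap.trace k H (TT k H)) := by
  obtain ⟨Λ, lam, N, hl, hr, h1, hΛ, nd, naka, hN, hTN⟩ := frob (k := k) (H := H)
  obtain ⟨m, d, hd, ⟨e⟩⟩ := IsSemisimpleRing.exists_algEquiv_pi_matrix_of_isAlgClosed k H
  obtain ⟨w, hw⟩ := pi_functional (lam ∘ₗ e.symm.toLinearMap)
  have hw' : ∀ x : H, lam x = ∑ i, (e x i * w i).trace := by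
    intro x; rw [← hw]; simp
  have hinj : ∀ y, y * w = 0 → y = 0 := by
    intro y hy
    have := nd (e.symm y) (fun x => by
      rw [hw']
      refine Finset.sum_eq_zero fun i _ => ?_
      have h2 : y i * w i = 0 := congr($hy i)
      simp [mul_assoc, h2])
    simpa using this
  obtain ⟨w', hw'1⟩ : ∃ w', w' * w = 1 := by
    have : Function.Injective (LinearMap.mulRight k w) :=
      (injective_iff_map_eq_zero _).2 (fun y hy => hinj y hy)
    exact LinearMap.injective_iff_surjective.1 this 1
  have hw'2 : w * w' = 1 := by
    have := hinj (w * w' - 1) (by rw [sub_mul, mul_assoc, hw'1]; simp)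
    exact sub_eq_zero.1 this
  have hcomm : ∀ x : H, w * e x = e (TT k H x) * w := by
    intro x
    funext i
    refine Matrix.ext_iff_trace_mul_left.2 fun y => ?_
    have := naka x (e.symm (Pi.single i y))
    rw [hw', hw', Finset.sum_eq_single i, Finset.sum_eq_single i] at this
    · simp only [map_mul, AlgEquiv.apply_symm_apply, Pi.mul_apply, Pi.single_eq_same] at this ⊢
      rw [← mul_assoc, ← mul_assoc, Matrix.trace_mul_comm, ← mul_assoc]
      exact this
    · intro j _ hj; simp [Pi.single_eq_of_ne hj]
    · simp
    · intro j _ hj; simp [Pi.single_eq_of_ne hj]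
    · simp
  have hpow : ∀ (n : ℕ) (x : H), w ^ n * e x = e ((TT k H ^ n) x) * w ^ n := by
    intro n
    induction n with
    | zero => intro x; simp
    | succ n ih =>
      intro x
      rw [pow_succ, mul_assoc, hcomm, ← mul_assoc, ih, mul_assoc, pow_succ (TT k H)]
      rfl
  have hcen : ∀ z : Π i, Matrix (Fin (d i)) (Fin (d i)) k, (∀ x, z * x = x * z) → ∀ i, ∃ c : k,
      z i = c • (1 : Matrix (Fin (d i)) (Fin (d i)) k) := by
    intro z hz i
    obtain ⟨c, hc⟩ := Matrix.mem_range_scalar_iff_commute_single'.2 (fun a b => by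
      have := congr($(hz (Pi.single i (Matrix.single a b 1))) i)
      simp only [Pi.mul_apply, Pi.single_eq_same] at this
      exact this.symm : ∀ a b, Commute (Matrix.single a b 1) (z i))
    refine ⟨c, ?_⟩
    rw [← hc, Matrix.smul_one_eq_diagonal]; rfl
  have hwN : ∀ i, ∃ c : k, w i ^ N = c • (1 : Matrix (Fin (d i)) (Fin (d i)) k) := by
    intro i
    refine hcen (w ^ N) (fun x => ?_) i
    have := hpow N (e.symm x)
    rw [hTN] at this
    simpa using this
  have hΛc : ∀ i, ∃ c : k, e Λ i = c • (1 : Matrix (Fin (d i)) (Fin (d i)) k) := by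
    refine hcen (e Λ) fun x => ?_
    have : Λ * e.symm x = e.symm x * Λ := by rw [hl, hr]
    simpa using congr(e $this)
  have hNk : NeZero (N : k) := ⟨by exact_mod_cast hN.ne'⟩
  obtain ⟨ζ, hζ⟩ := HasEnoughRootsOfUnity.exists_primitiveRoot k N
  have hrep : ∀ i, ∃ (a : k) (r : ℕ → ℕ), a ≠ 0 ∧
      (w i).trace = a * ∑ j ∈ Finset.range N, (r j : k) * ζ ^ j ∧
      (w' i).trace = a⁻¹ * ∑ j ∈ Finset.range N, (r j : k) * ζ⁻¹ ^ j := by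
    intro i
    obtain ⟨c, hc⟩ := hwN i
    obtain ⟨a, ha⟩ := IsAlgClosed.exists_pow_nat_eq c hN
    have hu : w' i * w i = 1 := congr($hw'1 i)
    have hu2 : w i * w' i = 1 := congr($hw'2 i)
    have hc0 : c ≠ 0 := by
      rintro rfl
      have := hd i
      have h3 : w i ^ N * w' i ^ N = 1 := by
        have hcm : Commute (w i) (w' i) := hu2.trans hu.symm
        rw [← hcm.mul_pow, hu2, one_pow]
      rw [hc, zero_smul, zero_mul] at h3
      exact zero_ne_one h3
    have ha0 : a ≠ 0 := by
      rintro rfl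
      rw [zero_pow hN.ne'] at ha; exact hc0 ha.symm
    obtain ⟨r, hr1, hr2⟩ := tr_rep hN hζ (a⁻¹ • w i) (a • w' i)
      (by rw [smul_pow, hc, smul_smul, ← ha, ← mul_pow, inv_mul_cancel₀ ha0, one_pow, one_smul])
      (by rw [smul_mul_smul_comm, hu, mul_inv_cancel₀ ha0, one_smul])
    refine ⟨a, r, ha0, ?_, ?_⟩
    · rw [← hr1, Matrix.trace_smul, smul_eq_mul, mul_inv_cancel_left₀ ha0]
    · rw [← hr2, Matrix.trace_smul, smul_eq_mul, inv_mul_cancel_left₀ ha0]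
  choose a r ha hr1 hr2 using hrep
  have hD : LinearMap.trace k H (TT k H) = ∑ i, (∑ j ∈ Finset.range N, (r i j : k) * ζ ^ j) *
      (∑ j ∈ Finset.range N, (r i j : k) * ζ⁻¹ ^ j) := by
    rw [← LinearMap.trace_conj' (TT k H) e.toLinearEquiv, pi_trace w w']
    · refine Finset.sum_congr rfl fun i _ => ?_
      rw [hr1, hr2, mul_mul_mul_comm, mul_inv_cancel₀ (ha i), one_mul]
    · intro x
      have := hcomm (e.symm x)
      rw [AlgEquiv.apply_symm_apply] at this
      rw [this, mul_assoc, hw'2, mul_one]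
      simp [LinearEquiv.conj_apply]
  have hζi : IsIntegral ℤ ζ := IsIntegral.of_pow hN (by rw [hζ.pow_eq_one]; exact isIntegral_one)
  have hζi' : IsIntegral ℤ ζ⁻¹ := IsIntegral.of_pow hN (by rw [hζ.inv.pow_eq_one]; exact isIntegral_one)
  have hnat : ∀ n : ℕ, IsIntegral ℤ (n : k) := fun n => by
    have := isIntegral_algebraMap (R := ℤ) (A := k) (x := (n : ℤ))
    simpa using this
  constructor
  · intro h0
    rw [hD] at h0
    have hz := pos_lemma hN hζ.pow_eq_one r h0
    rw [hw'] at hΛ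
    refine zero_ne_one (Eq.trans (Eq.symm ?_) hΛ)
    refine Finset.sum_eq_zero fun i _ => ?_
    obtain ⟨c, hc⟩ := hΛc i
    rw [hc, smul_mul_assoc, one_mul, Matrix.trace_smul, hr1, hz, mul_zero, smul_zero]
  · rw [hD]
    refine IsIntegral.sum _ fun i _ => IsIntegral.mul ?_ ?_
    · exact IsIntegral.sum _ fun j _ => (hnat _).mul (hζi.pow j)
    · exact IsIntegral.sum _ fun j _ => (hnat _).mul (hζi'.pow j)

end Pos

end Part8

section Part9
open Coalgebra HopfAlgebra

section KInt
variable {k : Type} {H : Type} [Field k] [IsAlgClosed k] [CharZero k] [Ring H] [HopfAlgebra k H]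
  [IsSemisimpleRing H] [FiniteDimensional k H]

lemma lamf_counit_apply (x : H) : lamf (counit (R := k) (A := H)) x =
    LinearMap.trace k H (LinearMap.mulLeft k x * TT k H) := by
  rw [lamf_apply, lop_counit, one_mul]

lemma lamf_counit_one : lamf (counit (R := k) (A := H)) 1 = LinearMap.trace k H (TT k H) := by
  rw [lamf_counit_apply]
  congr 1
  ext y; simp

lemma lamf_right (x : H) : rop (lamf (counit (R := k) (A := H))) x =
    lamf (counit (R := k) (A := H)) x • (1 : H) := by
  set lam := lamf (counit (R := k) (A := H)) with hlam
  have h1 : lam 1 ≠ 0 := by rw [hlam, lamf_counit_one]; exact pos_main.1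
  let mu : H →ₗ[k] k := lam ∘ₗ antipode k
  have hmu : ∀ x, rop mu x = mu x • (1 : H) := by
    intro x
    apply antipode_inj (k := k)
    have h2 : lop lam (antipode k x) = _ := lamf_int _ _
    rw [lop_comul lam (antipode k x) _ _ _ (comul_antipode' (k := k) x)] at h2
    rw [rop_apply, map_sum, map_smul, antipode_one]
    simp only [map_smul]
    exact h2
  have heq : mu = lam := by
    ext x
    have e := congr($(comp_lop_eq mu lam) x)
    simp only [LinearMap.comp_apply] at e
    rw [hmu, map_smul, show lop lam x = lam x • 1 from lamf_int _ _, map_smul] at e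
    have : mu 1 = lam 1 := by simp [mu]
    rw [this, smul_eq_mul, smul_eq_mul] at e
    exact (mul_right_cancel₀ h1 e).symm
  rw [← heq]; exact hmu x
end KInt

section Order
variable {k : Type} {H : Type} [Field k] [IsAlgClosed k] [CharZero k] [Ring H] [HopfAlgebra k H]
  [IsSemisimpleRing H] [FiniteDimensional k H]
  {R : Type} [CommRing R] [Algebra R k] [Module R H] [IsScalarTower R k H]
  {HR : Type} [Ring HR] [HopfAlgebra R HR]

lemma iota_lop (ι : HR →ₗ[R] H)
    (hcomul : ∀ x : HR, comul (R := k) (ι x) = ordTensor R k H HR ι (comul (R := R) x))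
    (f : HR →ₗ[R] R) (fk : H →ₗ[k] k) (hf : ∀ x, fk (ι x) = algebraMap R k (f x)) (y : HR) :
    lop fk (ι y) = ι (lop f y) := by
  rw [lop_comul fk (ι y) (sw R y) (fun p => ι p.1) (fun p => ι p.2)
    (by rw [hcomul, ← sw_eq R y, map_sum]; rfl), lop_apply, map_sum]
  simp [hf]

lemma iota_rop (ι : HR →ₗ[R] H)
    (hcomul : ∀ x : HR, comul (R := k) (ι x) = ordTensor R k H HR ι (comul (R := R) x))
    (f : HR →ₗ[R] R) (fk : H →ₗ[k] k) (hf : ∀ x, fk (ι x) = algebraMap R k (f x)) (y : HR) :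
    rop fk (ι y) = ι (rop f y) := by
  rw [rop_comul fk (ι y) (sw R y) (fun p => ι p.1) (fun p => ι p.2)
    (by rw [hcomul, ← sw_eq R y, map_sum]; rfl), rop_apply, map_sum]
  simp [hf]

theorem order_main [Module.Finite R HR] [Module.Projective R HR]
    (hRk : Function.Injective (algebraMap R k))
    (ι : HR →ₗ[R] H) (hone : ι 1 = 1) (hmul : ∀ x y : HR, ι (x * y) = ι x * ι y)
    (horder : Function.Bijective (LinearMap.liftBaseChange k ι))
    (hcomul : ∀ x : HR, comul (R := k) (ι x) = ordTensor R k H HR ι (comul (R := R) x))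
    (hcounit : ∀ x : HR, counit (R := k) (ι x) = algebraMap R k (counit (R := R) x))
    (hanti : ∀ x : HR, antipode k (ι x) = ι (antipode R x)) :
    ∃ (D : R) (Λ : HR) (lam : HR →ₗ[R] R), D ≠ 0 ∧ IsIntegral ℤ D ∧
      (∀ h, h * Λ = counit (R := R) h • Λ) ∧ counit (R := R) Λ = D ∧ lam 1 = D ∧
      (∀ x, lop lam x = lam x • (1 : HR)) ∧ (∀ x, rop lam x = lam x • (1 : HR)) := by
  obtain ⟨n, f, g, -, -, hfg⟩ := Module.Finite.exists_comp_eq_id_of_projective R HR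
  let x : Fin n → HR := fun j => f (Pi.single j 1)
  let φ : Fin n → HR →ₗ[R] R := fun j => LinearMap.proj j ∘ₗ g
  have hx : ∀ y, ∑ j, φ j y • x j = y := by
    intro y
    conv_rhs => rw [← LinearMap.id_apply (R := R) y, ← hfg, LinearMap.comp_apply, pi_eq_sum_univ' (g y)]
    simp [x, φ, map_sum]
  let E := LinearEquiv.ofBijective _ horder
  have hE : ∀ y, E (1 ⊗ₜ y) = ι y := by intro y; simp [E]
  have hE' : ∀ y, E.symm (ι y) = 1 ⊗ₜ y := by intro y; rw [← hE, E.symm_apply_apply]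
  let ext : (HR →ₗ[R] R) → (H →ₗ[k] k) := fun u =>
    LinearMap.liftBaseChange k (Algebra.linearMap R k ∘ₗ u) ∘ₗ E.symm.toLinearMap
  have hext : ∀ u y, ext u (ι y) = algebraMap R k (u y) := by
    intro u y; simp [ext, hE']
  have hspan : ∀ (A B : H →ₗ[k] H), (∀ y, A (ι y) = B (ι y)) → A = B := by
    intro A B h
    have : A ∘ₗ E.toLinearMap = B ∘ₗ E.toLinearMap := by
      apply TensorProduct.AlgebraTensorModule.ext
      intro a y
      have : a ⊗ₜ[R] y = a • ((1 : k) ⊗ₜ[R] y) := by simp [TensorProduct.smul_tmul']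
      simp only [LinearMap.comp_apply, LinearEquiv.coe_coe]
      rw [this, map_smul, map_smul, map_smul, hE, h]
    ext z
    have := congr($this (E.symm z))
    simpa using this
  have hid : ∑ j, (ext (φ j)).smulRight (ι (x j)) = LinearMap.id := by
    apply hspan
    intro y
    simp only [LinearMap.sum_apply, LinearMap.smulRight_apply, hext, algebraMap_smul, LinearMap.id_apply]
    conv_rhs => rw [← hx y]
    simp only [map_sum, map_smul]
  have htr : ∀ A : Module.End k H, LinearMap.trace k H A = ∑ j, ext (φ j) (A (ι (x j))) := by
    intro A
    have : A = ∑ j, (ext (φ j)).smulRight (A (ι (x j))) := by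
      conv_lhs => rw [← LinearMap.comp_id A, ← hid]
      ext z; simp
    conv_lhs => rw [this]
    simp
  have hinj : Function.Injective ι := by
    intro a b hab
    rw [← hx a, ← hx b]
    refine Finset.sum_congr rfl fun j _ => ?_
    congr 1
    apply hRk
    rw [← hext, ← hext, hab]
  have hTT : ∀ y, TT k H (ι y) = ι (TT R HR y) := by
    intro y; simp only [TT_apply, hanti]
  obtain ⟨L, hl, hr, h1⟩ := exists_int (k := k) (H := H)
  let D : R := ∑ j, φ j (TT R HR (x j))
  have hD : algebraMap R k D = LinearMap.trace k H (TT k H) := by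
    simp only [D, htr, hTT, hext, map_sum]
  let lam : HR →ₗ[R] R := ∑ j, φ j ∘ₗ LinearMap.mulRight R (TT R HR (x j))
  have hlam : ∀ y, lamf (counit (R := k) (A := H)) (ι y) = algebraMap R k (lam y) := by
    intro y
    rw [lamf_counit_apply, htr]
    simp [lam, hTT, ← hmul, hext, map_sum]
  let Λ : HR := ∑ j, rop (φ j) (TT R HR (x j))
  have hΛ : ι Λ = algebraMap R k D • L := by
    apply dual_ext (k := k)
    intro u
    rw [map_smul, hD, smul_eq_mul, mul_comm, ← trace_lop L hl h1 u, htr]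
    simp only [Λ, map_sum]
    refine Finset.sum_congr rfl fun j _ => ?_
    have := congr($(comp_lop_eq (ext (φ j)) u) (ι (TT R HR (x j))))
    simp only [LinearMap.comp_apply] at this
    rw [Module.End.mul_apply, hTT, this, iota_rop ι hcomul (φ j) _ (hext _)]
  refine ⟨D, Λ, lam, ?_, ?_, ?_, ?_, ?_, ?_, ?_⟩
  · intro h0
    rw [h0, map_zero] at hD
    exact pos_main.1 hD.symm
  · have := (pos_main (k := k) (H := H)).2
    rw [← hD] at this
    exact (isIntegral_algHom_iff ((algebraMap R k).toIntAlgHom) hRk).1 this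
  · intro h
    apply hinj
    rw [hmul, hΛ, map_smul, hΛ, mul_smul_comm, hl, hcounit, algebraMap_smul, smul_comm]
    simp
  · apply hRk
    rw [← hcounit, hΛ, map_smul, h1, smul_eq_mul, mul_one]
  · apply hRk
    rw [← hlam, hone, lamf_counit_one, hD]
  · intro y
    apply hinj
    rw [← iota_lop ι hcomul lam _ hlam, lamf_int, hlam, map_smul, hone, algebraMap_smul]
  · intro y
    apply hinj
    rw [← iota_rop ι hcomul lam _ hlam, lamf_right, hlam, map_smul, hone, algebraMap_smul]
end Order

end Part9

section Part10
open Coalgebra HopfAlgebra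

section Final

theorem cosemi {R F HR : Type} [CommRing R] [Field F] [Algebra R F] [Ring HR] [HopfAlgebra R HR]
    (lam : HR →ₗ[R] R) (h1 : algebraMap R F (lam 1) ≠ 0)
    (hl : ∀ x, lop lam x = lam x • (1 : HR)) (hr : ∀ x, rop lam x = lam x • (1 : HR)) :
    IsCosemisimpleWith F (F ⊗[R] HR) (bcComul R F HR (Coalgebra.comul (R := R))) := by
  let c := (algebraMap R F (lam 1))⁻¹
  let mu : F ⊗[R] HR →ₗ[F] F :=
    c • ((TensorProduct.AlgebraTensorModule.rid R F F).toLinearMap ∘ₗ lam.baseChange F)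
  have hmu : ∀ a y, mu (a ⊗ₜ y) = c * (algebraMap R F (lam y) * a) := by
    intro a y
    simp [mu, Algebra.smul_def]
  have hcm : ∀ a y, bcComul R F HR (Coalgebra.comul (R := R)) (a ⊗ₜ y) =
      ∑ p ∈ sw R y, (a ⊗ₜ[R] p.1) ⊗ₜ[F] ((1 : F) ⊗ₜ[R] p.2) := by
    intro a y
    simp only [bcComul, LinearMap.comp_apply, LinearMap.baseChange_tmul]
    rw [← sw_eq R y, TensorProduct.tmul_sum, map_sum]
    refine Finset.sum_congr rfl fun p _ => ?_
    simp
  refine ⟨mu, ?_, ?_, ?_⟩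
  · rw [Algebra.TensorProduct.one_def, hmu]
    simp [c, h1]
  · intro h
    induction h with
    | zero => simp
    | add x y hx hy => rw [map_add, map_add, map_add, hx, hy, map_add, add_smul]
    | tmul a y =>
      rw [hcm, map_sum, map_sum]
      simp only [LinearMap.lTensor_tmul, TensorProduct.rid_tmul, hmu]
      have e := hl y
      rw [lop_apply] at e
      have e2 : ∑ p ∈ sw R y, (c * a) ⊗ₜ[R] (lam p.2 • p.1) = (c * a) ⊗ₜ[R] (lam y • (1 : HR)) := by
        rw [← e, TensorProduct.tmul_sum]
      rw [Algebra.TensorProduct.one_def, TensorProduct.smul_tmul', smul_eq_mul, mul_one]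
      rw [← TensorProduct.smul_tmul, Algebra.smul_def] at e2
      rw [show c * (algebraMap R F (lam y) * a) = algebraMap R F (lam y) * (c * a) by ring, ← e2]
      refine Finset.sum_congr rfl fun p _ => ?_
      rw [TensorProduct.smul_tmul', smul_eq_mul, ← TensorProduct.smul_tmul, Algebra.smul_def]
      congr 1; ring
  · intro h
    induction h with
    | zero => simp
    | add x y hx hy => rw [map_add, map_add, map_add, hx, hy, map_add, add_smul]
    | tmul a y =>
      rw [hcm, map_sum, map_sum]
      simp only [LinearMap.rTensor_tmul, TensorProduct.lid_tmul, hmu]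
      have e := hr y
      rw [rop_apply] at e
      have e2 : ∑ p ∈ sw R y, (c * a) ⊗ₜ[R] (lam p.1 • p.2) = (c * a) ⊗ₜ[R] (lam y • (1 : HR)) := by
        rw [← e, TensorProduct.tmul_sum]
      rw [Algebra.TensorProduct.one_def, TensorProduct.smul_tmul', smul_eq_mul, mul_one]
      rw [← TensorProduct.smul_tmul, Algebra.smul_def] at e2
      rw [show c * (algebraMap R F (lam y) * a) = algebraMap R F (lam y) * (c * a) by ring, ← e2]
      refine Finset.sum_congr rfl fun p _ => ?_
      rw [TensorProduct.smul_tmul', smul_eq_mul, ← TensorProduct.smul_tmul, Algebra.smul_def]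
      congr 1; ring

theorem large_p {R : Type} [CommRing R] [IsDomain R] [CharZero R] (D : R) (h0 : D ≠ 0)
    (hi : IsIntegral ℤ D) : ∃ N : ℕ, ∀ p : ℕ, ∀ hp : p.Prime, N ≤ p →
      haveI : Fact p.Prime := ⟨hp⟩
      ∀ ψ : R →+* AlgebraicClosure (ZMod p), ψ D ≠ 0 := by
  obtain ⟨n, hn, s, e⟩ := hi.isAlgebraic.exists_nonzero_dvd (mem_nonZeroDivisors_of_ne_zero h0)
  refine ⟨n.natAbs + 1, fun p hp hN => ?_⟩
  haveI : Fact p.Prime := ⟨hp⟩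
  intro ψ h
  haveI : CharP (AlgebraicClosure (ZMod p)) p :=
    charP_of_injective_algebraMap (algebraMap (ZMod p) (AlgebraicClosure (ZMod p))).injective p
  have e' := congrArg ψ e
  rw [map_mul, h, zero_mul] at e'
  have e3 : ((n : ℤ) : AlgebraicClosure (ZMod p)) = 0 := by simpa using e'
  rw [CharP.intCast_eq_zero_iff _ p] at e3
  have := Nat.le_of_dvd (Int.natAbs_pos.2 hn) (Int.natCast_dvd.1 e3)
  omega
end Final

end Part10

/-- Let `H` be a semisimple Hopf algebra over `k` (hence cosemisimple), with a Hopf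
`R`-order `H_R` over a finitely generated subring `R ⊆ k`.  Then for all sufficiently
large primes `p` and all `ψ : R → F̄_p`, the reduction `H_p = H_R ⊗_R F̄_p` is a
semisimple and cosemisimple Hopf algebra over `F̄_p`. -/
theorem reduction_mod_p_semisimple_cosemisimple
    (k : Type) [Field k] [IsAlgClosed k] [CharZero k]
    (H : Type) [Ring H] [HopfAlgebra k H] [FiniteDimensional k H] [IsSemisimpleRing H]
    (R : Subring k) (hfg : ∃ s : Finset k, Subring.closure (s : Set k) = R)
    (HR : Type) [Ring HR] [HopfAlgebra R HR] [Module.Finite R HR] [Module.Projective R HR]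
    (ι : HR →ₗ[R] H) (hone : ι 1 = 1) (hmul : ∀ x y : HR, ι (x * y) = ι x * ι y)
    (horder : Function.Bijective (LinearMap.liftBaseChange k ι))
    (hcomul : ∀ x : HR, Coalgebra.comul (R := k) (ι x) =
        ordTensor R k H HR ι (Coalgebra.comul (R := R) x))
    (hcounit : ∀ x : HR, Coalgebra.counit (R := k) (ι x) =
        algebraMap R k (Coalgebra.counit (R := R) x))
    (hanti : ∀ x : HR,
        HopfAlgebra.antipode (R := k) (ι x) = ι (HopfAlgebra.antipode (R := R) x)) :
    ∃ N : ℕ, ∀ p : ℕ, ∀ hp : p.Prime, N ≤ p →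
      haveI : Fact p.Prime := ⟨hp⟩
      ∀ ψ : R →+* AlgebraicClosure (ZMod p),
      letI := ψ.toAlgebra
      IsSemisimpleRing (AlgebraicClosure (ZMod p) ⊗[R] HR) ∧
      IsCosemisimpleWith (AlgebraicClosure (ZMod p)) (AlgebraicClosure (ZMod p) ⊗[R] HR)
        (bcComul R (AlgebraicClosure (ZMod p)) HR (Coalgebra.comul (R := R))) := by
  obtain ⟨D, Λ, lam, h0, hi, hΛ, hc, h1, hl, hr⟩ :=
    order_main Subtype.val_injective ι hone hmul horder hcomul hcounit hanti
  obtain ⟨N, hN⟩ := large_p D h0 hi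
  refine ⟨N, fun p hp hp' => ?_⟩
  haveI : Fact p.Prime := ⟨hp⟩
  intro ψ
  letI := ψ.toAlgebra
  have hD := hN p hp hp' ψ
  exact ⟨maschke Λ hΛ (by rw [hc]; exact hD), cosemi lam (by rw [h1]; exact hD) hl hr⟩
end
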